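/- arXiv:2506.09019 — 3 statements merged into one kernel-verified Lean document; each statement's English description precedes it below -/
import Mathlib

section
/- Let k be a field of characteristic 3 and d ≥ 2. The real sequence e ↦ dim_k( k[x_0,…,x_d]/(x_0^{3^e},…,x_d^{3^e}, x_0² + ⋯ + x_{d−1}² + x_d³) ) / 3^{d·e} converges as e → ∞ to 1 + (2/3)^{d−1}. That is, the Hilbert–Kunz multiplicity of the A_2 singularity in characteristic 3 is e_HK(S_{3,d}) = 1 + (2/3)^{d−1}. -/
open MvPolynomial

/-- The Hilbert–Kunz function of the hypersurface defined by `f` in `n` variables,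
in characteristic `p`, at level `e`. -/
noncomputable def HKfun (k : Type*) [Field k] (n p e : ℕ)
    (f : MvPolynomial (Fin n) k) : ℕ :=
  Module.finrank k
    (MvPolynomial (Fin n) k ⧸
      Ideal.span
        (Set.range (fun i : Fin n => (X i : MvPolynomial (Fin n) k) ^ p ^ e) ∪ {f}))

/-!
Let `A = k[x₁, …, x_d] / (xᵢ ^ (3q))` with `q = 3 ^ e`, and `s = ∑ xᵢ ^ 2`. In
`A[x] / (x ^ 3 + s)`, which is free of rank `3` over `A`, the element `x ^ (3q)` equals `(-s) ^ q`;
so the Hilbert–Kunz function at level `e + 1` is three times the dimension of the annihilator of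
`t = s ^ q = ∑ xᵢ ^ (2q)` in `A`.

That dimension is computed one variable at a time. On `A[x] / (x ^ (3q))`, multiplication by
`t + x ^ (2q)` is the direct sum of `q` copies of multiplication by `t` on `A` and of `q` copies of
multiplication by `t + ε` on the dual numbers `A[ε]`. As `t ^ 3 = 0` in characteristic three, the
dimensions `α`, `β` of the annihilators of `t` and `t ^ 2` satisfy `α' = q (α + β)` and
`β' = q (β + α + dim A)`, whence `α = q ^ d (3 ^ (d - 1) + 2 ^ (d - 1))`.
-/

section MulNullity

variable (k : Type*) [Field k] {A B : Type*} [CommRing A] [Algebra k A] [CommRing B] [Algebra k B]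

/-- The `k`-dimension of the annihilator of `a`, i.e. of the kernel of multiplication by `a`.
For finite-dimensional `A` it is also the dimension of `A / (a)`. -/
noncomputable def mulNullity (a : A) : ℕ :=
  Module.finrank k (LinearMap.ker (LinearMap.mulLeft k a))

variable {k}

lemma mulNullity_eq_of_linearEquiv (Ψ : A ≃ₗ[k] B) {a : A} {b : B}
    (hΨ : ∀ x, Ψ (a * x) = b * Ψ x) : mulNullity k a = mulNullity k b := by
  have map_ker : (LinearMap.ker (LinearMap.mulLeft k a)).map Ψ.toLinearMap =
      LinearMap.ker (LinearMap.mulLeft k b) := by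
    ext y
    obtain ⟨x, rfl⟩ := Ψ.surjective y
    simp [← hΨ]
  rw [mulNullity, mulNullity, ← map_ker]
  exact (Ψ.finrank_map_eq _).symm

lemma mulNullity_pow_eq_of_linearEquiv (Ψ : A ≃ₗ[k] B) {a : A} {b : B}
    (hΨ : ∀ x, Ψ (a * x) = b * Ψ x) (i : ℕ) : mulNullity k (a ^ i) = mulNullity k (b ^ i) := by
  refine mulNullity_eq_of_linearEquiv Ψ fun x => ?_
  induction i with
  | zero => simp
  | succ i ih => rw [pow_succ', mul_assoc, hΨ, ih, ← mul_assoc, ← pow_succ']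

lemma mulNullity_map_algEquiv (Ψ : A ≃ₐ[k] B) (a : A) : mulNullity k (Ψ a) = mulNullity k a :=
  (mulNullity_eq_of_linearEquiv Ψ.toLinearEquiv fun x => map_mul Ψ a x).symm

lemma mulNullity_neg (a : A) : mulNullity k (-a) = mulNullity k a := by
  have ker_eq : LinearMap.ker (LinearMap.mulLeft k (-a)) =
      LinearMap.ker (LinearMap.mulLeft k a) := by
    ext x
    simp
  rw [mulNullity, mulNullity, ker_eq]

lemma mulNullity_neg_pow (a : A) (i : ℕ) : mulNullity k ((-a) ^ i) = mulNullity k (a ^ i) := by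
  rcases i.even_or_odd with hi | hi
  · rw [hi.neg_pow]
  · rw [hi.neg_pow, mulNullity_neg]

variable (k A) in
lemma mulNullity_zero : mulNullity k (0 : A) = Module.finrank k A := by
  rw [mulNullity, LinearMap.mulLeft_zero_eq_zero, LinearMap.ker_zero, finrank_top]

lemma mulNullity_prod [Module.Finite k A] [Module.Finite k B] (a : A) (b : B) :
    mulNullity k (a, b) = mulNullity k a + mulNullity k b := by
  have ker_equiv : LinearMap.ker (LinearMap.mulLeft k (a, b)) ≃ₗ[k]
      LinearMap.ker (LinearMap.mulLeft k a) × LinearMap.ker (LinearMap.mulLeft k b) :=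
    { toFun x := (⟨x.1.1, congrArg Prod.fst x.2⟩, ⟨x.1.2, congrArg Prod.snd x.2⟩)
      invFun y := ⟨(y.1.1, y.2.1), Prod.ext y.1.2 y.2.2⟩
      map_add' _ _ := rfl
      map_smul' _ _ := rfl }
  rw [mulNullity, ker_equiv.finrank_eq, Module.finrank_prod]
  rfl

lemma mulNullity_pi_const (ι : Type*) [Fintype ι] [Module.Finite k A] (a : A) :
    mulNullity k (fun _ : ι => a) = Fintype.card ι * mulNullity k a := by
  have ker_equiv : LinearMap.ker (LinearMap.mulLeft k (fun _ : ι => a)) ≃ₗ[k]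
      (ι → LinearMap.ker (LinearMap.mulLeft k a)) :=
    { toFun x i := ⟨x.1 i, congrFun x.2 i⟩
      invFun y := ⟨fun i => (y i).1, funext fun i => (y i).2⟩
      map_add' _ _ := rfl
      map_smul' _ _ := rfl }
  rw [mulNullity, ker_equiv.finrank_eq, Module.finrank_pi_fintype, Finset.sum_const,
    Finset.card_univ, smul_eq_mul, mulNullity]

lemma finrank_quotient_span_singleton [Module.Finite k A] (a : A) :
    Module.finrank k (A ⧸ Ideal.span {a}) = mulNullity k a := by
  have range_eq : LinearMap.range (LinearMap.mulLeft k a) =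
      (Ideal.span {a}).restrictScalars k := by
    ext x
    simp [Ideal.mem_span_singleton, dvd_def, eq_comm]
  have rank_nullity := LinearMap.finrank_range_add_finrank_ker (LinearMap.mulLeft k a)
  have quotient_add := Submodule.finrank_quotient_add_finrank
    ((Ideal.span {a}).restrictScalars k)
  rw [range_eq] at rank_nullity
  change Module.finrank k (A ⧸ Ideal.span {a}) + _ = _ at quotient_add
  rw [mulNullity]
  lia

end MulNullity

section DualNumber

open DualNumber TrivSqZeroExt

variable {k : Type*} [Field k] {A : Type*} [CommRing A] [Algebra k A]

lemma mulNullity_inl_add_eps (t : A) :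
    mulNullity k (inl t + ε : A[ε]) = mulNullity k (t ^ 2) := by
  have mem_ker_iff (x : A[ε]) : (inl t + ε) * x = 0 ↔ t * x.fst = 0 ∧ t * x.snd + x.fst = 0 := by
    simp [TrivSqZeroExt.ext_iff]
  refine LinearEquiv.finrank_eq
    { toFun x := ⟨x.1.snd, ?_⟩
      invFun c := ⟨inl (-(t * c.1)) + inr c.1, ?_⟩
      map_add' _ _ := rfl
      map_smul' _ _ := rfl
      left_inv x := ?_
      right_inv c := ?_ }
  · obtain ⟨h₁, h₂⟩ := (mem_ker_iff x.1).1 x.2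
    change t ^ 2 * x.1.snd = 0
    linear_combination t * h₂ - h₁
  · have hc : t ^ 2 * c.1 = 0 := c.2
    refine (mem_ker_iff _).2 ⟨?_, ?_⟩ <;>
      simp only [fst_add, fst_inl, fst_inr, snd_add, snd_inl, snd_inr]
    · linear_combination -hc
    · ring
  · obtain ⟨-, h₂⟩ := (mem_ker_iff x.1).1 x.2
    ext
    · simp only [fst_add, fst_inl, fst_inr]
      linear_combination -h₂
    · simp
  · simp

lemma mulNullity_inl_add_eps_sq [Module.Finite k A] (h2 : (2 : k) ≠ 0) {t : A}
    (ht : t ^ 3 = 0) :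
    mulNullity k ((inl t + ε : A[ε]) ^ 2) = mulNullity k t + Module.finrank k A := by
  have mem_ker_iff (x : A[ε]) : (inl t + ε) ^ 2 * x = 0 ↔
      t ^ 2 * x.fst = 0 ∧ t * ((2 : k) • x.fst + t * x.snd) = 0 := by
    have fst_eq : ((inl t + ε) ^ 2 * x).fst = t ^ 2 * x.fst := by simp [sq]
    have snd_eq : ((inl t + ε) ^ 2 * x).snd = t * ((2 : k) • x.fst + t * x.snd) := by
      simp only [sq, DualNumber.snd_mul, fst_mul, snd_add, fst_add, snd_inl, fst_inl, snd_eps,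
        fst_eps, ofNat_smul_eq_nsmul, nsmul_eq_mul, Nat.cast_ofNat]
      ring
    rw [TrivSqZeroExt.ext_iff, fst_eq, snd_eq, fst_zero, snd_zero]
  have ker_equiv : LinearMap.ker (LinearMap.mulLeft k ((inl t + ε : A[ε]) ^ 2)) ≃ₗ[k]
      LinearMap.ker (LinearMap.mulLeft k t) × A :=
    { toFun x := (⟨(2 : k) • x.1.fst + t * x.1.snd, ((mem_ker_iff x.1).1 x.2).2⟩, x.1.snd)
      invFun y := ⟨inl ((2 : k)⁻¹ • (y.1.1 - t * y.2)) + inr y.2, by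
        have hy : t * y.1.1 = 0 := y.1.2
        refine (mem_ker_iff _).2 ⟨?_, ?_⟩
        · simp only [fst_add, fst_inl, fst_inr, add_zero, mul_smul_comm]
          rw [show t ^ 2 * (y.1.1 - t * y.2) = 0 by linear_combination t * hy - y.2 * ht,
            smul_zero]
        · simp [smul_inv_smul₀ h2, hy]⟩
      map_add' x y := by
        ext
        · simp only [Submodule.coe_add, fst_add, snd_add, smul_add, Prod.mk_add_mk]
          ring
        · simp
      map_smul' c x := by ext <;> simp [smul_comm c (2 : k)]
      left_inv x := by ext <;> simp [inv_smul_smul₀ h2]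
      right_inv y := by ext <;> simp [smul_inv_smul₀ h2] }
  rw [mulNullity, ker_equiv.finrank_eq, Module.finrank_prod, mulNullity]

end DualNumber

section AdjoinRoot

open scoped Polynomial

variable {k : Type*} [Field k] {A : Type*} [CommRing A] [Algebra k A]

lemma mulNullity_adjoinRoot_of [Module.Finite k A] {f : A[X]} (hf : f.Monic) (a : A) :
    mulNullity k (AdjoinRoot.of f a) = f.natDegree * mulNullity k a := by
  let coords := (AdjoinRoot.powerBasis' hf).basis.equivFun
  have coords_mul (x : AdjoinRoot f) : coords (.of f a * x) = (fun _ => a) * coords x := by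
    rw [← AdjoinRoot.algebraMap_eq, ← Algebra.smul_def, map_smul]
    rfl
  rw [mulNullity_eq_of_linearEquiv (coords.restrictScalars k) coords_mul,
    mulNullity_pi_const, Fintype.card_fin, AdjoinRoot.powerBasis'_dim]

lemma module_finite_adjoinRoot {R : Type*} [CommRing R] [Algebra R A] [Module.Finite R A]
    {f : A[X]} (hf : f.Monic) : Module.Finite R (AdjoinRoot f) :=
  have := hf.finite_adjoinRoot
  .trans A (AdjoinRoot f)

lemma mulNullity_adjoinRoot_mk_comm [Module.Finite k A] {f g : A[X]} (hf : f.Monic)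
    (hg : g.Monic) : mulNullity k (AdjoinRoot.mk f g) = mulNullity k (AdjoinRoot.mk g f) := by
  have := module_finite_adjoinRoot (R := k) hf
  have := module_finite_adjoinRoot (R := k) hg
  have quotient_comm := (DoubleQuot.quotQuotEquivCommₐ k
    (Ideal.span {f}) (Ideal.span {g})).toLinearEquiv.finrank_eq
  rw [Ideal.map_span, Ideal.map_span, Set.image_singleton, Set.image_singleton] at quotient_comm
  rw [← finrank_quotient_span_singleton, ← finrank_quotient_span_singleton]
  exact quotient_comm

lemma mulNullity_of_add_root_pow_of_X_pow_mul [Module.Finite k A] [Nontrivial A] {m : ℕ}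
    (hm : m ≠ 0) (r : ℕ) (s : A) :
    mulNullity k (AdjoinRoot.of (Polynomial.X ^ (m * r) : A[X]) s + AdjoinRoot.root _ ^ m) =
      m * mulNullity k (s ^ r) := by
  set g : A[X] := Polynomial.X ^ m + Polynomial.C s
  have hg : g.Monic := Polynomial.monic_X_pow_add_C s hm
  have root_pow : AdjoinRoot.root g ^ m = AdjoinRoot.of g (-s) := by
    rw [map_neg, eq_neg_iff_add_eq_zero, ← AdjoinRoot.mk_X, ← AdjoinRoot.mk_C, ← map_pow,
      ← map_add, AdjoinRoot.mk_self]
  calc mulNullity k (AdjoinRoot.of (Polynomial.X ^ (m * r) : A[X]) s + AdjoinRoot.root _ ^ m)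
    _ = mulNullity k (AdjoinRoot.mk (Polynomial.X ^ (m * r)) g) := by
      rw [map_add, map_pow, AdjoinRoot.mk_X, AdjoinRoot.mk_C, add_comm]
    _ = mulNullity k (AdjoinRoot.mk g (Polynomial.X ^ (m * r))) :=
      mulNullity_adjoinRoot_mk_comm (Polynomial.monic_X_pow _) hg
    _ = mulNullity k (AdjoinRoot.of g ((-s) ^ r)) := by
      rw [map_pow, AdjoinRoot.mk_X, pow_mul, root_pow, map_pow]
    _ = m * mulNullity k (s ^ r) := by
      rw [mulNullity_adjoinRoot_of hg, Polynomial.natDegree_X_pow_add_C, mulNullity_neg_pow]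

open DualNumber TrivSqZeroExt

variable (k A) in
/-- The coefficients of a polynomial in degrees `< l + 2r`, arranged in blocks on which
multiplication by `t + X ^ (l + r)` is diagonal: those in degrees `r, …, l + r - 1` on their own,
and those in degrees `j` and `l + r + j`, for `j < r`, paired to a dual number. -/
noncomputable def coeffBlocks (l r : ℕ) : A[X] →ₗ[k] (Fin l → A) × (Fin r → A[ε]) where
  toFun p := (fun j => p.coeff (r + j), fun j => inl (p.coeff j) + inr (p.coeff (l + r + j)))
  map_add' p q := by ext <;> simp
  map_smul' c p := by ext <;> simp

lemma coeffBlocks_eq_iff {l r : ℕ} {p : A[X]} {b : Fin l → A} {c : Fin r → A[ε]} :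
    coeffBlocks k A l r p = (b, c) ↔ (∀ j : Fin l, p.coeff (r + j) = b j) ∧
      ∀ j : Fin r, p.coeff j = (c j).fst ∧ p.coeff (l + r + j) = (c j).snd := by
  simp [coeffBlocks, funext_iff, TrivSqZeroExt.ext_iff]

lemma coeffBlocks_eq_zero_iff {l r : ℕ} {p : A[X]} :
    coeffBlocks k A l r p = 0 ↔ Polynomial.X ^ (l + 2 * r) ∣ p := by
  rw [Polynomial.X_pow_dvd_iff, ← Prod.mk_zero_zero, coeffBlocks_eq_iff]
  constructor
  · rintro ⟨middle, outer⟩ i hi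
    rcases lt_or_ge i r with low | not_low
    · exact (outer ⟨i, low⟩).1
    rcases lt_or_ge i (l + r) with mid | high
    · simpa [not_low] using middle ⟨i - r, by lia⟩
    · simpa [high] using (outer ⟨i - (l + r), by lia⟩).2
  · exact fun h => ⟨fun j => h _ (by lia), fun j => ⟨h _ (by lia), h _ (by lia)⟩⟩

lemma coeffBlocks_surjective (l r : ℕ) : Function.Surjective (coeffBlocks k A l r) := by
  rintro ⟨b, c⟩
  let coeff (i : ℕ) : A :=
    if h : i < r then (c ⟨i, h⟩).fst
    else if h : i - r < l then b ⟨i - r, h⟩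
    else if h : i - (l + r) < r then (c ⟨i - (l + r), h⟩).snd
    else 0
  have coeff_trunc {i : ℕ} (hi : i < l + 2 * r) :
      (PowerSeries.trunc (l + 2 * r) (PowerSeries.mk coeff)).coeff i = coeff i := by
    rw [PowerSeries.coeff_trunc, if_pos hi, PowerSeries.coeff_mk]
  refine ⟨PowerSeries.trunc (l + 2 * r) (PowerSeries.mk coeff), coeffBlocks_eq_iff.2
    ⟨fun j => ?_, fun j => ⟨?_, ?_⟩⟩⟩ <;> rw [coeff_trunc (by lia)]
  · simp [coeff]
  · simp [coeff]
  · simp [coeff, show ¬ l + r + j < r by lia, show ¬ l + r + j - r < l by lia]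

lemma coeffBlocks_mul (l r : ℕ) (t : A) (p : A[X]) :
    coeffBlocks k A l r ((Polynomial.C t + Polynomial.X ^ (l + r)) * p) =
      (fun _ => t, fun _ => inl t + ε) * coeffBlocks k A l r p := by
  have coeff_low {i : ℕ} (hi : i < l + r) :
      ((Polynomial.C t + Polynomial.X ^ (l + r)) * p).coeff i = t * p.coeff i := by
    simp [add_mul, Polynomial.coeff_X_pow_mul', hi]
  have coeff_high (i : ℕ) : ((Polynomial.C t + Polynomial.X ^ (l + r)) * p).coeff (l + r + i) =
      t * p.coeff (l + r + i) + p.coeff i := by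
    simp [add_mul, Polynomial.coeff_X_pow_mul']
  refine coeffBlocks_eq_iff.2 ⟨fun j => ?_, fun j => ⟨?_, ?_⟩⟩
  · rw [coeff_low (by lia)]
    rfl
  · rw [coeff_low (by lia)]
    simp [coeffBlocks]
  · rw [coeff_high]
    simp [coeffBlocks]

variable (k A) in
/-- The identification of `A[X] / (X ^ (l + 2r))` with `A ^ l × A[ε] ^ r` given by
`coeffBlocks`. -/
noncomputable def coeffBlocksEquiv (l r : ℕ) :
    AdjoinRoot (Polynomial.X ^ (l + 2 * r) : A[X]) ≃ₗ[k] (Fin l → A) × (Fin r → A[ε]) :=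
  have span_eq_ker : (Ideal.span {(Polynomial.X ^ (l + 2 * r) : A[X])}).restrictScalars k =
      LinearMap.ker (coeffBlocks k A l r) := by
    ext p
    simp [coeffBlocks_eq_zero_iff, Ideal.mem_span_singleton]
  (Submodule.quotEquivOfEq _ _ span_eq_ker).trans
    ((coeffBlocks k A l r).quotKerEquivOfSurjective (coeffBlocks_surjective l r))

lemma coeffBlocksEquiv_mk (l r : ℕ) (p : A[X]) :
    coeffBlocksEquiv k A l r (AdjoinRoot.mk _ p) = coeffBlocks k A l r p :=
  rfl

lemma coeffBlocksEquiv_mul (l r : ℕ) (t : A)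
    (x : AdjoinRoot (Polynomial.X ^ (l + 2 * r) : A[X])) :
    coeffBlocksEquiv k A l r ((AdjoinRoot.of _ t + AdjoinRoot.root _ ^ (l + r)) * x) =
      (fun _ => t, fun _ => inl t + ε) * coeffBlocksEquiv k A l r x := by
  obtain ⟨p, rfl⟩ := AdjoinRoot.mk_surjective x
  rw [← AdjoinRoot.mk_C, ← AdjoinRoot.mk_X, ← map_pow, ← map_add, ← map_mul,
    coeffBlocksEquiv_mk, coeffBlocks_mul, coeffBlocksEquiv_mk]

lemma mulNullity_of_add_root_pow_pow_of_X_pow_add [Module.Finite k A] (l r i : ℕ) (t : A) :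
    mulNullity k ((AdjoinRoot.of (Polynomial.X ^ (l + 2 * r) : A[X]) t +
      AdjoinRoot.root _ ^ (l + r)) ^ i) =
      l * mulNullity k (t ^ i) + r * mulNullity k ((inl t + ε : A[ε]) ^ i) := by
  have : Module.Finite k A[ε] := inferInstanceAs (Module.Finite k (A × A))
  calc _ = mulNullity k ((fun _ => t ^ i, fun _ => (inl t + ε) ^ i) :
        (Fin l → A) × (Fin r → A[ε])) :=
      mulNullity_pow_eq_of_linearEquiv (coeffBlocksEquiv k A l r) (coeffBlocksEquiv_mul l r t) i
    _ = l * mulNullity k (t ^ i) + r * mulNullity k ((inl t + ε : A[ε]) ^ i) := by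
      rw [mulNullity_prod, mulNullity_pi_const, mulNullity_pi_const, Fintype.card_fin,
        Fintype.card_fin]

end AdjoinRoot

/-- The truncated polynomial ring `k[xᵢ : i ∈ σ] / (xᵢ ^ m : i ∈ σ)`. -/
abbrev TruncatedMvPolynomial (k σ : Type*) [CommRing k] (m : ℕ) : Type _ :=
  MvPolynomial σ k ⧸ Ideal.span (Set.range fun i : σ => (X i : MvPolynomial σ k) ^ m)

namespace TruncatedMvPolynomial

section UniversalProperty

variable (k : Type*) [CommRing k] {σ : Type*} (m : ℕ) {B : Type*} [CommRing B] [Algebra k B]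

/-- The class of a polynomial in the truncated polynomial ring. -/
noncomputable def mk : MvPolynomial σ k →ₐ[k] TruncatedMvPolynomial k σ m :=
  Ideal.Quotient.mkₐ k _

variable {k m}

lemma mk_X_pow (i : σ) : mk k m (X i) ^ m = 0 := by
  rw [← map_pow]
  exact Ideal.Quotient.eq_zero_iff_mem.2 (Ideal.subset_span ⟨i, rfl⟩)

/-- The algebra map out of the truncated polynomial ring sending `xᵢ` to `v i`. -/
noncomputable def lift (v : σ → B) (hv : ∀ i, v i ^ m = 0) :
    TruncatedMvPolynomial k σ m →ₐ[k] B :=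
  Ideal.Quotient.liftₐ _ (aeval v) fun p hp => by
    suffices Ideal.span _ ≤ RingHom.ker (aeval (R := k) v) from this hp
    rw [Ideal.span_le]
    rintro _ ⟨i, rfl⟩
    simp [RingHom.mem_ker, hv]

lemma lift_mk (v : σ → B) (hv : ∀ i, v i ^ m = 0) (p : MvPolynomial σ k) :
    lift v hv (mk k m p) = aeval v p :=
  rfl

lemma algHom_ext {φ ψ : TruncatedMvPolynomial k σ m →ₐ[k] B}
    (h : ∀ i, φ (mk k m (X i)) = ψ (mk k m (X i))) : φ = ψ :=
  Ideal.Quotient.algHom_ext k (MvPolynomial.algHom_ext h)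

lemma mk_psum_pow_char_eq_zero [Fintype σ] (p : ℕ) [Fact p.Prime] [CharP k p] {j : ℕ}
    (h : m ≤ j * p) : mk k m (psum σ k j) ^ p = 0 := by
  rw [← map_pow, psum, sum_pow_char, map_sum]
  refine Finset.sum_eq_zero fun i _ => ?_
  rw [← pow_mul, map_pow, pow_eq_zero_of_le h (mk_X_pow i)]

end UniversalProperty

section SplitLastVariable

open scoped Polynomial

variable (k : Type*) [CommRing k] (n m : ℕ)

/-- The truncated polynomial ring in `n + 1` variables is obtained from the one in `n` variables
by adjoining a root of `X ^ m`, which corresponds to the last variable. -/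
noncomputable def succEquiv : TruncatedMvPolynomial k (Fin (n + 1)) m ≃ₐ[k]
    AdjoinRoot (Polynomial.X ^ m : (TruncatedMvPolynomial k (Fin n) m)[X]) :=
  AlgEquiv.ofAlgHom
    (lift (Fin.lastCases (AdjoinRoot.root _) fun i => AdjoinRoot.of _ (mk k m (X i))) <| by
      refine Fin.lastCases ?_ fun i => ?_
      · rw [Fin.lastCases_last, ← AdjoinRoot.mk_X, ← map_pow, AdjoinRoot.mk_self]
      · rw [Fin.lastCases_castSucc, ← map_pow, mk_X_pow, map_zero])
    (AdjoinRoot.liftAlgHom _ (lift (fun i => mk k m (X i.castSucc)) fun _ => mk_X_pow _)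
      (mk k m (X (Fin.last n))) <| by
        rw [Polynomial.eval₂_X_pow, mk_X_pow])
    (AdjoinRoot.algHom_ext' (algHom_ext fun i => by simp [lift_mk]) (by simp [lift_mk]))
    (algHom_ext <| Fin.lastCases (by simp [lift_mk]) fun i => by simp [lift_mk])

lemma succEquiv_mk_X_last :
    succEquiv k n m (mk k m (X (Fin.last n))) = AdjoinRoot.root _ := by
  simp [succEquiv, lift_mk]

lemma succEquiv_mk_rename_castSucc (p : MvPolynomial (Fin n) k) :
    succEquiv k n m (mk k m (rename Fin.castSucc p)) = AdjoinRoot.of _ (mk k m p) := by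
  suffices h : ((succEquiv k n m).toAlgHom.comp (mk k m)).comp (rename Fin.castSucc) =
      (AdjoinRoot.ofAlgHom k _).comp (mk k m) from DFunLike.congr_fun h p
  ext i
  simp [succEquiv, lift_mk]

lemma succEquiv_mk_rename_castSucc_add_X_last_pow (p : MvPolynomial (Fin n) k) (j : ℕ) :
    succEquiv k n m (mk k m (rename Fin.castSucc p + X (Fin.last n) ^ j)) =
      AdjoinRoot.of _ (mk k m p) + AdjoinRoot.root _ ^ j := by
  rw [map_add, map_add, map_pow, map_pow, succEquiv_mk_X_last, succEquiv_mk_rename_castSucc]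

lemma succEquiv_mk_psum (j : ℕ) :
    succEquiv k n m (mk k m (psum (Fin (n + 1)) k j)) =
      AdjoinRoot.of _ (mk k m (psum (Fin n) k j)) + AdjoinRoot.root _ ^ j := by
  rw [← succEquiv_mk_rename_castSucc_add_X_last_pow]
  simp [psum, Fin.sum_univ_castSucc]

/-- With no variables, the truncated polynomial ring is the ground ring. -/
noncomputable def zeroEquiv : TruncatedMvPolynomial k (Fin 0) m ≃ₐ[k] k :=
  ((Ideal.quotientEquivAlgOfEq k (by simp)).trans (AlgEquiv.quotientBot k _)).trans
    (isEmptyAlgEquiv k (Fin 0))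

instance moduleFinite : Module.Finite k (TruncatedMvPolynomial k (Fin n) m) := by
  induction n with
  | zero => exact Module.Finite.equiv (zeroEquiv k m).symm.toLinearEquiv
  | succ n ih =>
    have := module_finite_adjoinRoot (R := k)
      (Polynomial.monic_X_pow (R := TruncatedMvPolynomial k (Fin n) m) m)
    exact Module.Finite.equiv (succEquiv k n m).symm.toLinearEquiv

end SplitLastVariable

section Dimension

variable (k : Type*) [Field k]

lemma finrank_eq (n : ℕ) {m : ℕ} (hm : m ≠ 0) :
    Module.finrank k (TruncatedMvPolynomial k (Fin n) m) = m ^ n := by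
  induction n with
  | zero => rw [(zeroEquiv k m).toLinearEquiv.finrank_eq, Module.finrank_self, pow_zero]
  | succ n ih =>
    have : Nontrivial (TruncatedMvPolynomial k (Fin n) m) :=
      Module.nontrivial_of_finrank_pos (R := k) (by rw [ih]; positivity)
    rw [(succEquiv k n m).toLinearEquiv.finrank_eq, ← mulNullity_zero,
      ← map_zero (AdjoinRoot.of _), mulNullity_adjoinRoot_of (Polynomial.monic_X_pow m),
      Polynomial.natDegree_X_pow, mulNullity_zero, ih, pow_succ']

lemma nontrivial_of_ne_zero (n : ℕ) {m : ℕ} (hm : m ≠ 0) :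
    Nontrivial (TruncatedMvPolynomial k (Fin n) m) :=
  Module.nontrivial_of_finrank_pos (R := k) (by rw [finrank_eq k n hm]; positivity)

open DualNumber TrivSqZeroExt in
lemma mulNullity_mk_psum_succ_pow (n l r i : ℕ) :
    mulNullity k (mk k (l + 2 * r) (psum (Fin (n + 1)) k (l + r)) ^ i) =
      l * mulNullity k (mk k (l + 2 * r) (psum (Fin n) k (l + r)) ^ i) +
      r * mulNullity k ((inl (mk k (l + 2 * r) (psum (Fin n) k (l + r))) + ε) ^ i) := by
  rw [← mulNullity_map_algEquiv (succEquiv k n (l + 2 * r)), map_pow, succEquiv_mk_psum,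
    mulNullity_of_add_root_pow_pow_of_X_pow_add]

lemma mulNullity_mk_psum_succ (n l r : ℕ) :
    mulNullity k (mk k (l + 2 * r) (psum (Fin (n + 1)) k (l + r))) =
      l * mulNullity k (mk k (l + 2 * r) (psum (Fin n) k (l + r))) +
      r * mulNullity k (mk k (l + 2 * r) (psum (Fin n) k (l + r)) ^ 2) := by
  simpa only [pow_one, mulNullity_inl_add_eps] using mulNullity_mk_psum_succ_pow k n l r 1

lemma mulNullity_mk_psum_succ_sq [CharP k 3] (n l r : ℕ) :
    mulNullity k (mk k (l + 2 * r) (psum (Fin (n + 1)) k (l + r)) ^ 2) =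
      l * mulNullity k (mk k (l + 2 * r) (psum (Fin n) k (l + r)) ^ 2) +
      r * (mulNullity k (mk k (l + 2 * r) (psum (Fin n) k (l + r))) +
        Module.finrank k (TruncatedMvPolynomial k (Fin n) (l + 2 * r))) := by
  have two_ne_zero : (2 : k) ≠ 0 := Ring.two_ne_zero (by rw [ringChar.eq k 3]; decide)
  have cube_eq_zero : mk k (l + 2 * r) (psum (Fin n) k (l + r)) ^ 3 = 0 :=
    mk_psum_pow_char_eq_zero 3 (by lia)
  rw [mulNullity_mk_psum_succ_pow, mulNullity_inl_add_eps_sq two_ne_zero cube_eq_zero]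

lemma mulNullity_mk_psum_fin_zero_pow (m j : ℕ) {i : ℕ} (hi : i ≠ 0) :
    mulNullity k (mk k m (psum (Fin 0) k j) ^ i) = 1 := by
  have psum_eq_zero : psum (Fin 0) k j = 0 := Finset.sum_of_isEmpty _
  rw [psum_eq_zero, map_zero, zero_pow hi, mulNullity_zero,
    (zeroEquiv k m).toLinearEquiv.finrank_eq, Module.finrank_self]

lemma mulNullity_mk_psum_two_mul [CharP k 3] (n : ℕ) {r : ℕ} (hr : r ≠ 0) :
    mulNullity k (mk k (3 * r) (psum (Fin (n + 1)) k (2 * r))) = r ^ (n + 1) * (3 ^ n + 2 ^ n) ∧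
      mulNullity k (mk k (3 * r) (psum (Fin (n + 1)) k (2 * r)) ^ 2) =
        r ^ (n + 1) * (2 * 3 ^ n + 2 ^ n) := by
  have succ_nullity (n : ℕ) := mulNullity_mk_psum_succ k n r r
  have succ_sq_nullity (n : ℕ) := mulNullity_mk_psum_succ_sq k n r r
  have dim_eq (n : ℕ) := finrank_eq k n (mul_ne_zero three_ne_zero hr)
  rw [show r + 2 * r = 3 * r by ring, ← two_mul] at succ_nullity succ_sq_nullity
  induction n with
  | zero =>
    have nullity_zero : mulNullity k (mk k (3 * r) (psum (Fin 0) k (2 * r))) = 1 := by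
      simpa only [pow_one] using mulNullity_mk_psum_fin_zero_pow k (3 * r) (2 * r) one_ne_zero
    rw [succ_nullity, succ_sq_nullity, nullity_zero,
      mulNullity_mk_psum_fin_zero_pow k _ _ two_ne_zero, dim_eq]
    constructor <;> ring
  | succ n ih =>
    rw [succ_nullity (n + 1), succ_sq_nullity (n + 1), ih.1, ih.2, dim_eq]
    constructor <;> ring

end Dimension

end TruncatedMvPolynomial

section HilbertKunz

open TruncatedMvPolynomial

variable (k : Type*) [Field k]

lemma HKfun_eq_mulNullity (n p e : ℕ) (f : MvPolynomial (Fin n) k) :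
    HKfun k n p e f = mulNullity k (mk k (p ^ e) f) := by
  have quotient_quotient := (DoubleQuot.quotQuotEquivQuotSupₐ k
    (Ideal.span (Set.range fun i : Fin n => (X i : MvPolynomial (Fin n) k) ^ p ^ e))
    (Ideal.span {f})).toLinearEquiv.finrank_eq
  rw [Ideal.map_span, Set.image_singleton] at quotient_quotient
  rw [HKfun, Ideal.span_union, ← quotient_quotient]
  exact finrank_quotient_span_singleton (mk k (p ^ e) f)

lemma HKfun_rename_castSucc_add_X_last_pow (n e : ℕ) {p : ℕ} (hp : p ≠ 0)
    (g : MvPolynomial (Fin n) k) :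
    HKfun k (n + 1) p (e + 1) (rename Fin.castSucc g + X (Fin.last n) ^ p) =
      p * mulNullity k (mk k (p * p ^ e) g ^ p ^ e) := by
  have := nontrivial_of_ne_zero k n (mul_ne_zero hp (pow_ne_zero e hp))
  rw [HKfun_eq_mulNullity, pow_succ', ← mulNullity_map_algEquiv (succEquiv k n (p * p ^ e)),
    succEquiv_mk_rename_castSucc_add_X_last_pow, mulNullity_of_add_root_pow_of_X_pow_mul hp]

lemma HKfun_A2_char_three [CharP k 3] (n e : ℕ) :
    HKfun k (n + 2) 3 (e + 1)
        ((∑ i : Fin (n + 1), (X i.castSucc : MvPolynomial (Fin (n + 2)) k) ^ 2) +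
          X (Fin.last (n + 1)) ^ 3) =
      3 * ((3 ^ e) ^ (n + 1) * (3 ^ n + 2 ^ n)) := by
  have sum_sq_eq : ∑ i : Fin (n + 1), (X i.castSucc : MvPolynomial (Fin (n + 2)) k) ^ 2 =
      rename Fin.castSucc (psum (Fin (n + 1)) k 2) := by
    simp [psum]
  have psum_pow : psum (Fin (n + 1)) k 2 ^ 3 ^ e = psum (Fin (n + 1)) k (2 * 3 ^ e) := by
    simp only [psum, sum_pow_char_pow, pow_mul]
  rw [sum_sq_eq, HKfun_rename_castSucc_add_X_last_pow k _ _ three_ne_zero, ← map_pow, psum_pow,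
    (mulNullity_mk_psum_two_mul k n (pow_ne_zero e three_ne_zero)).1]

end HilbertKunz

/-- The Hilbert–Kunz multiplicity of the `A₂` singularity in characteristic 3 is
`e_HK(S_{3,d}) = 1 + (2/3)^{d−1}`. -/
theorem eHK_A2_char_three (k : Type*) [Field k] [CharP k 3] (d : ℕ) (hd : 2 ≤ d) :
    Filter.Tendsto
      (fun e : ℕ =>
        (HKfun k (d + 1) 3 e
            ((∑ i : Fin d, (X (i.castSucc) : MvPolynomial (Fin (d + 1)) k) ^ 2) +
              X (Fin.last d) ^ 3) : ℝ) / 3 ^ (d * e))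
      Filter.atTop (nhds (1 + (2 / 3) ^ (d - 1))) := by
  obtain ⟨n, rfl⟩ : ∃ n, d = n + 1 := Nat.exists_eq_add_of_le' (by lia)
  rw [← Filter.tendsto_add_atTop_iff_nat 1]
  refine tendsto_const_nhds.congr fun e => ?_
  rw [HKfun_A2_char_three, Nat.add_sub_cancel, div_pow, eq_div_iff (by positivity)]
  push_cast
  field_simp
  ring
end

section
/- Let k be a field of characteristic 3 and d ≥ 2. Then there exist real numbers L_R and L_S such that the sequence e ↦ dim_k( k[x_0,…,x_d]/(x_0^{3^e},…,x_d^{3^e}, x_0² + x_1² + ⋯ + x_d²) ) / 3^{d·e} converges to L_R, the sequence e ↦ dim_k( k[x_0,…,x_d]/(x_0^{3^e},…,x_d^{3^e}, x_0² + ⋯ + x_{d−1}² + x_d³) ) / 3^{d·e} converges to L_S, and L_S > L_R. That is, e_HK(S_{3,d}) > e_HK(R_{3,d}): the Hilbert–Kunz multiplicity distinguishes the A_1 and A_2 singularities in characteristic 3. -/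
open MvPolynomial

/-!
Let `q = p ^ e` be odd, `a = ⌈q / 2⌉` and `m = ⌈q / N⌉`. Since `k[x]` is free over the subring
generated by the `x_i ^ r_i`, the Hilbert–Kunz function of `∑ x_i ^ r_i` is asymptotic to
`∏ r_i` times the Han–Monsky number `D(⌈q / r_0⌉, …, ⌈q / r_d⌉)`, where
`D(b_0, …, b_d) = dim k[x] / (x_0 ^ b_0, …, x_d ^ b_d, ∑ x_i)`. Replacing a square by an `N`-th
power therefore changes the multiplicity by the growth of `gap(s) = N * D(m, s) - 2 * D(a, s)`,
where `s` consists of `d` copies of `a`.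

Eliminating a variable turns `D(a, a, s)` into the dimension of a quotient by powers of `x` and
`x + t`, with `t` the sum of the variables of `s`. In a basis of shifted Dickson polynomials the
ideal is described coordinatewise, and
`D(a, a, s) = D(1, s) + D(3, s) + ⋯ + D(2 * a - 1, s)`. So `gap(a, a, s)` is the sum of `gap(c, s)`
over the odd `c ≤ q`. Because `D(b, s) / b` decreases in `b`, these terms are nonnegative up to
lower order and Lipschitz in `c`. Hence if a single `gap(c, s)` has the largest possible order of
growth, so do the terms in a window of length proportional to `q`, and so does `gap(a, a, s)`. The
induction starts with `gap(m) ≥ (N - 2) * m`.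
-/

namespace HilbertKunz

open Module Finset

section LinearAlgebra

lemma mul_sum_range_le_of_antitone {r : ℕ → ℕ} (hr : Antitone r) {b c : ℕ} (hbc : b ≤ c) :
    b * ∑ j ∈ range c, r j ≤ c * ∑ j ∈ range b, r j := by
  have hhead : b * r b ≤ ∑ j ∈ range b, r j := by
    simpa using card_nsmul_le_sum (range b) r (r b) fun j hj => hr (mem_range.1 hj).le
  have htail : ∑ j ∈ Ico b c, r j ≤ (c - b) * r b := by
    simpa using sum_le_card_nsmul (Ico b c) r (r b) fun j hj => hr (mem_Ico.1 hj).1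
  calc b * ∑ j ∈ range c, r j
      = b * ∑ j ∈ range b, r j + b * ∑ j ∈ Ico b c, r j := by
        rw [← sum_range_add_sum_Ico r hbc, mul_add]
    _ ≤ b * ∑ j ∈ range b, r j + (c - b) * (b * r b) := by
        rw [mul_left_comm]; gcongr
    _ ≤ b * ∑ j ∈ range b, r j + (c - b) * ∑ j ∈ range b, r j := by gcongr
    _ = c * ∑ j ∈ range b, r j := by rw [← add_mul, Nat.add_sub_cancel' hbc]

variable {k : Type*} [Field k]

lemma finrank_range_pow_add_sum {V : Type*} [AddCommGroup V] [Module k V] [Module.Finite k V]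
    (T : V →ₗ[k] V) (b : ℕ) :
    finrank k (T ^ b).range + ∑ j ∈ range b, finrank k ↥(T.ker ⊓ (T ^ j).range) =
      finrank k V := by
  induction b with
  | zero =>
    rw [pow_zero, Module.End.one_eq_id, LinearMap.range_id]
    simp
  | succ b ih =>
    have hrange : (T.domRestrict (T ^ b).range).range = (T ^ (b + 1)).range := by
      rw [LinearMap.range_domRestrict, pow_succ', Module.End.mul_eq_comp, LinearMap.range_comp]
    have hker : finrank k (T.domRestrict (T ^ b).range).ker =
        finrank k ↥(T.ker ⊓ (T ^ b).range) := by
      rw [LinearMap.ker_domRestrict, ← Submodule.finrank_map_subtype_eq,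
        Submodule.map_comap_subtype, inf_comm]
    have hrank_nullity := (T.domRestrict (T ^ b).range).finrank_range_add_finrank_ker
    rw [hrange, hker] at hrank_nullity
    rw [sum_range_succ, ← ih]
    omega

variable {R : Type*} [CommRing R] [Algebra k R]

lemma finrank_quotient_le_of_le {I J : Ideal R} (hIJ : I ≤ J) [Module.Finite k (R ⧸ I)] :
    finrank k (R ⧸ J) ≤ finrank k (R ⧸ I) :=
  LinearMap.finrank_le_finrank_of_surjective (f := (Ideal.Quotient.factorₐ k hIJ).toLinearMap)
    (Ideal.Quotient.factor_surjective hIJ)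

lemma finite_quotient_of_le {I J : Ideal R} (hIJ : I ≤ J) [Module.Finite k (R ⧸ I)] :
    Module.Finite k (R ⧸ J) :=
  Module.Finite.of_surjective (Ideal.Quotient.factorₐ k hIJ).toLinearMap
    (Ideal.Quotient.factor_surjective hIJ)

lemma finrank_quotient_sup_span_singleton (I : Ideal R) (g : R) :
    finrank k (R ⧸ I ⊔ Ideal.span {g}) =
      finrank k ((R ⧸ I) ⧸ (LinearMap.mulLeft k (Ideal.Quotient.mk I g)).range) := by
  have hmap : (Ideal.span {g}).map (Ideal.Quotient.mkₐ k I) =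
      Ideal.span {Ideal.Quotient.mk I g} := by
    rw [Ideal.map_span, Set.image_singleton]
    rfl
  have hrange : (LinearMap.mulLeft k (Ideal.Quotient.mk I g)).range =
      (Ideal.span {Ideal.Quotient.mk I g}).restrictScalars k := by
    ext x
    simp [Ideal.mem_span_singleton, dvd_def, eq_comm]
  rw [← (DoubleQuot.quotQuotEquivQuotSupₐ k I (Ideal.span {g})).toLinearEquiv.finrank_eq, hmap,
    hrange]
  exact (Submodule.Quotient.restrictScalarsEquiv k _).symm.finrank_eq

-- The successive quotients of the powers of `g` shrink, so the dimension is concave in the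
-- exponent.
lemma mul_finrank_quotient_sup_span_pow_le (I : Ideal R) [Module.Finite k (R ⧸ I)] (g : R)
    {b c : ℕ} (hbc : b ≤ c) :
    b * finrank k (R ⧸ I ⊔ Ideal.span {g ^ c}) ≤ c * finrank k (R ⧸ I ⊔ Ideal.span {g ^ b}) := by
  set T := LinearMap.mulLeft k (Ideal.Quotient.mk I g) with hT
  have hsum (n : ℕ) : finrank k (R ⧸ I ⊔ Ideal.span {g ^ n}) =
      ∑ j ∈ range n, finrank k ↥(T.ker ⊓ (T ^ j).range) := by
    have hquot := Submodule.finrank_quotient_add_finrank (T ^ n).range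
    rw [← finrank_range_pow_add_sum T n] at hquot
    rw [finrank_quotient_sup_span_singleton, map_pow, ← LinearMap.pow_mulLeft, ← hT]
    omega
  have hanti : Antitone fun j => finrank k ↥(T.ker ⊓ (T ^ j).range) :=
    antitone_nat_of_succ_le fun j => Submodule.finrank_mono <| inf_le_inf_left _ <| by
      rw [pow_succ, Module.End.mul_eq_comp]
      exact LinearMap.range_comp_le_range _ _
  rw [hsum, hsum]
  exact mul_sum_range_le_of_antitone hanti hbc

end LinearAlgebra

section Expand

variable {k ι : Type*} [Field k]

/-- The substitution `X i ↦ X i ^ r i`; unlike `MvPolynomial.expand`, the exponent may depend on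
the variable. -/
noncomputable def expandEach (r : ι → ℕ) : MvPolynomial ι k →ₐ[k] MvPolynomial ι k :=
  aeval fun i => X i ^ r i

@[simp]
lemma expandEach_X (r : ι → ℕ) (i : ι) : expandEach (k := k) r (X i) = X i ^ r i :=
  aeval_X _ i

/-- Division with remainder of exponent vectors: `δ` has quotients `δ i / r i` and remainders
`δ i % r i`. -/
noncomputable def exponentEquiv [Finite ι] {r : ι → ℕ} (hr : ∀ i, 0 < r i) :
    (Σ _ : ∀ i, Fin (r i), ι →₀ ℕ) ≃ (ι →₀ ℕ) where
  toFun x := Finsupp.equivFunOnFinite.symm fun i => r i * x.2 i + x.1 i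
  invFun δ := ⟨fun i => ⟨δ i % r i, Nat.mod_lt _ (hr i)⟩,
    Finsupp.equivFunOnFinite.symm fun i => δ i / r i⟩
  left_inv x := by
    refine Sigma.ext (funext fun i => Fin.ext ?_) (heq_of_eq <| Finsupp.ext fun i => ?_)
    · simp [Nat.mod_eq_of_lt (x.1 i).2]
    · simp [Nat.mul_add_div (hr i), Nat.div_eq_of_lt (x.1 i).2]
  right_inv δ := by
    ext i
    simp [Nat.div_add_mod]

lemma expandEach_monomial [Finite ι] (r : ι → ℕ) (δ : ι →₀ ℕ) (c : k) :
    expandEach r (monomial δ c) =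
      monomial (Finsupp.equivFunOnFinite.symm fun i => r i * δ i) c := by
  have := Fintype.ofFinite ι
  rw [expandEach, aeval_monomial, monomial_eq, algebraMap_eq,
    Finsupp.prod_fintype _ _ (by simp), Finsupp.prod_fintype _ _ (by simp)]
  simp [pow_mul]

variable [Fintype ι] [DecidableEq ι]

/-- Freeness of `MvPolynomial ι k` over its subring of polynomials in the `X i ^ r i`, the basis
consisting of the monomials whose exponents are reduced modulo `r`. -/
noncomputable def expandEquiv {r : ι → ℕ} (hr : ∀ i, 0 < r i) :
    ((∀ i, Fin (r i)) → MvPolynomial ι k) ≃ₗ[k] MvPolynomial ι k :=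
  (Pi.basis fun _ => basisMonomials ι k).equiv (basisMonomials ι k) (exponentEquiv hr)

lemma expandEquiv_apply {r : ι → ℕ} (hr : ∀ i, 0 < r i)
    (v : (∀ i, Fin (r i)) → MvPolynomial ι k) :
    expandEquiv hr v = ∑ γ, expandEach r (v γ) *
      monomial (Finsupp.equivFunOnFinite.symm fun i => (γ i : ℕ)) 1 := by
  suffices (expandEquiv hr).toLinearMap = ∑ γ : ∀ i, Fin (r i),
      LinearMap.mulRight k
          (monomial (Finsupp.equivFunOnFinite.symm fun i => (γ i : ℕ)) (1 : k)) ∘ₗ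
        (expandEach r).toLinearMap ∘ₗ LinearMap.proj γ by
    simpa using LinearMap.congr_fun this v
  refine (Pi.basis fun _ => basisMonomials ι k).ext fun x => ?_
  rw [LinearMap.sum_apply, Finset.sum_eq_single x.1 (fun γ _ hγ => by simp [hγ])
    (by simp)]
  have hmonomial : expandEquiv hr (Pi.basis (fun _ => basisMonomials ι k) x) =
      monomial (exponentEquiv hr x) 1 := by
    rw [expandEquiv, Basis.equiv_apply, coe_basisMonomials]
  rw [LinearEquiv.coe_coe, hmonomial]
  simp only [Pi.basis_apply, coe_basisMonomials, LinearMap.comp_apply, LinearMap.proj_apply,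
    Pi.single_eq_same, AlgHom.toLinearMap_apply, expandEach_monomial, LinearMap.mulRight_apply,
    monomial_mul, one_mul]
  congr 2
  ext i
  rfl

lemma expandEquiv_smul {r : ι → ℕ} (hr : ∀ i, 0 < r i) (g : MvPolynomial ι k)
    (v : (∀ i, Fin (r i)) → MvPolynomial ι k) :
    expandEquiv hr (g • v) = expandEach r g * expandEquiv hr v := by
  simp only [expandEquiv_apply, Pi.smul_apply, smul_eq_mul, map_mul, mul_assoc, Finset.mul_sum]

lemma map_expandEquiv_pi {r : ι → ℕ} (hr : ∀ i, 0 < r i) (J : Ideal (MvPolynomial ι k)) :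
    (Submodule.pi Set.univ fun _ => J.restrictScalars k).map (expandEquiv hr).toLinearMap =
      (J.map (expandEach r)).restrictScalars k := by
  apply le_antisymm
  · rintro _ ⟨v, hv, rfl⟩
    rw [LinearEquiv.coe_coe, expandEquiv_apply]
    exact Ideal.sum_mem _ fun γ _ =>
      Ideal.mul_mem_right _ _ (Ideal.mem_map_of_mem _ (hv γ (Set.mem_univ γ)))
  · intro f hf
    refine Submodule.closure_induction (Submodule.zero_mem _)
      (fun _ _ _ _ => Submodule.add_mem _) ?_ hf
    rintro f _ ⟨g, hg, rfl⟩
    obtain ⟨v, rfl⟩ := (expandEquiv hr).surjective f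
    exact ⟨g • v, fun γ _ => J.mul_mem_right _ hg,
      (expandEquiv_smul hr g v).trans (mul_comm _ _)⟩

/-- Reducing `expandEquiv` modulo an ideal and its extension. -/
noncomputable def quotientMapExpandEquiv {r : ι → ℕ} (hr : ∀ i, 0 < r i)
    (J : Ideal (MvPolynomial ι k)) :
    (MvPolynomial ι k ⧸ J.map (expandEach r)) ≃ₗ[k]
      ((∀ i, Fin (r i)) → MvPolynomial ι k ⧸ J) :=
  (Submodule.Quotient.restrictScalarsEquiv k (J.map (expandEach r))).symm ≪≫ₗ
    (Submodule.Quotient.equiv _ _ (expandEquiv hr) (map_expandEquiv_pi hr J)).symm ≪≫ₗ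
    Submodule.quotientPi (fun _ => J.restrictScalars k) ≪≫ₗ
    LinearEquiv.piCongrRight fun _ => Submodule.Quotient.restrictScalarsEquiv k J

end Expand

section QuotDim

variable {k ι : Type*} [Field k]

lemma finrank_quotient_map_expandEach [Fintype ι] {r : ι → ℕ} (hr : ∀ i, 0 < r i)
    (J : Ideal (MvPolynomial ι k)) [Module.Finite k (MvPolynomial ι k ⧸ J)] :
    finrank k (MvPolynomial ι k ⧸ J.map (expandEach r)) =
      (∏ i, r i) * finrank k (MvPolynomial ι k ⧸ J) := by
  classical
  rw [(quotientMapExpandEquiv hr J).finrank_eq, finrank_pi_fintype]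
  simp

lemma finite_quotient_map_expandEach [Finite ι] {r : ι → ℕ} (hr : ∀ i, 0 < r i)
    (J : Ideal (MvPolynomial ι k)) [Module.Finite k (MvPolynomial ι k ⧸ J)] :
    Module.Finite k (MvPolynomial ι k ⧸ J.map (expandEach r)) := by
  classical
  have := Fintype.ofFinite ι
  exact Module.Finite.equiv (quotientMapExpandEquiv hr J).symm

/-- The ideal `(X i ^ β i)ᵢ`. -/
noncomputable def powerIdeal (k : Type*) [Field k] {ι : Type*} (β : ι → ℕ) :
    Ideal (MvPolynomial ι k) :=
  Ideal.span (Set.range fun i => X i ^ β i)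

/-- The dimension of `k[x] / (x_i ^ β i, f)`. With all `β i = p ^ e` it is the Hilbert–Kunz
function of `f`, and letting the `β i` vary independently makes it computable. -/
noncomputable def quotDim (β : ι → ℕ) (f : MvPolynomial ι k) : ℕ :=
  finrank k (MvPolynomial ι k ⧸ powerIdeal k β ⊔ Ideal.span {f})

lemma HKfun_eq_quotDim (n p e : ℕ) (f : MvPolynomial (Fin n) k) :
    HKfun k n p e f = quotDim (fun _ => p ^ e) f := by
  rw [HKfun, quotDim, powerIdeal, Ideal.span_union]

lemma powerIdeal_le_iff {β : ι → ℕ} {J : Ideal (MvPolynomial ι k)} :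
    powerIdeal k β ≤ J ↔ ∀ i, X i ^ β i ∈ J := by
  rw [powerIdeal, Ideal.span_le, Set.range_subset_iff]
  rfl

lemma X_pow_mem_powerIdeal (β : ι → ℕ) (i : ι) : X i ^ β i ∈ powerIdeal k β :=
  powerIdeal_le_iff.1 le_rfl i

lemma powerIdeal_anti {β γ : ι → ℕ} (h : β ≤ γ) : powerIdeal k γ ≤ powerIdeal k β :=
  powerIdeal_le_iff.2 fun i => Ideal.mem_of_dvd _ (pow_dvd_pow _ (h i)) (X_pow_mem_powerIdeal β i)

lemma map_expandEach_powerIdeal (r β : ι → ℕ) :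
    (powerIdeal k β).map (expandEach r) = powerIdeal k (r * β) := by
  rw [powerIdeal, Ideal.map_span, ← Set.range_comp, powerIdeal]
  congr 2
  ext1 i
  simp [pow_mul]

lemma powerIdeal_one : powerIdeal k (1 : ι → ℕ) = RingHom.ker (aeval (R := k) (0 : ι → k)) := by
  have hvars : powerIdeal k (1 : ι → ℕ) = idealOfVars ι k := by
    simp [powerIdeal, idealOfVars]
  ext f
  rw [hvars, ← pow_one (idealOfVars ι k), mem_pow_idealOfVars_iff']
  simp [RingHom.mem_ker, aeval_zero, constantCoeff_eq, Finsupp.degree_eq_zero_iff]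

/-- `k[x] / (x_i)ᵢ = k`. -/
noncomputable def quotientPowerIdealOneEquiv :
    (MvPolynomial ι k ⧸ powerIdeal k (1 : ι → ℕ)) ≃ₗ[k] k :=
  ((Ideal.quotientEquivAlgOfEq k powerIdeal_one).trans
    (Ideal.quotientKerAlgEquivOfSurjective fun c => ⟨C c, by simp⟩)).toLinearEquiv

instance finite_quotient_powerIdeal_one :
    Module.Finite k (MvPolynomial ι k ⧸ powerIdeal k (1 : ι → ℕ)) :=
  Module.Finite.equiv quotientPowerIdealOneEquiv.symm

lemma finite_quotient_powerIdeal [Finite ι] {β : ι → ℕ} (hβ : ∀ i, 0 < β i) :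
    Module.Finite k (MvPolynomial ι k ⧸ powerIdeal k β) := by
  rw [← mul_one β, ← map_expandEach_powerIdeal]
  exact finite_quotient_map_expandEach hβ _

lemma finite_quotient_powerIdeal_sup [Finite ι] {β : ι → ℕ} (hβ : ∀ i, 0 < β i)
    (J : Ideal (MvPolynomial ι k)) :
    Module.Finite k (MvPolynomial ι k ⧸ powerIdeal k β ⊔ J) :=
  have := finite_quotient_powerIdeal (k := k) hβ
  finite_quotient_of_le le_sup_left

lemma finrank_quotient_powerIdeal [Fintype ι] {β : ι → ℕ} (hβ : ∀ i, 0 < β i) :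
    finrank k (MvPolynomial ι k ⧸ powerIdeal k β) = ∏ i, β i := by
  rw [← mul_one β, ← map_expandEach_powerIdeal, finrank_quotient_map_expandEach hβ,
    quotientPowerIdealOneEquiv.finrank_eq, finrank_self]
  simp

lemma quotDim_mono [Finite ι] {β γ : ι → ℕ} (hγ : ∀ i, 0 < γ i) (h : β ≤ γ)
    (f : MvPolynomial ι k) : quotDim β f ≤ quotDim γ f :=
  have := finite_quotient_powerIdeal_sup hγ (Ideal.span {f})
  finrank_quotient_le_of_le (sup_le_sup_right (powerIdeal_anti h) _)

lemma quotDim_le_prod [Fintype ι] {β : ι → ℕ} (hβ : ∀ i, 0 < β i) (f : MvPolynomial ι k) :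
    quotDim β f ≤ ∏ i, β i := by
  have := finite_quotient_powerIdeal (k := k) hβ
  rw [← finrank_quotient_powerIdeal (k := k) hβ]
  exact finrank_quotient_le_of_le le_sup_left

lemma quotDim_expandEach [Fintype ι] {r β : ι → ℕ} (hr : ∀ i, 0 < r i) (hβ : ∀ i, 0 < β i)
    (f : MvPolynomial ι k) :
    quotDim (r * β) (expandEach r f) = (∏ i, r i) * quotDim β f := by
  have := finite_quotient_powerIdeal_sup hβ (Ideal.span {f})
  rw [quotDim, quotDim, ← finrank_quotient_map_expandEach hr, Ideal.map_sup,
    map_expandEach_powerIdeal, Ideal.map_span, Set.image_singleton]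

lemma quotDim_comp_equiv {κ : Type*} (e : κ ≃ ι) (β : ι → ℕ) (f : MvPolynomial κ k) :
    quotDim (β ∘ e) f = quotDim β (rename e f) := by
  refine (Ideal.quotientEquivAlg _ _ (renameEquiv k e) ?_).toLinearEquiv.finrank_eq
  rw [Ideal.map_sup, Ideal.map_span, powerIdeal, powerIdeal,
    Ideal.map_span, ← Set.range_comp, Set.image_singleton, ← e.surjective.range_comp]
  congr 3
  ext1 i
  simp

lemma powerIdeal_update_sup [DecidableEq ι] (β : ι → ℕ) {i : ι} {b : ℕ} (hb : b ≤ β i) :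
    powerIdeal k (Function.update β i b) = powerIdeal k β ⊔ Ideal.span {X i ^ b} := by
  apply le_antisymm
  · refine powerIdeal_le_iff.2 fun j => ?_
    obtain rfl | hj := eq_or_ne j i
    · simpa using Ideal.mem_sup_right (Ideal.mem_span_singleton_self _)
    · simpa [hj] using Ideal.mem_sup_left (X_pow_mem_powerIdeal β j)
  · refine sup_le (powerIdeal_anti (update_le_iff.2 ⟨hb, fun _ _ => le_rfl⟩)) ?_
    simpa using X_pow_mem_powerIdeal (k := k) (Function.update β i b) i

lemma mul_quotDim_le_mul_quotDim_update [Finite ι] [DecidableEq ι] {β : ι → ℕ}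
    (hβ : ∀ i, 0 < β i) (f : MvPolynomial ι k) {i : ι} {b : ℕ} (hb : b ≤ β i) :
    b * quotDim β f ≤ β i * quotDim (Function.update β i b) f := by
  have := finite_quotient_powerIdeal_sup hβ (Ideal.span {f})
  have habsorb : powerIdeal k β ⊔ Ideal.span {f} ⊔ Ideal.span {X i ^ β i} =
      powerIdeal k β ⊔ Ideal.span {f} :=
    sup_eq_left.2 <| (Ideal.span_singleton_le_iff_mem _).2 <|
      Ideal.mem_sup_left (X_pow_mem_powerIdeal β i)
  have hconcave := mul_finrank_quotient_sup_span_pow_le (k := k)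
    (powerIdeal k β ⊔ Ideal.span {f}) (X i) hb
  rwa [habsorb, sup_right_comm, ← powerIdeal_update_sup β hb] at hconcave

lemma prod_mul_quotDim_le [Fintype ι] {β γ : ι → ℕ} (hβ : ∀ i, 0 < β i) (h : β ≤ γ)
    (f : MvPolynomial ι k) :
    (∏ i, β i) * quotDim γ f ≤ (∏ i, γ i) * quotDim β f := by
  classical
  suffices ∀ s : Finset ι,
      (∏ i ∈ s, β i) * quotDim γ f ≤ (∏ i ∈ s, γ i) * quotDim (s.piecewise β γ) f by
    simpa using this Finset.univ
  intro s
  induction s using Finset.induction_on with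
  | empty => simp
  | insert i s hi ih =>
    have hpos : ∀ j, 0 < s.piecewise β γ j := fun j =>
      s.piecewise_cases β γ (0 < ·) (hβ j) ((hβ j).trans_le (h j))
    have hstep := mul_quotDim_le_mul_quotDim_update hpos f (i := i) (b := β i)
      (by simpa [hi] using h i)
    rw [Finset.piecewise_eq_of_notMem _ _ _ hi] at hstep
    rw [Finset.prod_insert hi, Finset.prod_insert hi, Finset.piecewise_insert]
    calc β i * (∏ j ∈ s, β j) * quotDim γ f
        ≤ β i * ((∏ j ∈ s, γ j) * quotDim (s.piecewise β γ) f) := by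
          rw [mul_assoc]; gcongr
      _ = (∏ j ∈ s, γ j) * (β i * quotDim (s.piecewise β γ) f) := by ring
      _ ≤ (∏ j ∈ s, γ j) * (γ i * quotDim (Function.update (s.piecewise β γ) i (β i)) f) := by
          gcongr
      _ = γ i * (∏ j ∈ s, γ j) * quotDim (Function.update (s.piecewise β γ) i (β i)) f := by ring

end QuotDim

section Elimination

open scoped Polynomial

variable {k ι : Type*} [Field k]

lemma finrank_quotient_sup_ker {A B : Type*} [CommRing A] [CommRing B] [Algebra k A]
    [Algebra k B] {φ : A →ₐ[k] B} (hφ : Function.Surjective φ) (J : Ideal A) :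
    finrank k (A ⧸ J ⊔ RingHom.ker φ) = finrank k (B ⧸ J.map φ) := by
  have hker : RingHom.ker ((Ideal.Quotient.mkₐ k (J.map φ)).comp φ) = J ⊔ RingHom.ker φ := by
    rw [show RingHom.ker φ = (⊥ : Ideal B).comap φ from rfl,
      ← Ideal.comap_map_of_surjective φ hφ]
    ext x
    simp [RingHom.mem_ker, Ideal.Quotient.eq_zero_iff_mem]
  have hsurj : Function.Surjective ((Ideal.Quotient.mkₐ k (J.map φ)).comp φ) :=
    (Ideal.Quotient.mkₐ_surjective k _).comp hφ
  exact ((Ideal.quotientEquivAlgOfEq k hker.symm).trans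
    (Ideal.quotientKerAlgEquivOfSurjective hsurj)).toLinearEquiv.finrank_eq

variable {R : Type*} [CommRing R] [Algebra k R]

lemma finrank_quotient_sup_span_X_add_C (I : Ideal R) (t : R) (b : ℕ) :
    finrank k (R[X] ⧸ (I.map Polynomial.C ⊔ Ideal.span {Polynomial.X ^ b}) ⊔
        Ideal.span {Polynomial.X + Polynomial.C t}) =
      finrank k (R ⧸ I ⊔ Ideal.span {t ^ b}) := by
  let φ : R[X] →ₐ[k] R := (Polynomial.aeval (R := R) (-t)).restrictScalars k
  have hφC (r : R) : φ (Polynomial.C r) = r := Polynomial.aeval_C _ _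
  have hker : Ideal.span {Polynomial.X + Polynomial.C t} = RingHom.ker φ := by
    rw [← sub_neg_eq_add, ← map_neg, ← Polynomial.ker_evalRingHom]
    rfl
  have hmap : (I.map Polynomial.C ⊔ Ideal.span {Polynomial.X ^ b}).map φ =
      I ⊔ Ideal.span {t ^ b} := by
    have hI : (I.map Polynomial.C).map φ = I := by
      rw [← Ideal.map_coe φ, Ideal.map_map, show (φ : R[X] →+* R).comp Polynomial.C =
        RingHom.id R from RingHom.ext hφC, Ideal.map_id]
    have hX : φ (Polynomial.X ^ b) = (-1) ^ b * t ^ b := by simp [φ, ← neg_pow]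
    rw [Ideal.map_sup, hI, Ideal.map_span, Set.image_singleton, hX,
      Ideal.span_singleton_mul_left_unit (isUnit_one.neg.pow b)]
  rw [hker, finrank_quotient_sup_ker (fun r => ⟨Polynomial.C r, hφC r⟩), hmap]

lemma quotDim_option_elim (b : ℕ) (β : ι → ℕ) (f : MvPolynomial (Option ι) k) :
    quotDim (fun o : Option ι => o.elim b β) f =
      finrank k ((MvPolynomial ι k)[X] ⧸
        ((powerIdeal k β).map Polynomial.C ⊔ Ideal.span {Polynomial.X ^ b}) ⊔
          Ideal.span {optionEquivLeft k ι f}) := by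
  refine (Ideal.quotientEquivAlg _ _ (optionEquivLeft k ι) ?_).toLinearEquiv.finrank_eq
  rw [Ideal.map_sup, Ideal.map_span _ {f}, Set.image_singleton, powerIdeal, powerIdeal,
    Ideal.map_span, Ideal.map_span, ← Ideal.span_union, ← Set.range_comp, ← Set.range_comp,
    Option.range_eq]
  simp [Function.comp_def]

/-- The linear form `∑ i, x_i`. -/
noncomputable def sumX (k ι : Type*) [Field k] [Fintype ι] : MvPolynomial ι k := ∑ i, X i

lemma optionEquivLeft_sumX [Fintype ι] :
    optionEquivLeft k ι (sumX k (Option ι)) = Polynomial.X + Polynomial.C (sumX k ι) := by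
  simp [sumX, Fintype.sum_option]

lemma quotDim_option_elim_sumX [Fintype ι] (b : ℕ) (β : ι → ℕ) :
    quotDim (fun o : Option ι => o.elim b β) (sumX k (Option ι)) = quotDim β (sumX k ι ^ b) := by
  rw [quotDim_option_elim, optionEquivLeft_sumX, finrank_quotient_sup_span_X_add_C, quotDim]

end Elimination

section Dickson

open scoped Polynomial
open Polynomial (dickson)

lemma eval_add_dickson_one_mul {S : Type*} [CommRing S] (x y : S) (n : ℕ) :
    (dickson 1 (x * y) n).eval (x + y) = x ^ n + y ^ n := by
  induction n using Nat.twoStepInduction with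
  | zero => norm_num
  | one => simp
  | more n ih₀ ih₁ =>
    rw [Polynomial.dickson_add_two, Polynomial.eval_sub, Polynomial.eval_mul, Polynomial.eval_mul,
      Polynomial.eval_X, Polynomial.eval_C, ih₀, ih₁]
    ring

-- With `x = (v + u) ^ 2` and `y = (v - u) ^ 2` one has `x + y = 2 * (v ^ 2 + u ^ 2)` and
-- `x * y = (v ^ 2 - u ^ 2) ^ 2`, and the Frobenius splits `(v ± u) ^ (2 * s + 1)`.
lemma eval_dickson_of_sq {S : Type*} [CommRing S] {p : ℕ} [Fact p.Prime] [CharP S p] {s e : ℕ}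
    (hs : 2 * s + 1 = p ^ e) (u v : S) :
    (dickson 1 ((v ^ 2 - u ^ 2) ^ 2) (s + 1)).eval (2 * (v ^ 2 + u ^ 2)) =
        2 * ((v ^ 2) ^ (s + 1) + (u ^ 2) ^ (s + 1)) ∧
      (v ^ 2 - u ^ 2) * (dickson 1 ((v ^ 2 - u ^ 2) ^ 2) s).eval (2 * (v ^ 2 + u ^ 2)) =
        2 * ((v ^ 2) ^ (s + 1) - (u ^ 2) ^ (s + 1)) := by
  have heval (n : ℕ) : (dickson 1 ((v ^ 2 - u ^ 2) ^ 2) n).eval (2 * (v ^ 2 + u ^ 2)) =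
      (v + u) ^ (2 * n) + (v - u) ^ (2 * n) := by
    have hprod : (v ^ 2 - u ^ 2) ^ 2 = (v + u) ^ 2 * (v - u) ^ 2 := by ring
    have hsum : 2 * (v ^ 2 + u ^ 2) = (v + u) ^ 2 + (v - u) ^ 2 := by ring
    rw [hprod, hsum, eval_add_dickson_one_mul, pow_mul, pow_mul]
  have hadd : (v + u) ^ (2 * s + 1) = v ^ (2 * s + 1) + u ^ (2 * s + 1) := by
    rw [hs, add_pow_char_pow]
  have hsub : (v - u) ^ (2 * s + 1) = v ^ (2 * s + 1) - u ^ (2 * s + 1) := by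
    rw [hs, sub_pow_char_pow]
  constructor
  · rw [heval]
    linear_combination (v + u) * hadd + (v - u) * hsub
  · rw [heval]
    linear_combination (v - u) * hadd + (v + u) * hsub

lemma exists_injective_ringHom_sq {S : Type*} [CommRing S] (y : S) :
    ∃ i : S →+* QuadraticAlgebra S y 0, Function.Injective i ∧ ∃ u, u ^ 2 = i y :=
  ⟨algebraMap S _, QuadraticAlgebra.algebraMap_injective, QuadraticAlgebra.omega, by
    ext <;> simp [pow_two]⟩

lemma eval_dickson {S : Type*} [CommRing S] {p : ℕ} [Fact p.Prime] [CharP S p] {s e : ℕ}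
    (hs : 2 * s + 1 = p ^ e) (x y : S) :
    (dickson 1 ((y - x) ^ 2) (s + 1)).eval (2 * (y + x)) = 2 * (y ^ (s + 1) + x ^ (s + 1)) ∧
      (y - x) * (dickson 1 ((y - x) ^ 2) s).eval (2 * (y + x)) =
        2 * (y ^ (s + 1) - x ^ (s + 1)) := by
  obtain ⟨i, hi, u, hu⟩ := exists_injective_ringHom_sq x
  obtain ⟨j, hj, v, hv⟩ := exists_injective_ringHom_sq (i y)
  have hji : Function.Injective (j.comp i) := hj.comp hi
  have := charP_of_injective_ringHom hji p
  have hu' : j u ^ 2 = j.comp i x := by rw [← map_pow, hu]; rfl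
  have hv' : v ^ 2 = j.comp i y := hv
  have key := eval_dickson_of_sq hs (j u) v
  simp only [hu', hv', ← map_sub, ← map_add, ← map_pow, ← Polynomial.map_dickson,
    ← map_ofNat (j.comp i) 2, ← map_mul, Polynomial.eval_map_apply] at key
  exact key.imp (hji ·) (hji ·)

variable {R : Type*} [CommRing R]

/-- The Dickson polynomial `D_n(M, t ^ 2)` evaluated at `M = 2 * ((X + t) + X)`. If
`2 * n + 1` is a power of the characteristic, then `X ^ (n + 1)` and `(X + t) ^ (n + 1)` are
combinations of its values at `n` and `n + 1`. -/
noncomputable def shiftedDickson (t : R) (n : ℕ) : R[X] :=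
  (dickson 1 (t ^ 2) n).comp (2 * (Polynomial.X + Polynomial.C t + Polynomial.X))

lemma shiftedDickson_zero (t : R) : shiftedDickson t 0 = 2 := by
  norm_num [shiftedDickson]

lemma shiftedDickson_one (t : R) :
    shiftedDickson t 1 = 2 * (Polynomial.X + Polynomial.C t + Polynomial.X) := by
  simp [shiftedDickson]

lemma shiftedDickson_add_two (t : R) (n : ℕ) :
    shiftedDickson t (n + 2) =
      2 * (Polynomial.X + Polynomial.C t + Polynomial.X) * shiftedDickson t (n + 1) -
        Polynomial.C t ^ 2 * shiftedDickson t n := by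
  simp [shiftedDickson, Polynomial.dickson_add_two]

lemma shiftedDickson_succ {p : ℕ} [Fact p.Prime] [CharP R p] {s e : ℕ} (hs : 2 * s + 1 = p ^ e)
    (t : R) :
    shiftedDickson t (s + 1) =
        2 * ((Polynomial.X + Polynomial.C t) ^ (s + 1) + Polynomial.X ^ (s + 1)) ∧
      Polynomial.C t * shiftedDickson t s =
        2 * ((Polynomial.X + Polynomial.C t) ^ (s + 1) - Polynomial.X ^ (s + 1)) := by
  have key := eval_dickson hs (Polynomial.X : R[X]) (Polynomial.X + Polynomial.C t)
  simp only [add_sub_cancel_left, ← map_pow, ← Polynomial.map_dickson, Polynomial.eval_map] at key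
  exact key

lemma natDegree_shiftedDickson_le (t : R) (n : ℕ) : (shiftedDickson t n).natDegree ≤ n := by
  induction n using Nat.twoStepInduction with
  | zero => simp [shiftedDickson_zero]
  | one => rw [shiftedDickson_one]; compute_degree
  | more n ih₀ ih₁ =>
    rw [shiftedDickson_add_two]
    compute_degree
    omega

lemma isUnit_coeff_shiftedDickson (h2 : IsUnit (2 : R)) (t : R) (n : ℕ) :
    IsUnit ((shiftedDickson t n).coeff n) := by
  have hM : 2 * (Polynomial.X + Polynomial.C t + Polynomial.X) =
      Polynomial.C (2 * 2) * Polynomial.X + Polynomial.C (2 * t) := by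
    simp only [Polynomial.C_mul, Polynomial.C_ofNat]
    ring
  induction n using Nat.twoStepInduction with
  | zero => simpa [shiftedDickson_zero] using h2
  | one => simpa [shiftedDickson_one, hM] using h2.mul h2
  | more n _ ih =>
    have hlow {j : ℕ} (hj : j ≤ n + 1) : (shiftedDickson t j).coeff (n + 2) = 0 :=
      Polynomial.coeff_eq_zero_of_natDegree_lt <|
        (natDegree_shiftedDickson_le t j).trans_lt (by omega)
    rw [shiftedDickson_add_two, hM, add_mul, mul_assoc, ← Polynomial.C_pow]
    simpa only [Polynomial.coeff_sub, Polynomial.coeff_add, Polynomial.coeff_C_mul,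
      Polynomial.coeff_X_mul, hlow le_rfl, hlow n.le_succ, mul_zero, add_zero, sub_zero] using
      (h2.mul h2).mul ih

variable [IsDomain R]

/-- The sequence `shiftedDickson t` as a basis of `R[X]`. -/
noncomputable def shiftedDicksonBasis (h2 : IsUnit (2 : R)) (t : R) : Basis ℕ R R[X] :=
  let S : Polynomial.Sequence R :=
    ⟨shiftedDickson t, fun n => Polynomial.degree_eq_of_le_of_coeff_ne_zero
      (Polynomial.natDegree_le_iff_degree_le.1 (natDegree_shiftedDickson_le t n))
      (isUnit_coeff_shiftedDickson h2 t n).ne_zero⟩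
  S.basis fun n => by
    rw [Polynomial.leadingCoeff, S.natDegree_eq]
    exact isUnit_coeff_shiftedDickson h2 t n

lemma shiftedDicksonBasis_apply (h2 : IsUnit (2 : R)) (t : R) (n : ℕ) :
    shiftedDicksonBasis h2 t n = shiftedDickson t n := by
  rw [shiftedDicksonBasis, Polynomial.Sequence.basis_eq_self]

end Dickson

section CoordSubmodule

variable {R M ι : Type*} [CommRing R] [AddCommGroup M] [Module R M]

/-- The vectors whose `i`-th coordinate lies in the ideal `K i`, for every `i`. -/
noncomputable def coordSubmodule (B : Basis ι R M) (K : ι → Ideal R) : Submodule R M :=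
  ⨅ i, Submodule.comap (B.coord i) (K i)

lemma mem_coordSubmodule {B : Basis ι R M} {K : ι → Ideal R} {x : M} :
    x ∈ coordSubmodule B K ↔ ∀ i, B.repr x i ∈ K i := by
  simp [coordSubmodule, Submodule.mem_iInf]

lemma smul_mem_coordSubmodule (B : Basis ι R M) {K : ι → Ideal R} {i : ι} {r : R} (hr : r ∈ K i) :
    r • B i ∈ coordSubmodule B K := by
  classical
  refine mem_coordSubmodule.2 fun j => ?_
  obtain rfl | hij := eq_or_ne i j
  · simpa using hr
  · simp [hij]

lemma coordSubmodule_le {B : Basis ι R M} {K : ι → Ideal R} {N : Submodule R M}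
    (h : ∀ i, ∀ r ∈ K i, r • B i ∈ N) : coordSubmodule B K ≤ N := by
  intro x hx
  rw [← B.linearCombination_repr x, Finsupp.linearCombination_apply]
  exact Submodule.sum_mem _ fun i _ => h i _ (mem_coordSubmodule.1 hx i)

lemma finrank_quotient_coordSubmodule {k : Type*} [Field k] [Algebra k R] [Module k M]
    [IsScalarTower k R M] (B : Basis ℕ R M) {K : ℕ → Ideal R} {n : ℕ} (hK : ∀ b, n ≤ b → K b = ⊤)
    (hfin : ∀ b, Module.Finite k (R ⧸ K b)) :
    finrank k (M ⧸ coordSubmodule B K) = ∑ b ∈ range n, finrank k (R ⧸ K b) := by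
  let φ : M →ₗ[R] (∀ b : Fin n, R ⧸ K b) :=
    LinearMap.pi fun b => (Submodule.mkQ (K b)) ∘ₗ B.coord b
  have hφ (x : M) (b : Fin n) : φ x b = Ideal.Quotient.mk _ (B.repr x b) := rfl
  have hsurj : Function.Surjective φ := by
    intro v
    choose g hg using fun b => Ideal.Quotient.mk_surjective (v b)
    refine ⟨∑ b : Fin n, g b • B b, funext fun b => ?_⟩
    rw [hφ, ← hg b]
    congr 1
    simp [Finsupp.single_apply, Fin.val_inj]
  have hker : φ.ker = coordSubmodule B K := by
    ext x
    rw [LinearMap.mem_ker, mem_coordSubmodule, funext_iff]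
    simp only [hφ, Pi.zero_apply, Ideal.Quotient.eq_zero_iff_mem]
    refine ⟨fun h b => ?_, fun h b => h b⟩
    rcases lt_or_ge b n with hb | hb
    · exact h ⟨b, hb⟩
    · simp [hK b hb]
  rw [← hker, ((φ.quotKerEquivOfSurjective hsurj).restrictScalars k).finrank_eq,
    finrank_pi_fintype, Finset.sum_range]

end CoordSubmodule

section Doubling

open scoped Polynomial

variable {R : Type*} [CommRing R]

/-- The ideal of `b`-th coordinates of `I + (X ^ a, (X + t) ^ a)` in the basis `shiftedDickson t`:
it is `I + (t ^ (2 * (a - b) - 1))` for `b < a`, and truncated subtraction makes it the unit ideal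
for `a ≤ b`. -/
def layer (I : Ideal R) (t : R) (a b : ℕ) : Ideal R :=
  I ⊔ Ideal.span {t ^ (2 * (a - b) - 1)}

lemma layer_eq_top (I : Ideal R) (t : R) {a b : ℕ} (h : a ≤ b) : layer I t a b = ⊤ := by
  simp [layer, Nat.sub_eq_zero_of_le h]

lemma layer_le_succ (I : Ideal R) (t : R) (a b : ℕ) : layer I t a b ≤ layer I t a (b + 1) :=
  sup_le_sup_left (Ideal.span_singleton_le_span_singleton.2 (pow_dvd_pow _ (by omega))) _

lemma mul_sq_mem_layer {I : Ideal R} {t : R} {a b : ℕ} {r : R} (h : r ∈ layer I t a (b + 1)) :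
    r * t ^ 2 ∈ layer I t a b := by
  suffices layer I t a (b + 1) ≤
      Submodule.comap (LinearMap.mulRight R (t ^ 2)) (layer I t a b) from this h
  refine sup_le (fun i hi => Ideal.mem_sup_left (I.mul_mem_right _ hi)) ?_
  rw [Ideal.span_singleton_le_iff_mem]
  refine Ideal.mem_sup_right (Ideal.mem_span_singleton.2 ?_)
  rw [LinearMap.mulRight_apply, ← pow_add]
  exact pow_dvd_pow _ (by omega)

lemma shiftedDickson_mem_of_le {J : Ideal R[X]} {t : R} {s : ℕ}
    (htop : shiftedDickson t (s + 1) ∈ J) (hlow : Polynomial.C t * shiftedDickson t s ∈ J) {b : ℕ}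
    (hb : s + 1 ≤ b) : shiftedDickson t b ∈ J := by
  suffices Polynomial.C t * shiftedDickson t (b - 1) ∈ J ∧ shiftedDickson t b ∈ J from this.2
  induction b, hb using Nat.le_induction with
  | base => exact ⟨hlow, htop⟩
  | succ b hb ih =>
    obtain ⟨b, rfl⟩ : ∃ c, b = c + 1 := ⟨b - 1, by omega⟩
    refine ⟨J.mul_mem_left _ ih.2, ?_⟩
    rw [shiftedDickson_add_two, pow_two, mul_assoc (Polynomial.C t)]
    exact J.sub_mem (J.mul_mem_left _ ih.2) (J.mul_mem_left _ ih.1)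

lemma C_pow_mul_shiftedDickson_mem {J : Ideal R[X]} {t : R} {s : ℕ}
    (htop : shiftedDickson t (s + 1) ∈ J) (hlow : Polynomial.C t * shiftedDickson t s ∈ J)
    {i b : ℕ} (hib : b + i = s) :
    Polynomial.C t ^ (2 * i + 1) * shiftedDickson t b ∈ J := by
  suffices Polynomial.C t ^ (2 * i + 1) * shiftedDickson t b ∈ J ∧
      Polynomial.C t ^ (2 * i) * shiftedDickson t (b + 1) ∈ J from this.1
  induction i generalizing b with
  | zero =>
    obtain rfl : b = s := hib
    simpa using ⟨hlow, htop⟩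
  | succ i ih =>
    obtain ⟨hodd, heven⟩ := ih (b := b + 1) (by omega)
    constructor
    · convert J.sub_mem
        (J.mul_mem_left (2 * (Polynomial.X + Polynomial.C t + Polynomial.X)) hodd)
        (J.mul_mem_left (Polynomial.C t) heven) using 1
      rw [shiftedDickson_add_two]
      ring
    · convert J.mul_mem_left (Polynomial.C t) hodd using 1
      ring

section LayerIdeal

variable [IsDomain R] (h2 : IsUnit (2 : R)) (I : Ideal R) (t : R)

lemma mul_mem_coordSubmodule_layer (a : ℕ) {f : R[X]}
    (hf : f ∈ coordSubmodule (shiftedDicksonBasis h2 t) (layer I t a)) :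
    2 * (Polynomial.X + Polynomial.C t + Polynomial.X) * f ∈
      coordSubmodule (shiftedDicksonBasis h2 t) (layer I t a) := by
  set V := coordSubmodule (shiftedDicksonBasis h2 t) (layer I t a)
  have hmem {b : ℕ} {r : R} (hr : r ∈ layer I t a b) : r • shiftedDickson t b ∈ V := by
    rw [← shiftedDicksonBasis_apply h2]
    exact smul_mem_coordSubmodule _ hr
  suffices V ≤ V.comap
      (LinearMap.mulLeft R (2 * (Polynomial.X + Polynomial.C t + Polynomial.X))) from this hf
  refine coordSubmodule_le fun b r hr => ?_
  rw [Submodule.mem_comap, LinearMap.mulLeft_apply, shiftedDicksonBasis_apply, mul_smul_comm]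
  cases b with
  | zero =>
    rw [shiftedDickson_zero, ← shiftedDickson_one, mul_two, smul_add]
    exact V.add_mem (hmem (layer_le_succ _ _ _ _ hr)) (hmem (layer_le_succ _ _ _ _ hr))
  | succ b =>
    rw [sub_eq_iff_eq_add.1 (shiftedDickson_add_two t b).symm, smul_add, ← Polynomial.C_pow,
      ← Polynomial.smul_eq_C_mul, smul_smul]
    exact V.add_mem (hmem (layer_le_succ _ _ _ _ hr)) (hmem (mul_sq_mem_layer hr))

lemma X_mul_mem_coordSubmodule_layer (a : ℕ) {f : R[X]}
    (hf : f ∈ coordSubmodule (shiftedDicksonBasis h2 t) (layer I t a)) :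
    Polynomial.X * f ∈ coordSubmodule (shiftedDicksonBasis h2 t) (layer I t a) := by
  rw [← Submodule.smul_mem_iff_of_isUnit _ (h2.mul h2)]
  convert Submodule.sub_mem _ (mul_mem_coordSubmodule_layer h2 I t a hf)
    (Submodule.smul_mem _ (2 * t) hf) using 1
  simp only [Polynomial.smul_eq_C_mul, Polynomial.C_mul, Polynomial.C_ofNat]
  ring

/-- The polynomials whose coordinate at `shiftedDickson t b` lies in `layer I t a b`, an explicit
description of `I + (X ^ a, (X + t) ^ a)`. -/
noncomputable def layerIdeal (a : ℕ) : Ideal R[X] where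
  __ := coordSubmodule (shiftedDicksonBasis h2 t) (layer I t a)
  smul_mem' g f hf := by
    induction g using Polynomial.induction_on' with
    | add g₁ g₂ h₁ h₂ => rw [add_smul]; exact Submodule.add_mem _ h₁ h₂
    | monomial n c =>
      rw [← Polynomial.C_mul_X_pow_eq_monomial, mul_smul, smul_eq_mul, smul_eq_mul,
        ← Polynomial.smul_eq_C_mul]
      refine Submodule.smul_mem _ _ ?_
      induction n with
      | zero => simpa using hf
      | succ n ih => rw [pow_succ', mul_assoc]; exact X_mul_mem_coordSubmodule_layer h2 I t a ih

lemma smul_shiftedDickson_mem_layerIdeal {a b : ℕ} {r : R} (hr : r ∈ layer I t a b) :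
    r • shiftedDickson t b ∈ layerIdeal h2 I t a := by
  rw [← shiftedDicksonBasis_apply h2]
  exact smul_mem_coordSubmodule _ hr

variable {p : ℕ} [Fact p.Prime] [CharP R p] {s e : ℕ}

lemma le_layerIdeal (hs : 2 * s + 1 = p ^ e) :
    (I.map Polynomial.C ⊔ Ideal.span {Polynomial.X ^ (s + 1)}) ⊔
      Ideal.span {(Polynomial.X + Polynomial.C t) ^ (s + 1)} ≤ layerIdeal h2 I t (s + 1) := by
  have hunit : IsUnit (2 : R[X]) := h2.map Polynomial.C
  have htop : shiftedDickson t (s + 1) ∈ layerIdeal h2 I t (s + 1) := by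
    simpa using smul_shiftedDickson_mem_layerIdeal h2 I t (a := s + 1) (b := s + 1) (r := 1)
      (by simp [layer_eq_top])
  have hlow : Polynomial.C t * shiftedDickson t s ∈ layerIdeal h2 I t (s + 1) := by
    rw [← Polynomial.smul_eq_C_mul]
    refine smul_shiftedDickson_mem_layerIdeal h2 I t (Ideal.mem_sup_right ?_)
    simp
  obtain ⟨hsucc, hself⟩ := shiftedDickson_succ hs t
  refine sup_le (sup_le (Ideal.map_le_iff_le_comap.2 fun i hi => ?_) ?_) ?_
  · rw [Ideal.mem_comap, ← Ideal.unit_mul_mem_iff_mem _ hunit, mul_comm,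
      ← shiftedDickson_zero t, ← Polynomial.smul_eq_C_mul]
    exact smul_shiftedDickson_mem_layerIdeal h2 I t (Ideal.mem_sup_left hi)
  · rw [Ideal.span_singleton_le_iff_mem, ← Ideal.unit_mul_mem_iff_mem _ (hunit.mul hunit)]
    convert Ideal.sub_mem _ htop hlow using 1
    linear_combination hself - hsucc
  · rw [Ideal.span_singleton_le_iff_mem, ← Ideal.unit_mul_mem_iff_mem _ (hunit.mul hunit)]
    convert Ideal.add_mem _ htop hlow using 1
    linear_combination -hsucc - hself

lemma layerIdeal_le (hs : 2 * s + 1 = p ^ e) :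
    layerIdeal h2 I t (s + 1) ≤ (I.map Polynomial.C ⊔ Ideal.span {Polynomial.X ^ (s + 1)}) ⊔
      Ideal.span {(Polynomial.X + Polynomial.C t) ^ (s + 1)} := by
  set J := (I.map Polynomial.C ⊔ Ideal.span {Polynomial.X ^ (s + 1)}) ⊔
    Ideal.span {(Polynomial.X + Polynomial.C t) ^ (s + 1)}
  have hX : Polynomial.X ^ (s + 1) ∈ J :=
    Ideal.mem_sup_left (Ideal.mem_sup_right (Ideal.mem_span_singleton_self _))
  have hXt : (Polynomial.X + Polynomial.C t) ^ (s + 1) ∈ J :=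
    Ideal.mem_sup_right (Ideal.mem_span_singleton_self _)
  obtain ⟨hsucc, hself⟩ := shiftedDickson_succ hs t
  have htop : shiftedDickson t (s + 1) ∈ J := hsucc ▸ J.mul_mem_left _ (J.add_mem hXt hX)
  have hlow : Polynomial.C t * shiftedDickson t s ∈ J :=
    hself ▸ J.mul_mem_left _ (J.sub_mem hXt hX)
  have hgen (b : ℕ) : Polynomial.C t ^ (2 * (s + 1 - b) - 1) * shiftedDickson t b ∈ J := by
    rcases le_or_gt b s with hb | hb
    · rw [show 2 * (s + 1 - b) - 1 = 2 * (s - b) + 1 by omega]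
      exact C_pow_mul_shiftedDickson_mem htop hlow (by omega)
    · exact J.mul_mem_left _ (shiftedDickson_mem_of_le htop hlow hb)
  refine coordSubmodule_le (N := J.restrictScalars R) fun b r hr => ?_
  rw [layer, sup_comm] at hr
  obtain ⟨c, i, hi, rfl⟩ := Ideal.mem_span_singleton_sup.1 hr
  rw [Submodule.restrictScalars_mem, shiftedDicksonBasis_apply, add_smul, mul_smul,
    Polynomial.smul_eq_C_mul, Polynomial.smul_eq_C_mul, Polynomial.smul_eq_C_mul, Polynomial.C_pow]
  exact J.add_mem (J.mul_mem_left _ (hgen b))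
    (J.mul_mem_right _ (Ideal.mem_sup_left (Ideal.mem_sup_left (Ideal.mem_map_of_mem _ hi))))

end LayerIdeal

lemma finrank_quotient_sup_span_pow_succ [IsDomain R] (h2 : IsUnit (2 : R)) {p : ℕ}
    [Fact p.Prime] [CharP R p] {s e : ℕ} (hs : 2 * s + 1 = p ^ e) {k : Type*} [Field k]
    [Algebra k R] (I : Ideal R) [Module.Finite k (R ⧸ I)] (t : R) :
    finrank k (R[X] ⧸ (I.map Polynomial.C ⊔ Ideal.span {Polynomial.X ^ (s + 1)}) ⊔
        Ideal.span {(Polynomial.X + Polynomial.C t) ^ (s + 1)}) =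
      ∑ i ∈ range (s + 1), finrank k (R ⧸ I ⊔ Ideal.span {t ^ (2 * i + 1)}) := by
  have hJ := (le_layerIdeal h2 I t hs).antisymm (layerIdeal_le h2 I t hs)
  have hcoord := finrank_quotient_coordSubmodule (k := k) (shiftedDicksonBasis h2 t)
    (fun b => layer_eq_top I t (a := s + 1)) fun b => finite_quotient_of_le le_sup_left
  rw [hJ, ← sum_range_reflect]
  refine hcoord.trans (sum_congr rfl fun b hb => ?_)
  rw [layer, show 2 * (s + 1 - b) - 1 = 2 * (s + 1 - 1 - b) + 1 by
    have := mem_range.1 hb; omega]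

end Doubling

section HanMonsky

variable {k ι : Type*} [Field k] [Fintype ι]

lemma quotDim_comp_equiv_sumX_pow {κ : Type*} [Fintype κ] (e : κ ≃ ι) (β : ι → ℕ) (b : ℕ) :
    quotDim (β ∘ e) (sumX k κ ^ b) = quotDim β (sumX k ι ^ b) := by
  rw [quotDim_comp_equiv, map_pow]
  simp [sumX, e.sum_comp (fun i => (X i : MvPolynomial ι k))]

/-- The Han–Monsky function `D(s)`: the dimension of `k[x] / (x_i ^ b_i, ∑ x_i)`, where the `b_i`
are the elements of the multiset `s`. -/
noncomputable def hanMonsky (k : Type*) [Field k] (s : Multiset ℕ) : ℕ :=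
  quotDim (fun i : s.ToType => (i.1 : ℕ)) (sumX k s.ToType)

lemma hanMonsky_map_univ (β : ι → ℕ) :
    hanMonsky k (univ.val.map β) = quotDim β (sumX k ι) := by
  classical
  have hbij : Function.Bijective fun x : (univ : Finset ι).val.ToType => x.1 := by
    rw [Fintype.bijective_iff_surjective_and_card]
    refine ⟨fun i => ⟨⟨i, ⟨0, by simp⟩⟩, rfl⟩, by simp⟩
  let e : ι ≃ (univ.val.map β).ToType :=
    (Equiv.ofBijective _ hbij).symm.trans (Multiset.mapEquiv univ.val β)
  have he : β = (fun x : (univ.val.map β).ToType => x.1) ∘ e := by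
    ext i
    obtain ⟨x, rfl⟩ := hbij.2 i
    simp [e]
  simpa [← he, hanMonsky] using
    (quotDim_comp_equiv_sumX_pow (k := k) e (fun x : (univ.val.map β).ToType => x.1) 1).symm

lemma quotDim_cons_sumX_pow (b c : ℕ) (s : Multiset ℕ) :
    quotDim (fun i : (b ::ₘ s).ToType => i.1) (sumX k (b ::ₘ s).ToType ^ c) =
      quotDim (fun o : Option s.ToType => o.elim b fun i => i.1)
        (sumX k (Option s.ToType) ^ c) := by
  rw [← quotDim_comp_equiv_sumX_pow Multiset.consEquiv.symm]
  congr 1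
  ext (_ | i) <;> rfl

lemma hanMonsky_cons (b : ℕ) (s : Multiset ℕ) :
    hanMonsky k (b ::ₘ s) = quotDim (fun i : s.ToType => i.1) (sumX k s.ToType ^ b) := by
  rw [hanMonsky, ← pow_one (sumX k _), quotDim_cons_sumX_pow, pow_one, quotDim_option_elim_sumX]

lemma pos_of_zero_notMem {s : Multiset ℕ} (hs : 0 ∉ s) (i : s.ToType) : 0 < (i.1 : ℕ) :=
  Nat.pos_of_ne_zero fun h => hs (h ▸ Multiset.coe_mem)

lemma hanMonsky_cons_le_prod {s : Multiset ℕ} (hs : 0 ∉ s) (b : ℕ) :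
    hanMonsky k (b ::ₘ s) ≤ s.prod := by
  rw [hanMonsky_cons, Multiset.prod_eq_prod_coe]
  exact quotDim_le_prod (pos_of_zero_notMem hs) _

lemma hanMonsky_cons_mono {s : Multiset ℕ} (hs : 0 ∉ s) :
    Monotone fun b => hanMonsky k (b ::ₘ s) := by
  intro b c hbc
  have := finite_quotient_powerIdeal_sup (k := k) (pos_of_zero_notMem hs)
    (Ideal.span {sumX k s.ToType ^ c})
  simp only [hanMonsky_cons]
  exact finrank_quotient_le_of_le (sup_le_sup_left
    (Ideal.span_singleton_le_span_singleton.2 (pow_dvd_pow _ hbc)) _)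

lemma mul_hanMonsky_cons_le {s : Multiset ℕ} (hs : 0 ∉ s) {b c : ℕ} (hbc : b ≤ c) :
    b * hanMonsky k (c ::ₘ s) ≤ c * hanMonsky k (b ::ₘ s) := by
  have := finite_quotient_powerIdeal (k := k) (pos_of_zero_notMem hs)
  rw [hanMonsky_cons, hanMonsky_cons]
  exact mul_finrank_quotient_sup_span_pow_le _ _ hbc

lemma hanMonsky_map_mul {p : ℕ} [Fact p.Prime] [CharP k p] (b : ℕ) {s : Multiset ℕ}
    (hs : 0 ∉ s) :
    hanMonsky k ((b ::ₘ s).map (p * ·)) = p ^ s.card * hanMonsky k (b ::ₘ s) := by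
  have hexpand : expandEach (fun _ => p) (sumX k s.ToType ^ b) = sumX k s.ToType ^ (p * b) := by
    rw [map_pow, pow_mul, sumX, sum_pow_char, map_sum]
    simp
  have hscale : (fun i : (s.map (p * ·)).ToType => i.1) ∘ s.mapEquiv (p * ·) =
      (fun _ => p) * fun i => i.1 := by
    ext i
    simp
  rw [Multiset.map_cons, hanMonsky_cons, hanMonsky_cons,
    ← quotDim_comp_equiv_sumX_pow (s.mapEquiv (p * ·)), hscale, ← hexpand,
    quotDim_expandEach (fun _ => (Fact.out : p.Prime).pos) (pos_of_zero_notMem hs)]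
  simp

lemma hanMonsky_cons_cons_self {p : ℕ} [Fact p.Prime] (hp : p ≠ 2) [CharP k p] {a e : ℕ}
    (ha : 2 * a = p ^ e + 1) {s : Multiset ℕ} (hs : 0 ∉ s) :
    hanMonsky k (a ::ₘ a ::ₘ s) = ∑ i ∈ range a, hanMonsky k ((2 * i + 1) ::ₘ s) := by
  obtain ⟨r, rfl⟩ : ∃ r, a = r + 1 := ⟨a - 1, by omega⟩
  have h2 : IsUnit (2 : MvPolynomial s.ToType k) :=
    (Ring.two_ne_zero (CharP.ringChar_of_prime_eq_zero Fact.out (CharP.cast_eq_zero k p) ▸ hp :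
      ringChar k ≠ 2)).isUnit.map C
  have := finite_quotient_powerIdeal (k := k) (pos_of_zero_notMem hs)
  rw [hanMonsky_cons, quotDim_cons_sumX_pow, quotDim_option_elim, map_pow, optionEquivLeft_sumX,
    finrank_quotient_sup_span_pow_succ h2 (p := p) (e := e) (by omega)]
  simp only [hanMonsky_cons, quotDim]

lemma hanMonsky_pair_self {b : ℕ} (hb : 0 < b) : hanMonsky k {b, b} = b := by
  have hpair : ({b, b} : Multiset ℕ) = univ.val.map fun o : Option Unit => o.elim b fun _ => b :=
    rfl
  have hsumX : sumX k Unit ^ b = X () ^ b := by simp [sumX]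
  have hmem : Ideal.span {X () ^ b} ≤ powerIdeal k fun _ : Unit => b :=
    (Ideal.span_singleton_le_iff_mem _).2 (X_pow_mem_powerIdeal _ ())
  rw [hpair, hanMonsky_map_univ, quotDim_option_elim_sumX, quotDim, hsumX, sup_eq_left.2 hmem,
    finrank_quotient_powerIdeal fun _ => hb]
  simp

end HanMonsky

section Limit

open Filter Topology

lemma exists_tendsto_of_succ_le_mul {u : ℕ → ℕ} {c : ℕ} (hc : 0 < c)
    (h : ∀ e, u (e + 1) ≤ c * u e) :
    ∃ L : ℝ, Tendsto (fun e => (u e : ℝ) / (c : ℝ) ^ e) atTop (𝓝 L) := by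
  refine ⟨_, tendsto_atTop_ciInf (antitone_nat_of_succ_le fun e => ?_)
    ⟨0, Set.forall_mem_range.2 fun e => by positivity⟩⟩
  rw [div_le_div_iff₀ (by positivity) (by positivity), pow_succ']
  exact_mod_cast (Nat.mul_le_mul_right (c ^ e) (h e)).trans_eq (by ring)

lemma pow_succ_ceilDiv_le (p e : ℕ) {r : ℕ} (hr : 0 < r) :
    p ^ (e + 1) ⌈/⌉ r ≤ p * (p ^ e ⌈/⌉ r) := by
  rw [ceilDiv_le_iff_le_mul hr, pow_succ', mul_left_comm]
  exact Nat.mul_le_mul_left p (le_smul_ceilDiv hr)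

lemma ceilDiv_pos {q r : ℕ} (hq : 0 < q) (hr : 0 < r) : 0 < q ⌈/⌉ r :=
  Nat.pos_of_ne_zero fun h => hq.not_ge (by simpa [h] using le_smul_ceilDiv (b := q) hr)

lemma mul_ceilDiv_le_add (q : ℕ) {r : ℕ} (hr : 0 < r) : r * (q ⌈/⌉ r) ≤ q + r := by
  rw [Nat.ceilDiv_eq_add_pred_div]
  exact (Nat.mul_div_le _ _).trans (by omega)

lemma tendsto_mul_ceilDiv_div {q : ℕ → ℕ} (hq : Tendsto q atTop atTop) {r : ℕ} (hr : 0 < r) :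
    Tendsto (fun e => (r * (q e ⌈/⌉ r) : ℝ) / q e) atTop (𝓝 1) := by
  have hupper : Tendsto (fun e => 1 + (r : ℝ) / q e) atTop (𝓝 1) := by
    simpa using ((tendsto_natCast_atTop_atTop.comp hq).const_div_atTop (r : ℝ)).const_add 1
  have hq0 : ∀ᶠ e in atTop, (0 : ℝ) < q e := by
    filter_upwards [hq.eventually_gt_atTop 0] with e he using mod_cast he
  refine tendsto_of_tendsto_of_tendsto_of_le_of_le' tendsto_const_nhds hupper ?_ ?_
  · filter_upwards [hq0] with e he
    rw [one_le_div he]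
    exact_mod_cast le_smul_ceilDiv hr
  · filter_upwards [hq0] with e he
    rw [div_le_iff₀ he, one_add_mul, div_mul_cancel₀ _ he.ne']
    exact_mod_cast mul_ceilDiv_le_add (q e) hr

variable {k ι : Type*} [Field k] [Fintype ι] {r : ι → ℕ}

lemma expandEach_sumX (r : ι → ℕ) : expandEach r (sumX k ι) = ∑ i, X i ^ r i := by
  simp [sumX]

lemma quotDim_diagonal_mul {β : ι → ℕ} (hr : ∀ i, 0 < r i) (hβ : ∀ i, 0 < β i) :
    quotDim (r * β) (∑ i, X i ^ r i : MvPolynomial ι k) = (∏ i, r i) * quotDim β (sumX k ι) := by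
  rw [← expandEach_sumX, quotDim_expandEach hr hβ]

-- With `γ i = r i * ⌈q / r i⌉ ≥ q`, the dimensions for the exponents `γ` and `q` agree
-- asymptotically, and the former is `∏ r i` times the dimension for the linear form.
lemma tendsto_quotDim_diagonal {p : ℕ} (hp : 1 < p) {d : ℕ} (hr : ∀ i, 0 < r i) {L : ℝ}
    (hL : Tendsto
      (fun e => (quotDim (fun i => p ^ e ⌈/⌉ r i) (sumX k ι) : ℝ) / (p : ℝ) ^ (d * e))
      atTop (𝓝 L)) :
    Tendsto (fun e => (quotDim (fun _ => p ^ e) (∑ i, X i ^ r i : MvPolynomial ι k) : ℝ) /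
      (p : ℝ) ^ (d * e)) atTop (𝓝 ((∏ i, (r i : ℝ)) * L)) := by
  have hq : Tendsto (fun e => p ^ e) atTop atTop := tendsto_pow_atTop_atTop_of_one_lt hp
  have hγ (e : ℕ) : (fun _ => p ^ e) ≤ r * fun i => p ^ e ⌈/⌉ r i := fun i =>
    le_smul_ceilDiv (hr i)
  have hβ (e : ℕ) (i : ι) : 0 < p ^ e ⌈/⌉ r i := ceilDiv_pos (by positivity) (hr i)
  have hratio : Tendsto (fun e => ∏ i, (r i * (p ^ e ⌈/⌉ r i : ℕ) : ℝ) / (p ^ e : ℕ)) atTop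
      (𝓝 1) := by
    simpa using tendsto_finsetProd univ fun i _ => tendsto_mul_ceilDiv_div hq (hr i)
  have hlower := (hL.const_mul (∏ i, (r i : ℝ))).div hratio one_ne_zero
  rw [div_one] at hlower
  refine tendsto_of_tendsto_of_tendsto_of_le_of_le hlower (hL.const_mul _) (fun e => ?_)
    (fun e => ?_)
  · have hcompare := prod_mul_quotDim_le (fun _ => pow_pos (zero_lt_one.trans hp) e) (hγ e)
      (∑ i, X i ^ r i : MvPolynomial ι k)
    rw [quotDim_diagonal_mul hr (hβ e)] at hcompare
    have hprod : 0 < ∏ i, (r i * (p ^ e ⌈/⌉ r i : ℕ) : ℝ) :=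
      prod_pos fun i _ => by exact_mod_cast Nat.mul_pos (hr i) (hβ e i)
    simp only [Pi.div_apply, prod_div_distrib]
    rw [mul_div_assoc', div_div_eq_mul_div, div_mul_eq_mul_div, div_right_comm]
    gcongr
    rw [div_le_iff₀ hprod, mul_comm, mul_comm (quotDim _ _ : ℝ)]
    exact_mod_cast hcompare
  · rw [mul_div_assoc']
    gcongr
    exact_mod_cast (quotDim_mono (fun i => Nat.mul_pos (hr i) (hβ e i)) (hγ e) _).trans_eq
      (quotDim_diagonal_mul hr (hβ e))

variable {p : ℕ} [Fact p.Prime] [CharP k p] {d : ℕ}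

lemma quotDim_mul_sumX (hι : Fintype.card ι = d + 1) {β : ι → ℕ} (hβ : ∀ i, 0 < β i) :
    quotDim (fun i => p * β i) (sumX k ι) = p ^ d * quotDim β (sumX k ι) := by
  obtain ⟨b, hb⟩ := Multiset.card_pos_iff_exists_mem.1
    (by simp [hι] : 0 < (univ.val.map β).card)
  obtain ⟨s, hs⟩ := Multiset.exists_cons_of_mem hb
  have hs0 : 0 ∉ s := fun h0 => by
    obtain ⟨i, -, hi⟩ := Multiset.mem_map.1 (hs ▸ Multiset.mem_cons_of_mem h0)
    exact (hβ i).ne' hi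
  have hcard : s.card = d := by simpa [hι] using (congrArg Multiset.card hs).symm
  have hmap : univ.val.map (fun i => p * β i) = (b ::ₘ s).map (p * ·) := by
    rw [← hs, Multiset.map_map]
    rfl
  rw [← hanMonsky_map_univ, hmap, hanMonsky_map_mul b hs0, ← hs, hanMonsky_map_univ, hcard]

lemma exists_tendsto_quotDim_ceilDiv (k : Type*) [Field k] (p : ℕ) [Fact p.Prime] [CharP k p]
    (hι : Fintype.card ι = d + 1) (hr : ∀ i, 0 < r i) :
    ∃ L : ℝ, Tendsto
      (fun e => (quotDim (fun i => p ^ e ⌈/⌉ r i) (sumX k ι) : ℝ) / (p : ℝ) ^ (d * e))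
      atTop (𝓝 L) := by
  have hp : 0 < p := (Fact.out : p.Prime).pos
  have hβ (e : ℕ) (i : ι) : 0 < p ^ e ⌈/⌉ r i := ceilDiv_pos (pow_pos hp e) (hr i)
  simp only [pow_mul, ← Nat.cast_pow p d]
  refine exists_tendsto_of_succ_le_mul (pow_pos hp d) fun e => ?_
  rw [← quotDim_mul_sumX hι (hβ e)]
  exact quotDim_mono (fun i => Nat.mul_pos hp (hβ e i))
    (fun i => pow_succ_ceilDiv_le p e (hr i)) _

end Limit

section Gap

open Filter

lemma ceilDiv_le_ceilDiv_of_le (q : ℕ) {r t : ℕ} (hr : 0 < r) (h : r ≤ t) :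
    q ⌈/⌉ t ≤ q ⌈/⌉ r := by
  rw [ceilDiv_le_iff_le_mul (hr.trans_le h)]
  exact (le_smul_ceilDiv hr).trans (Nat.mul_le_mul_right _ h)

lemma two_mul_ceilDiv_two {q : ℕ} (hq : Odd q) : 2 * (q ⌈/⌉ 2) = q + 1 := by
  obtain ⟨r, rfl⟩ := hq
  rw [Nat.ceilDiv_eq_add_pred_div]
  omega

lemma tendsto_pow_ceilDiv_two {p : ℕ} (hp : 1 < p) :
    Tendsto (fun e => ((p ^ e ⌈/⌉ 2 : ℕ) : ℝ)) atTop atTop := by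
  have hdiv : Tendsto (fun e => (p : ℝ) ^ e / 2) atTop atTop :=
    (tendsto_pow_atTop_atTop_of_one_lt (mod_cast hp)).atTop_div_const two_pos
  refine tendsto_atTop_mono (fun e => ?_) hdiv
  rw [div_le_iff₀ two_pos, mul_comm]
  exact_mod_cast le_smul_ceilDiv (b := p ^ e) two_pos

lemma sub_mul_le_of_succ_le_add {f : ℕ → ℝ} {L : ℝ} (hlip : ∀ c, 0 < c → f (c + 1) ≤ f c + L)
    {c : ℕ} (hc : 0 < c) (j : ℕ) : f (c + j) - j * L ≤ f c := by
  induction j with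
  | zero => simp
  | succ j ih =>
    have hstep := hlip (c + j) (by omega)
    rw [← add_assoc]
    push_cast
    linarith

-- The Lipschitz bound keeps `f` above `H / 2` on a window of length `H / (2 * L)` ending at `c₀`.
lemma sq_le_mul_sum_odd {f : ℕ → ℝ} {L H : ℝ} (hL : 0 < L) (hpos : ∀ c, 0 < c → 0 ≤ f c)
    (hlip : ∀ c, 0 < c → f (c + 1) ≤ f c + L) {c₀ a : ℕ} (hc₀ : c₀ ≤ a) (hH : 0 ≤ H)
    (hf : H ≤ f c₀) (hle : H ≤ L * c₀) :
    H ^ 2 ≤ 8 * L * (∑ i ∈ range a, f (2 * i + 1) + H / 2) := by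
  obtain ⟨n, hn⟩ : ∃ n, n = ⌊H / (4 * L)⌋₊ := ⟨_, rfl⟩
  have hn_le : n * (4 * L) ≤ H := by
    rw [← le_div_iff₀ (by positivity), hn]
    exact Nat.floor_le (by positivity)
  have hn_lt : H < (n + 1) * (4 * L) := by
    rw [← div_lt_iff₀ (by positivity), hn]
    exact Nat.lt_floor_add_one _
  have hn_c₀ : 4 * n ≤ c₀ := by
    have : L * (4 * n) ≤ L * c₀ := by linarith
    exact_mod_cast le_of_mul_le_mul_left this hL
  have hsum : n * (H / 2) ≤ ∑ i ∈ range a, f (2 * i + 1) := calc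
    n * (H / 2) = ∑ i ∈ Ico ((c₀ + 1) / 2 - n) ((c₀ + 1) / 2), H / 2 := by
      rw [sum_const, Nat.card_Ico, nsmul_eq_mul, Nat.sub_sub_self (by omega)]
    _ ≤ ∑ i ∈ Ico ((c₀ + 1) / 2 - n) ((c₀ + 1) / 2), f (2 * i + 1) := by
      refine sum_le_sum fun i hi => ?_
      obtain ⟨hi_ge, hi_lt⟩ := mem_Ico.1 hi
      have hdist : ((c₀ - (2 * i + 1) : ℕ) : ℝ) ≤ 2 * n := by
        exact_mod_cast (by omega : c₀ - (2 * i + 1) ≤ 2 * n)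
      have := sub_mul_le_of_succ_le_add hlip (c := 2 * i + 1) (by omega) (c₀ - (2 * i + 1))
      rw [Nat.add_sub_cancel' (by omega)] at this
      nlinarith
    _ ≤ ∑ i ∈ range a, f (2 * i + 1) := by
      refine sum_le_sum_of_subset_of_nonneg (fun i hi => ?_) fun i _ _ => hpos _ (by omega)
      simp only [mem_Ico, mem_range] at hi ⊢
      omega
  nlinarith

variable {k : Type*} [Field k] {N q b c : ℕ} {s : Multiset ℕ}

lemma hanMonsky_cons_cons_le (hb : 0 < b) (hs : 0 ∉ s) :
    hanMonsky k (c ::ₘ b ::ₘ s) ≤ b * s.prod := by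
  rw [← Multiset.prod_cons]
  exact hanMonsky_cons_le_prod (by simp [hs, hb.ne]) c

lemma hanMonsky_succ_cons_cons_le (hb : 0 < b) (hc : 0 < c) (hs : 0 ∉ s) :
    hanMonsky k ((c + 1) ::ₘ b ::ₘ s) ≤ hanMonsky k (c ::ₘ b ::ₘ s) + s.prod := by
  have hratio := mul_hanMonsky_cons_le (k := k) (s := b ::ₘ s) (by simp [hs, hb.ne])
    (Nat.le_succ c)
  have hbound : hanMonsky k (c ::ₘ b ::ₘ s) ≤ c * s.prod := by
    rw [Multiset.cons_swap]
    exact hanMonsky_cons_cons_le hc hs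
  exact Nat.le_of_mul_le_mul_left (by linarith) hc

/-- The comparison of `∑ x_i ^ 2 + y ^ N` with `∑ x_i ^ 2 + y ^ 2` at the exponent `q`: when `s`
consists of `d` copies of `⌈q / 2⌉`, the difference of their Hilbert–Kunz multiplicities is the
limit of `2 ^ d * gap k N q s / q ^ d`. -/
noncomputable def gap (k : Type*) [Field k] (N q : ℕ) (s : Multiset ℕ) : ℝ :=
  N * hanMonsky k ((q ⌈/⌉ N) ::ₘ s) - 2 * hanMonsky k ((q ⌈/⌉ 2) ::ₘ s)

lemma gap_cons_le (hc : 0 < c) (hs : 0 ∉ s) : gap k N q (c ::ₘ s) ≤ N * s.prod * c := by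
  have hbound := hanMonsky_cons_cons_le (k := k) (c := q ⌈/⌉ N) hc hs
  calc gap k N q (c ::ₘ s) ≤ N * hanMonsky k ((q ⌈/⌉ N) ::ₘ c ::ₘ s) :=
        sub_le_self _ (by positivity)
    _ ≤ N * (c * s.prod : ℕ) := by gcongr
    _ = N * s.prod * c := by push_cast; ring

lemma gap_cons_add_prod_nonneg (hN : 2 ≤ N) (hq : Odd q) (hc : 0 < c) (hs : 0 ∉ s) :
    0 ≤ gap k N q (c ::ₘ s) + s.prod := by
  have ha := two_mul_ceilDiv_two hq
  have hNm : q ≤ N * (q ⌈/⌉ N) := le_smul_ceilDiv (zero_lt_two.trans_le hN)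
  have hratio := mul_hanMonsky_cons_le (k := k) (s := c ::ₘ s) (by simp [hs, hc.ne])
    (ceilDiv_le_ceilDiv_of_le q two_pos hN)
  have hbound : hanMonsky k ((q ⌈/⌉ 2) ::ₘ c ::ₘ s) ≤ (q ⌈/⌉ 2) * s.prod := by
    rw [Multiset.cons_swap]
    exact hanMonsky_cons_cons_le (by omega) hs
  rw [gap]
  generalize q ⌈/⌉ 2 = a at *
  generalize q ⌈/⌉ N = m at *
  have hscaled : 2 * a * hanMonsky k (a ::ₘ c ::ₘ s) ≤
      a * (N * hanMonsky k (m ::ₘ c ::ₘ s) + s.prod) := calc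
    2 * a * hanMonsky k (a ::ₘ c ::ₘ s)
      = q * hanMonsky k (a ::ₘ c ::ₘ s) + hanMonsky k (a ::ₘ c ::ₘ s) := by rw [ha]; ring
    _ ≤ N * m * hanMonsky k (a ::ₘ c ::ₘ s) + a * s.prod := by gcongr
    _ = N * (m * hanMonsky k (a ::ₘ c ::ₘ s)) + a * s.prod := by ring
    _ ≤ N * (a * hanMonsky k (m ::ₘ c ::ₘ s)) + a * s.prod := by gcongr
    _ = a * (N * hanMonsky k (m ::ₘ c ::ₘ s) + s.prod) := by ring
  have hcompare : 2 * hanMonsky k (a ::ₘ c ::ₘ s) ≤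
      N * hanMonsky k (m ::ₘ c ::ₘ s) + s.prod :=
    Nat.le_of_mul_le_mul_left (by linarith) (by omega : 0 < a)
  have : (2 * hanMonsky k (a ::ₘ c ::ₘ s) : ℝ) ≤
      N * hanMonsky k (m ::ₘ c ::ₘ s) + s.prod := mod_cast hcompare
  linarith

lemma gap_succ_cons_le (hN : 0 < N) (hq : 0 < q) (hc : 0 < c) (hs : 0 ∉ s) :
    gap k N q ((c + 1) ::ₘ s) ≤ gap k N q (c ::ₘ s) + N * s.prod := by
  have hlip := hanMonsky_succ_cons_cons_le (k := k) (ceilDiv_pos hq hN) hc hs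
  have hmono := hanMonsky_cons_mono (k := k) (s := (q ⌈/⌉ 2) ::ₘ s)
    (by simp [hs, (ceilDiv_pos hq two_pos).ne]) (Nat.le_succ c)
  rw [gap, gap, Multiset.cons_swap _ (c + 1), Multiset.cons_swap _ (c + 1),
    Multiset.cons_swap _ c, Multiset.cons_swap _ c]
  have hlip' : (hanMonsky k ((c + 1) ::ₘ (q ⌈/⌉ N) ::ₘ s) : ℝ) ≤
      hanMonsky k (c ::ₘ (q ⌈/⌉ N) ::ₘ s) + s.prod := mod_cast hlip
  have hmono' : (hanMonsky k (c ::ₘ (q ⌈/⌉ 2) ::ₘ s) : ℝ) ≤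
      hanMonsky k ((c + 1) ::ₘ (q ⌈/⌉ 2) ::ₘ s) := mod_cast hmono
  nlinarith [mul_le_mul_of_nonneg_left hlip' N.cast_nonneg]

variable {p e : ℕ} [Fact p.Prime] [CharP k p]

lemma gap_cons_cons_half (hp : p ≠ 2) (hN : 0 < N) (hs : 0 ∉ s) :
    gap k N (p ^ e) ((p ^ e ⌈/⌉ 2) ::ₘ (p ^ e ⌈/⌉ 2) ::ₘ s) =
      ∑ i ∈ range (p ^ e ⌈/⌉ 2), gap k N (p ^ e) ((2 * i + 1) ::ₘ s) := by
  have hprime : p.Prime := Fact.out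
  have ha := two_mul_ceilDiv_two ((hprime.odd_of_ne_two hp).pow (n := e))
  have hdouble {b : ℕ} (hb : 0 < b) :
      hanMonsky k (b ::ₘ (p ^ e ⌈/⌉ 2) ::ₘ (p ^ e ⌈/⌉ 2) ::ₘ s) =
        ∑ i ∈ range (p ^ e ⌈/⌉ 2), hanMonsky k (b ::ₘ (2 * i + 1) ::ₘ s) := by
    simp only [Multiset.cons_swap b]
    exact hanMonsky_cons_cons_self hp ha (by simp [hs, hb.ne])
  simp only [gap, hdouble (ceilDiv_pos (pow_pos hprime.pos e) hN),
    hdouble (ceilDiv_pos (pow_pos hprime.pos e) two_pos)]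
  push_cast
  rw [sum_sub_distrib, mul_sum, mul_sum]

lemma sq_gap_le (hp : p ≠ 2) (hN : 2 ≤ N) (hc : 0 < c) (hca : c ≤ p ^ e ⌈/⌉ 2) (hs : 0 ∉ s)
    (h : 0 ≤ gap k N (p ^ e) (c ::ₘ s)) :
    gap k N (p ^ e) (c ::ₘ s) ^ 2 ≤ 8 * (N * s.prod) *
      (gap k N (p ^ e) ((p ^ e ⌈/⌉ 2) ::ₘ (p ^ e ⌈/⌉ 2) ::ₘ s) +
        (N + 1) * (p ^ e ⌈/⌉ 2 : ℕ) * s.prod) := by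
  have hodd : Odd (p ^ e) := ((Fact.out : p.Prime).odd_of_ne_two hp).pow
  have hprod : 0 < s.prod := Nat.pos_of_ne_zero (Multiset.prod_ne_zero hs)
  have hle := gap_cons_le (k := k) (N := N) (q := p ^ e) hc hs
  have hsum := sq_le_mul_sum_odd (f := fun c => gap k N (p ^ e) (c ::ₘ s) + s.prod)
    (L := N * s.prod) (by positivity) (fun c hc => gap_cons_add_prod_nonneg hN hodd hc hs)
    (fun c hc => by linarith [gap_succ_cons_le (k := k) (by omega : 0 < N) hodd.pos hc hs])
    hca h (le_add_of_nonneg_right (Nat.cast_nonneg _)) hle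
  rw [sum_add_distrib, ← gap_cons_cons_half hp (by omega) hs, sum_const, card_range,
    nsmul_eq_mul] at hsum
  have hca' : (N * s.prod * c : ℝ) ≤ N * s.prod * (p ^ e ⌈/⌉ 2 : ℕ) := by gcongr
  exact hsum.trans (mul_le_mul_of_nonneg_left (by linarith) (by positivity))

lemma sq_mul_pow_le_of_sq_le {ε a g M : ℝ} {n : ℕ} (ha : 0 < a)
    (hlarge : 16 * M * (M + 1) ≤ a * ε ^ 2)
    (hsq : (ε * a ^ (n + 1)) ^ 2 ≤ 8 * (M * a ^ n) * (g + (M + 1) * a * a ^ n)) :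
    ε ^ 2 * a ^ (n + 2) ≤ g * (16 * M) := by
  have hcancel : ε ^ 2 * a ^ 2 * a ^ n ≤ 8 * M * (g + (M + 1) * a * a ^ n) :=
    le_of_mul_le_mul_left ((by ring : _ = (ε * a ^ (n + 1)) ^ 2).le.trans
      (hsq.trans_eq (by ring))) (pow_pos ha n)
  have herror := mul_le_mul_of_nonneg_right hlarge (by positivity : 0 ≤ a * a ^ n)
  rw [pow_add]
  linarith

lemma exists_le_gap_replicate_add_two (hp : p ≠ 2) (hN : 2 ≤ N) {n : ℕ} {c : ℕ → ℕ}
    (hc : ∀ e, 0 < c e) (hca : ∀ e, c e ≤ p ^ e ⌈/⌉ 2) {ε : ℝ} (hε : 0 < ε)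
    (h : ∀ᶠ e in atTop, ε * (p ^ e ⌈/⌉ 2 : ℕ) ^ (n + 1) ≤
      gap k N (p ^ e) (c e ::ₘ Multiset.replicate n (p ^ e ⌈/⌉ 2))) :
    ∃ δ > 0, ∀ᶠ e in atTop, δ * (p ^ e ⌈/⌉ 2 : ℕ) ^ (n + 2) ≤
      gap k N (p ^ e) (Multiset.replicate (n + 2) (p ^ e ⌈/⌉ 2)) := by
  have : (0 : ℝ) < N := by exact_mod_cast zero_lt_two.trans_le hN
  have hlarge := (tendsto_pow_ceilDiv_two (Fact.out : p.Prime).one_lt).eventually_ge_atTop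
    (16 * N * (N + 1) / ε ^ 2)
  refine ⟨ε ^ 2 / (16 * N), by positivity, ?_⟩
  filter_upwards [h, hlarge] with e hgap he
  have ha : 0 < p ^ e ⌈/⌉ 2 := (hc e).trans_le (hca e)
  have hsq := sq_gap_le (k := k) hp hN (hc e) (hca e)
    (s := Multiset.replicate n (p ^ e ⌈/⌉ 2)) (by simp [Multiset.mem_replicate, ha.ne])
    ((by positivity : (0 : ℝ) ≤ _).trans hgap)
  replace hsq := (pow_le_pow_left₀ (by positivity) hgap 2).trans hsq
  rw [← Multiset.replicate_succ, ← Multiset.replicate_succ, Multiset.prod_replicate] at hsq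
  rw [div_le_iff₀ (by positivity)] at he
  rw [div_mul_eq_mul_div, div_le_iff₀ (by positivity)]
  push_cast at hsq
  exact sq_mul_pow_le_of_sq_le (mod_cast ha) he hsq

lemma div_le_gap_singleton (hN : 3 ≤ N) (hq : 0 < q) :
    ((q ⌈/⌉ 2 : ℕ) : ℝ) / N ≤ gap k N q {q ⌈/⌉ N} := by
  have hm := ceilDiv_pos hq (by omega : 0 < N)
  have hself : hanMonsky k ((q ⌈/⌉ N) ::ₘ {q ⌈/⌉ N}) = q ⌈/⌉ N := hanMonsky_pair_self hm
  have hle : hanMonsky k ((q ⌈/⌉ 2) ::ₘ {q ⌈/⌉ N}) ≤ q ⌈/⌉ N := by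
    simpa using hanMonsky_cons_le_prod (k := k) (s := {q ⌈/⌉ N}) (by simpa using hm.ne) (q ⌈/⌉ 2)
  have haN : q ⌈/⌉ 2 ≤ N * (q ⌈/⌉ N) := by
    rw [ceilDiv_le_iff_le_mul two_pos]
    have : q ≤ N * (q ⌈/⌉ N) := le_smul_ceilDiv (by omega : 0 < N)
    omega
  have hNR : (3 : ℝ) ≤ N := mod_cast hN
  have hleR : (hanMonsky k ((q ⌈/⌉ 2) ::ₘ {q ⌈/⌉ N}) : ℝ) ≤ (q ⌈/⌉ N : ℕ) := mod_cast hle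
  calc ((q ⌈/⌉ 2 : ℕ) : ℝ) / N ≤ (q ⌈/⌉ N : ℕ) := by
        rw [div_le_iff₀' (by linarith)]
        exact_mod_cast haN
    _ ≤ gap k N q {q ⌈/⌉ N} := by
        rw [gap, hself]
        nlinarith [(Nat.cast_nonneg (q ⌈/⌉ N) : (0 : ℝ) ≤ _)]

lemma exists_le_gap_replicate (hp : p ≠ 2) (hN : 3 ≤ N) {d : ℕ} (hd : 2 ≤ d) :
    ∃ ε > 0, ∀ᶠ e in atTop, ε * (p ^ e ⌈/⌉ 2 : ℕ) ^ d ≤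
      gap k N (p ^ e) (Multiset.replicate d (p ^ e ⌈/⌉ 2)) := by
  have hq (e : ℕ) : 0 < p ^ e := pow_pos (Fact.out : p.Prime).pos e
  induction d, hd using Nat.le_induction with
  | base =>
    refine exists_le_gap_replicate_add_two (n := 0) hp (by omega)
      (fun e => ceilDiv_pos (hq e) (by omega : 0 < N))
      (fun e => ceilDiv_le_ceilDiv_of_le (p ^ e) two_pos (by omega))
      (ε := (N : ℝ)⁻¹) (by positivity)
      (Eventually.of_forall fun e => ?_)
    simpa [div_eq_inv_mul] using div_le_gap_singleton hN (hq e)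
  | succ d hd ih =>
    obtain ⟨n, rfl⟩ : ∃ n, d = n + 1 := ⟨d - 1, by omega⟩
    obtain ⟨ε, hε, h⟩ := ih
    exact exists_le_gap_replicate_add_two hp (by omega) (fun e => ceilDiv_pos (hq e) two_pos)
      (fun _ => le_rfl) hε h

end Gap

section Multiplicity

open Filter Topology

lemma map_univ_snoc (d : ℕ) (g : ℕ → ℕ) (r N : ℕ) :
    univ.val.map (fun i => g (Fin.snoc (α := fun _ => ℕ) (fun _ : Fin d => r) N i)) =
      g N ::ₘ Multiset.replicate d (g r) := by
  rw [Fin.univ_castSuccEmb, cons_val, Multiset.map_cons, map_val, Multiset.map_map]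
  simp [Multiset.map_const', Function.comp_def]

lemma exists_tendsto_hanMonsky_HKfun (k : Type*) [Field k] (p : ℕ) [Fact p.Prime] [CharP k p]
    {N : ℕ} (hN : 0 < N) (d : ℕ) :
    ∃ L : ℝ,
      Tendsto (fun e => (hanMonsky k ((p ^ e ⌈/⌉ N) ::ₘ Multiset.replicate d (p ^ e ⌈/⌉ 2)) : ℝ) /
        (p : ℝ) ^ (d * e)) atTop (𝓝 L) ∧
      Tendsto (fun e => (HKfun k (d + 1) p e
        ((∑ i : Fin d, X i.castSucc ^ 2) + X (Fin.last d) ^ N) : ℝ) / (p : ℝ) ^ (d * e))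
        atTop (𝓝 (2 ^ d * N * L)) := by
  have hr (i) : 0 < Fin.snoc (α := fun _ => ℕ) (fun _ : Fin d => 2) N i := by
    refine Fin.lastCases ?_ (fun i => ?_) i <;> simp [hN]
  obtain ⟨L, hL⟩ := exists_tendsto_quotDim_ceilDiv k p (Fintype.card_fin (d + 1)) hr
  have hHK := tendsto_quotDim_diagonal (Fact.out : p.Prime).one_lt hr hL
  simp only [Fin.sum_univ_castSucc, Fin.prod_univ_castSucc, Fin.snoc_castSucc, Fin.snoc_last,
    ← HKfun_eq_quotDim] at hHK
  simp only [← hanMonsky_map_univ, map_univ_snoc] at hL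
  exact ⟨L, hL, by simpa using hHK⟩

lemma two_mul_lt_mul_of_tendsto {k : Type*} [Field k] {p : ℕ} [Fact p.Prime] [CharP k p]
    (hp : p ≠ 2) {N : ℕ} (hN : 3 ≤ N) {d : ℕ} (hd : 2 ≤ d) {L L₂ : ℝ}
    (hL : Tendsto (fun e => (hanMonsky k ((p ^ e ⌈/⌉ N) ::ₘ
      Multiset.replicate d (p ^ e ⌈/⌉ 2)) : ℝ) / (p : ℝ) ^ (d * e)) atTop (𝓝 L))
    (hL₂ : Tendsto (fun e => (hanMonsky k ((p ^ e ⌈/⌉ 2) ::ₘ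
      Multiset.replicate d (p ^ e ⌈/⌉ 2)) : ℝ) / (p : ℝ) ^ (d * e)) atTop (𝓝 L₂)) :
    2 * L₂ < N * L := by
  obtain ⟨ε, hε, hgap⟩ := exists_le_gap_replicate (k := k) hp hN hd
  have hlim := (hL.const_mul (N : ℝ)).sub (hL₂.const_mul 2)
  suffices ε / 2 ^ d ≤ N * L - 2 * L₂ by linarith [(by positivity : 0 < ε / 2 ^ d)]
  refine ge_of_tendsto hlim (hgap.mono fun e he => ?_)
  have hp0 : (0 : ℝ) < p := mod_cast (Fact.out : p.Prime).pos
  have hhalf : (p : ℝ) ^ e / 2 ≤ (p ^ e ⌈/⌉ 2 : ℕ) := by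
    rw [div_le_iff₀' two_pos]
    exact_mod_cast le_smul_ceilDiv (b := p ^ e) two_pos
  rw [mul_div_assoc', mul_div_assoc', ← sub_div, ← gap, le_div_iff₀ (by positivity)]
  calc ε / 2 ^ d * (p : ℝ) ^ (d * e) = ε * ((p : ℝ) ^ e / 2) ^ d := by
        rw [div_pow, ← pow_mul, mul_comm e]
        ring
    _ ≤ ε * (p ^ e ⌈/⌉ 2 : ℕ) ^ d := by gcongr
    _ ≤ _ := he

end Multiplicity

end HilbertKunz

open HilbertKunz in
theorem eHK_A2_gt_A1_char_three_general (k : Type*) [Field k] (p : ℕ) [Fact p.Prime] [CharP k p]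
    (hp : p ≠ 2) {N : ℕ} (hN : 3 ≤ N) {d : ℕ} (hd : 2 ≤ d) :
    ∃ L_R L_S : ℝ,
      Filter.Tendsto
        (fun e : ℕ => (HKfun k (d + 1) p e (∑ i : Fin (d + 1), X i ^ 2) : ℝ) / p ^ (d * e))
        Filter.atTop (nhds L_R) ∧
      Filter.Tendsto
        (fun e : ℕ => (HKfun k (d + 1) p e
          ((∑ i : Fin d, (X (i.castSucc) : MvPolynomial (Fin (d + 1)) k) ^ 2)
            + X (Fin.last d) ^ N) : ℝ) / p ^ (d * e))
        Filter.atTop (nhds L_S) ∧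
      L_S > L_R := by
  obtain ⟨L₂, hL₂, hR⟩ := exists_tendsto_hanMonsky_HKfun k p two_pos d
  obtain ⟨L, hL, hS⟩ := exists_tendsto_hanMonsky_HKfun k p (by omega : 0 < N) d
  simp only [Fin.sum_univ_castSucc]
  refine ⟨_, _, hR, hS, ?_⟩
  have hlt := two_mul_lt_mul_of_tendsto hp hN hd hL hL₂
  rw [gt_iff_lt, mul_assoc, mul_assoc]
  exact mul_lt_mul_of_pos_left (mod_cast hlt) (by positivity)

/-- In characteristic 3, the Hilbert–Kunz multiplicities of the `A₁` singularity
(defined by `x_0² + ⋯ + x_d²`) and of the `A₂` singularity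
(defined by `x_0² + ⋯ + x_{d−1}² + x_d³`) exist, and `e_HK(S_{3,d}) > e_HK(R_{3,d})`. -/
theorem eHK_A2_gt_A1_char_three (k : Type*) [Field k] [CharP k 3] (d : ℕ) (hd : 2 ≤ d) :
    ∃ L_R L_S : ℝ,
      Filter.Tendsto
        (fun e : ℕ =>
          (HKfun k (d + 1) 3 e (∑ i : Fin (d + 1), X i ^ 2) : ℝ) / 3 ^ (d * e))
        Filter.atTop (nhds L_R) ∧
      Filter.Tendsto
        (fun e : ℕ =>
          (HKfun k (d + 1) 3 e
              ((∑ i : Fin d, (X (i.castSucc) : MvPolynomial (Fin (d + 1)) k) ^ 2) +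
                X (Fin.last d) ^ 3) : ℝ) / 3 ^ (d * e))
        Filter.atTop (nhds L_S) ∧
      L_S > L_R := by
  exact_mod_cast eHK_A2_gt_A1_char_three_general k 3 (by norm_num) le_rfl hd
end

section
/- Let k be a field of characteristic 2 and d ≥ 2. Then there exist real numbers L_R and L_S such that the sequence e ↦ dim_k( k[x_0,…,x_d]/(x_0^{2^e},…,x_d^{2^e}, Q_d) ) / 2^{d·e} converges to L_R, the sequence e ↦ dim_k( k[x_0,…,x_d]/(x_0^{2^e},…,x_d^{2^e}, P_d) ) / 2^{d·e} converges to L_S, and L_S > L_R. That is, e_HK(S_{2,d}) > e_HK(R_{2,d}): the Hilbert–Kunz multiplicity distinguishes the A_1 and A_2 singularities in characteristic 2. -/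
open MvPolynomial

/-- The defining equation `Q_d` of the `A₁` singularity in characteristic 2:
`Q_d = x_0x_1 + x_2x_3 + ⋯ + x_{d−1}x_d` for `d` odd and
`Q_d = x_0x_1 + ⋯ + x_{d−2}x_{d−1} + x_d²` for `d` even. -/
noncomputable def A1poly (k : Type*) [Field k] (d : ℕ) : MvPolynomial (Fin (d + 1)) k :=
  (∑ i : Fin ((d + 1) / 2),
      X (⟨2 * i, by omega⟩ : Fin (d + 1)) * X (⟨2 * i + 1, by omega⟩ : Fin (d + 1))) +
    if Even d then X (⟨d, by omega⟩ : Fin (d + 1)) ^ 2 else 0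

/-- The defining equation `P_d` of the `A₂` singularity in characteristic 2:
`P_d = x_0x_1 + ⋯ + x_{d−3}x_{d−2} + x_{d−1}² + x_d³` for `d` odd and
`P_d = x_0x_1 + ⋯ + x_{d−2}x_{d−1} + x_d³` for `d` even. -/
noncomputable def A2poly (k : Type*) [Field k] (d : ℕ) : MvPolynomial (Fin (d + 1)) k :=
  (∑ i : Fin (d / 2),
      X (⟨2 * i, by omega⟩ : Fin (d + 1)) * X (⟨2 * i + 1, by omega⟩ : Fin (d + 1))) +
    (if Odd d then X (⟨d - 1, by omega⟩ : Fin (d + 1)) ^ 2 else 0) +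
    X (⟨d, by omega⟩ : Fin (d + 1)) ^ 3

/-!
For a polynomial `f` write `φ_q(c)` for the colength of `(x_i ^ q, f ^ c)`. The increment
`φ_q(c + 1) - φ_q(c)` is the dimension of `ker f ∩ im f ^ c` on `k[x] / (x_i ^ q)`, so `φ_q` is
concave, and if `f` has coefficients in the prime field then freeness of Frobenius gives
`φ_{pq}(pc) = p ^ n φ_q(c)`. Together these make the normalised Hilbert–Kunz function monotone,
so each of its values bounds the multiplicity from below.

Let `f = ∑ x_i y_i` in `n` variables and `φ = φ_4`, in characteristic 2.
* `f + z ^ r` is handled by concavity in the powers of `z` over the free extension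
  `k[x][z] / (z ^ r + f)`: `f + z ^ 2` has multiplicity exactly `2 φ(2) / 4 ^ n`, while `f + z ^ 3`
  has multiplicity at least `(2 φ(1) + φ(2)) / 4 ^ n`.
* Modulo `f + x y` the powers of `x` and of `y` generate over `k[x_i]`, so the colength of
  `(f + x y)` is at most `∑_{c < q} (φ_q(c) + φ_q(c + 1))`, which by concavity bounds the
  multiplicity by `(φ(1) + φ(3) + 6 φ(2)) / 4 ^ (n + 1)`. The multiplicity of `f + z ^ 3 + w ^ 2`
  is exactly `8 φ(2) / 4 ^ (n + 1)`.

Both comparisons are strict because `φ` is strictly concave at `1` and at `2`, which is witnessed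
by the monomials `∏ x_i ^ 3` and `∏ x_i ^ 2`.
-/

/-- Discrete concavity of a sequence of natural numbers, `D a + D (a + 2) ≤ 2 * D (a + 1)`. -/
def IsConcaveSeq (D : ℕ → ℕ) : Prop :=
  ∀ a, D a + D (a + 2) ≤ 2 * D (a + 1)

namespace IsConcaveSeq

variable {D : ℕ → ℕ}

lemma antitone_increment (hD : IsConcaveSeq D) :
    Antitone fun a => (D (a + 1) : ℤ) - D a :=
  antitone_nat_of_succ_le fun a => by
    have := hD a
    rw [add_assoc, one_add_one_eq_two]
    omega

lemma le_tangent (hD : IsConcaveSeq D) (b m : ℕ) :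
    (D m : ℤ) ≤ D b + (m - b) * (D (b + 1) - D b) := by
  have slope := hD.antitone_increment
  rcases le_total b m with hbm | hmb
  · induction m, hbm using Nat.le_induction with
    | base => simp
    | succ m hbm ih =>
      have := slope hbm
      push_cast
      linarith
  · induction hmb using Nat.decreasingInduction with
    | of_succ m hmb ih =>
      have := slope (show m ≤ b by omega)
      push_cast at ih
      linarith
    | self => simp

lemma interpolate_le (hD : IsConcaveSeq D) (a s u : ℕ) :
    u * D a + s * D (a + s + u) ≤ (s + u) * D (a + s) := by
  have left := hD.le_tangent (a + s) a
  have right := hD.le_tangent (a + s) (a + s + u)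
  push_cast at left right
  zify
  nlinarith [mul_le_mul_of_nonneg_left left u.cast_nonneg (α := ℤ),
    mul_le_mul_of_nonneg_left right s.cast_nonneg (α := ℤ)]

lemma le_mul_one (hD : IsConcaveSeq D) {m : ℕ} (hm : m ≠ 0) : D m ≤ m * D 1 := by
  obtain ⟨u, rfl⟩ := Nat.exists_eq_succ_of_ne_zero hm
  have := hD.interpolate_le 0 1 u
  simp only [zero_add, one_mul] at this
  rw [Nat.succ_eq_add_one, add_comm u 1]
  exact le_of_add_le_right this

lemma outer_add_le_inner_add (hD : IsConcaveSeq D) (a s u : ℕ) :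
    D a + D (a + s + u) ≤ D (a + s) + D (a + u) := by
  rcases Nat.eq_zero_or_pos (s + u) with h | h
  · obtain ⟨rfl, rfl⟩ : s = 0 ∧ u = 0 := by omega
    rfl
  · have hs := hD.interpolate_le a s u
    have hu := hD.interpolate_le a u s
    rw [add_right_comm] at hu
    refine Nat.le_of_mul_le_mul_left ?_ h
    linarith

lemma sum_range_add_succ_le (hD : IsConcaveSeq D) (t : ℕ) :
    ∑ c ∈ Finset.range (4 * t), (D c + D (c + 1)) ≤
      t * (D t + D (3 * t)) + 3 * t * (2 * D (2 * t)) := by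
  have reflect : ∑ c ∈ Finset.range (4 * t), D (c + 1) =
      ∑ c ∈ Finset.range (4 * t), D (4 * t - c) := by
    rw [← Finset.sum_range_reflect]
    refine Finset.sum_congr rfl fun c hc => congrArg D ?_
    have := Finset.mem_range.1 hc
    omega
  have outer {c : ℕ} (hc : c < t) : D c + D (4 * t - c) ≤ D t + D (3 * t) := by
    convert hD.outer_add_le_inner_add c (t - c) (3 * t - c) using 3 <;> omega
  have middle {c : ℕ} (hc : c ≤ 4 * t) : D c + D (4 * t - c) ≤ 2 * D (2 * t) := by
    rw [two_mul (D _)]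
    rcases le_total c (2 * t) with h | h
    · convert hD.outer_add_le_inner_add c (2 * t - c) (2 * t - c) using 3 <;> omega
    · rw [add_comm]
      convert hD.outer_add_le_inner_add (4 * t - c) (c - 2 * t) (c - 2 * t) using 3 <;> omega
  rw [Finset.sum_add_distrib, reflect, ← Finset.sum_add_distrib,
    ← Finset.sum_range_add_sum_Ico _ (show t ≤ 4 * t by omega)]
  refine add_le_add ?_ ?_
  · simpa using Finset.sum_le_card_nsmul (Finset.range t) _ _
      fun c hc => outer (Finset.mem_range.1 hc)
  · simpa [show 4 * t - t = 3 * t by omega] using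
      Finset.sum_le_card_nsmul (Finset.Ico t (4 * t)) _ _
        fun c hc => middle (Finset.mem_Ico.1 hc).2.le

end IsConcaveSeq

section ConcaveColength

open Module

theorem finrank_range_pow_succ {k V : Type*} [Field k] [AddCommGroup V] [Module k V]
    [FiniteDimensional k V] (T : End k V) (a : ℕ) :
    finrank k (T ^ (a + 1)).range + finrank k ↥(T.ker ⊓ (T ^ a).range) =
      finrank k (T ^ a).range := by
  rw [← LinearMap.finrank_range_add_finrank_ker (T.domRestrict (T ^ a).range),
    LinearMap.range_domRestrict, LinearMap.ker_domRestrict,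
    ← Submodule.finrank_map_subtype_eq, Submodule.map_comap_subtype, pow_succ',
    Module.End.mul_eq_comp, LinearMap.range_comp, inf_comm]

lemma range_pow_succ_le {R M : Type*} [CommRing R] [AddCommGroup M] [Module R M]
    (T : End R M) (a : ℕ) : (T ^ (a + 1)).range ≤ (T ^ a).range := by
  rw [pow_succ]
  exact LinearMap.range_comp_le_range _ _

variable (k : Type*) {A : Type*} [Field k] [CommRing A] [Algebra k A]

lemma finite_quotient_sup (I J : Ideal A) [FiniteDimensional k (A ⧸ I)] :
    FiniteDimensional k (A ⧸ I ⊔ J) :=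
  Module.Finite.of_surjective (Ideal.Quotient.factorₐ k le_sup_left).toLinearMap
    (Ideal.Quotient.factor_surjective le_sup_left)

/-- The colength of `I + (f ^ c)`. -/
noncomputable def powColength (I : Ideal A) (f : A) (c : ℕ) : ℕ :=
  finrank k (A ⧸ I ⊔ Ideal.span {f ^ c})

/-- Multiplication by `f` on `A ⧸ I`. -/
noncomputable def quotMul (I : Ideal A) (f : A) : End k (A ⧸ I) :=
  Algebra.lmul k (A ⧸ I) (Ideal.Quotient.mk I f)

variable (I : Ideal A) (f : A)

lemma quotMul_pow_mk (a : ℕ) (h : A) :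
    (quotMul k I f ^ a) (Ideal.Quotient.mk I h) = Ideal.Quotient.mk I (f ^ a * h) := by
  rw [quotMul, ← map_pow, ← map_pow, map_mul]
  rfl

lemma mk_mem_range_quotMul_pow {c : ℕ} {g : A} :
    Ideal.Quotient.mk I g ∈ (quotMul k I f ^ c).range ↔ g ∈ I ⊔ Ideal.span {f ^ c} := by
  rw [sup_comm, ← Ideal.mem_quotient_iff_mem_sup, Ideal.map_span, Set.image_singleton,
    Ideal.mem_span_singleton', LinearMap.mem_range, Ideal.Quotient.mk_surjective.exists,
    Ideal.Quotient.mk_surjective.exists]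
  simp only [quotMul_pow_mk, map_mul, mul_comm]

lemma powColength_eq_finrank_quotient_range (c : ℕ) :
    powColength k I f c = finrank k ((A ⧸ I) ⧸ (quotMul k I f ^ c).range) := by
  let π : A →ₗ[k] (A ⧸ I) ⧸ (quotMul k I f ^ c).range :=
    Submodule.mkQ _ ∘ₗ (Ideal.Quotient.mkₐ k I).toLinearMap
  have π_surjective : Function.Surjective π :=
    (Submodule.mkQ_surjective _).comp Ideal.Quotient.mk_surjective
  have ker_π : π.ker = (I ⊔ Ideal.span {f ^ c}).restrictScalars k := by
    ext g
    simp only [π, LinearMap.mem_ker, LinearMap.comp_apply, Submodule.mkQ_apply,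
      Submodule.Quotient.mk_eq_zero]
    exact mk_mem_range_quotMul_pow k I f
  rw [← (π.quotKerEquivOfSurjective π_surjective).finrank_eq, ker_π]
  exact (Submodule.Quotient.restrictScalarsEquiv k _).symm.finrank_eq

variable [FiniteDimensional k (A ⧸ I)]

lemma powColength_le_finrank (c : ℕ) : powColength k I f c ≤ finrank k (A ⧸ I) :=
  LinearMap.finrank_le_finrank_of_surjective
    (f := (Ideal.Quotient.factorₐ k le_sup_left).toLinearMap)
    (Ideal.Quotient.factor_surjective le_sup_left)

lemma powColength_succ (a : ℕ) :
    powColength k I f (a + 1) = powColength k I f a +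
      finrank k ↥((quotMul k I f).ker ⊓ (quotMul k I f ^ a).range) := by
  have step := finrank_range_pow_succ (quotMul k I f) a
  have codim (c : ℕ) := Submodule.finrank_quotient_add_finrank (quotMul k I f ^ c).range
  simp only [← powColength_eq_finrank_quotient_range] at codim
  linarith [codim a, codim (a + 1)]

theorem isConcaveSeq_powColength : IsConcaveSeq (powColength k I f) := fun a => by
  have := Submodule.finrank_mono
    (inf_le_inf_left (quotMul k I f).ker (range_pow_succ_le (quotMul k I f) a))
  linarith [powColength_succ k I f a, powColength_succ k I f (a + 1)]

variable {I f}

theorem powColength_add_lt {h : A} {a : ℕ} (hmem : f ^ (a + 1) * h ∈ I)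
    (hnmem : f ^ a * h ∉ I ⊔ Ideal.span {f ^ (a + 1)}) :
    powColength k I f a + powColength k I f (a + 2) < 2 * powColength k I f (a + 1) := by
  have witness : Ideal.Quotient.mk I (f ^ a * h) ∈
      (quotMul k I f).ker ⊓ (quotMul k I f ^ a).range := by
    refine ⟨?_, Ideal.Quotient.mk I h, quotMul_pow_mk k I f a h⟩
    have := quotMul_pow_mk k I f 1 (f ^ a * h)
    rw [pow_one, pow_one, ← mul_assoc, ← pow_succ', Ideal.Quotient.eq_zero_iff_mem.2 hmem] at this
    exact this
  have hlt : (quotMul k I f).ker ⊓ (quotMul k I f ^ (a + 1)).range <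
      (quotMul k I f).ker ⊓ (quotMul k I f ^ a).range :=
    (inf_le_inf_left _ (range_pow_succ_le _ a)).lt_of_ne fun heq =>
      hnmem ((mk_mem_range_quotMul_pow k I f).1 (heq ▸ witness).2)
  have := Submodule.finrank_lt_finrank_of_lt hlt
  linarith [powColength_succ k I f a, powColength_succ k I f (a + 1)]

end ConcaveColength

section FreeExtension

open Module

variable {k A B ι : Type*} [Field k] [CommRing A] [CommRing B] [Algebra k A] [Algebra k B]
  [Fintype ι]

/-- The map `a ↦ ∑ i, φ (a i) * b i`. It is bijective exactly when `b` is a basis of `B` as a module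
over `A` along `φ`; a `Module.Basis` would need an `A`-algebra structure on `B`, which clashes
with the canonical one when `φ` is an endomorphism. -/
noncomputable def combination (φ : A →ₐ[k] B) (b : ι → B) : (ι → A) →ₗ[k] B :=
  ∑ i, LinearMap.mulRight k (b i) ∘ₗ φ.toLinearMap ∘ₗ LinearMap.proj i

lemma combination_apply (φ : A →ₐ[k] B) (b : ι → B) (a : ι → A) :
    combination φ b a = ∑ i, φ (a i) * b i := by
  simp [combination]

variable {φ : A →ₐ[k] B} {b : ι → B}

lemma combination_mem_map_iff (hb : Function.Bijective (combination φ b)) (I : Ideal A)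
    (a : ι → A) : combination φ b a ∈ I.map φ ↔ ∀ i, a i ∈ I := by
  refine ⟨fun h => ?_, fun h => ?_⟩
  · let _ := φ.toRingHom.toAlgebra
    have span_b : Submodule.span A (Set.range b) = ⊤ := by
      refine Submodule.eq_top_iff'.2 fun x => ?_
      obtain ⟨c, rfl⟩ := hb.2 x
      rw [combination_apply]
      exact Submodule.sum_mem _ fun i _ =>
        Submodule.smul_mem _ (c i) (Submodule.subset_span ⟨i, rfl⟩)
    have h' : combination φ b a ∈ I • Submodule.span A (Set.range b) := by
      rw [span_b, Ideal.smul_top_eq_map]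
      exact h
    obtain ⟨c, hcI, hc⟩ := (Submodule.mem_ideal_smul_span_iff_exists_sum I b _).1 h'
    have : combination φ b c = combination φ b a := by
      rw [← hc, Finsupp.sum_fintype _ _ fun i => zero_smul A (b i), combination_apply]
      rfl
    exact fun i => hb.1 this ▸ hcI i
  · rw [combination_apply]
    exact Ideal.sum_mem _ fun i _ => Ideal.mul_mem_right _ _ (Ideal.mem_map_of_mem φ (h i))

/-- If `b` is a basis of `B` over `A` along `φ`, then it is one of `B ⧸ I B` over `A ⧸ I`. -/
noncomputable def piQuotientEquiv (hb : Function.Bijective (combination φ b)) (I : Ideal A) :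
    (ι → A ⧸ I) ≃ₗ[k] B ⧸ I.map φ :=
  let ψ : (ι → A) →ₗ[k] B ⧸ I.map φ :=
    (Ideal.Quotient.mkₐ k (I.map φ)).toLinearMap ∘ₗ combination φ b
  let π : (ι → A) →ₗ[k] (ι → A ⧸ I) :=
    LinearMap.pi fun i => (Ideal.Quotient.mkₐ k I).toLinearMap ∘ₗ LinearMap.proj i
  have ker_eq : π.ker = ψ.ker := by
    ext a
    simp [π, ψ, funext_iff, Ideal.Quotient.eq_zero_iff_mem, combination_mem_map_iff hb]
  (π.quotKerEquivOfSurjective fun y =>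
      ⟨fun i => (Ideal.Quotient.mk_surjective (y i)).choose,
        funext fun i => (Ideal.Quotient.mk_surjective (y i)).choose_spec⟩).symm ≪≫ₗ
    Submodule.quotEquivOfEq _ _ ker_eq ≪≫ₗ
    ψ.quotKerEquivOfSurjective (Ideal.Quotient.mk_surjective.comp hb.2)

lemma finite_quotient_map (hb : Function.Bijective (combination φ b)) (I : Ideal A)
    [FiniteDimensional k (A ⧸ I)] : FiniteDimensional k (B ⧸ I.map φ) :=
  Module.Finite.equiv (piQuotientEquiv hb I)

lemma finrank_quotient_map (hb : Function.Bijective (combination φ b)) (I : Ideal A)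
    [FiniteDimensional k (A ⧸ I)] :
    finrank k (B ⧸ I.map φ) = Fintype.card ι * finrank k (A ⧸ I) := by
  rw [← (piQuotientEquiv hb I).finrank_eq, Module.finrank_pi_fintype]
  simp

end FreeExtension

section Expand

open Module

variable {k σ : Type*} [Field k]

/-- Division with remainder by `N` of the exponents of a monomial. -/
noncomputable def divModExponent (σ : Type*) [Finite σ] (N : ℕ) [NeZero N] :
    (_ : σ → Fin N) × (σ →₀ ℕ) ≃ (σ →₀ ℕ) :=
  (Equiv.sigmaEquivProd _ _).trans <| (Equiv.prodComm _ _).trans <|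
    (Equiv.prodCongr Finsupp.equivFunOnFinite (Equiv.refl _)).trans <|
    (Equiv.arrowProdEquivProdArrow _ _ _).symm.trans <|
    (Equiv.arrowCongr (Equiv.refl _) (Nat.divModEquiv N).symm).trans Finsupp.equivFunOnFinite.symm

lemma divModExponent_apply [Finite σ] (N : ℕ) [NeZero N] (r : σ → Fin N) (m : σ →₀ ℕ) :
    divModExponent σ N ⟨r, m⟩ = N • m + Finsupp.equivFunOnFinite.symm fun i => (r i : ℕ) := by
  ext i
  simp [divModExponent, Nat.divModEquiv, mul_comm]

lemma bijective_combination_expand [Fintype σ] [DecidableEq σ] (N : ℕ) [NeZero N] :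
    Function.Bijective (combination (expand N : MvPolynomial σ k →ₐ[k] MvPolynomial σ k)
      fun r : σ → Fin N => monomial (Finsupp.equivFunOnFinite.symm fun i => (r i : ℕ)) 1) := by
  have : combination (expand N) (fun r : σ → Fin N =>
        monomial (Finsupp.equivFunOnFinite.symm fun i => (r i : ℕ)) (1 : k)) =
      ((Pi.basis fun _ : σ → Fin N => basisMonomials σ k).equiv
        (basisMonomials σ k) (divModExponent σ N)).toLinearMap := by
    refine (Pi.basis fun _ => basisMonomials σ k).ext fun ⟨r, m⟩ => ?_
    rw [LinearEquiv.coe_coe, Basis.equiv_apply, divModExponent_apply, Pi.basis_apply,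
      combination_apply, Finset.sum_eq_single r (fun s _ hs => by simp [hs]) (by simp)]
    simp [expand_monomial, monomial_mul]
  rw [this]
  exact LinearEquiv.bijective _

variable (N : ℕ) [NeZero N] (I : Ideal (MvPolynomial σ k))
  [FiniteDimensional k (MvPolynomial σ k ⧸ I)]

theorem finite_quotient_map_expand [Finite σ] :
    FiniteDimensional k (MvPolynomial σ k ⧸ I.map (expand N)) := by
  classical
  have := Fintype.ofFinite σ
  exact finite_quotient_map (bijective_combination_expand N) I

theorem finrank_quotient_map_expand [Fintype σ] :
    finrank k (MvPolynomial σ k ⧸ I.map (expand N)) =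
      N ^ Fintype.card σ * finrank k (MvPolynomial σ k ⧸ I) := by
  classical
  rw [finrank_quotient_map (bijective_combination_expand N), Fintype.card_fun, Fintype.card_fin]

end Expand

section PowIdeal

open Module

variable {k σ τ : Type*} [Field k]

/-- The monomial ideal generated by the powers `x_i ^ c i` of the variables. -/
noncomputable def powIdeal (c : σ → ℕ) : Ideal (MvPolynomial σ k) :=
  Ideal.span (Set.range fun i => X i ^ c i)

lemma X_pow_mem_powIdeal {c : σ → ℕ} {i : σ} {a : ℕ} (ha : c i ≤ a) :
    (X i ^ a : MvPolynomial σ k) ∈ powIdeal c :=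
  Ideal.pow_mem_of_pow_mem _ (Ideal.subset_span ⟨i, rfl⟩) ha

lemma mem_powIdeal_iff {c : σ → ℕ} {P : MvPolynomial σ k} :
    P ∈ powIdeal c ↔ ∀ m ∈ P.support, ∃ i, c i ≤ m i := by
  have : (powIdeal c : Ideal (MvPolynomial σ k)) = Ideal.span
      ((fun s => monomial s 1) '' Set.range fun i => Finsupp.single i (c i)) := by
    rw [powIdeal, ← Set.range_comp]
    simp [Function.comp_def, X_pow_eq_monomial]
  rw [this, mem_ideal_span_monomial_image]
  simp

lemma powIdeal_anti {c c' : σ → ℕ} (h : c ≤ c') :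
    (powIdeal c' : Ideal (MvPolynomial σ k)) ≤ powIdeal c :=
  Ideal.span_le.2 (Set.range_subset_iff.2 fun i => X_pow_mem_powIdeal (h i))

lemma map_expand_powIdeal (N : ℕ) (c : σ → ℕ) :
    (powIdeal c : Ideal (MvPolynomial σ k)).map (expand N) = powIdeal fun i => N * c i := by
  rw [powIdeal, powIdeal, Ideal.map_span, ← Set.range_comp]
  simp [Function.comp_def, pow_mul]

lemma powIdeal_one_eq_ker :
    powIdeal (fun _ : σ => 1) = RingHom.ker (aeval (0 : σ → k) : MvPolynomial σ k →ₐ[k] k) := by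
  refine le_antisymm (Ideal.span_le.2 ?_) fun P hP => ?_
  · rintro _ ⟨i, rfl⟩
    simp [RingHom.mem_ker]
  · rw [RingHom.mem_ker, aeval_zero, Algebra.algebraMap_self_apply] at hP
    refine mem_powIdeal_iff.2 fun m hm => ?_
    by_contra! h
    obtain rfl : m = 0 := Finsupp.ext fun i => Nat.lt_one_iff.1 (h i)
    exact mem_support_iff.1 hm hP

/-- Evaluation at the origin. -/
noncomputable def quotientPowIdealOneEquiv :
    (MvPolynomial σ k ⧸ powIdeal fun _ : σ => 1) ≃ₐ[k] k :=
  (Ideal.quotientEquivAlgOfEq k powIdeal_one_eq_ker).trans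
    (Ideal.quotientKerAlgEquivOfSurjective fun a => ⟨C a, by simp⟩)

variable (N : ℕ) [NeZero N]

instance : FiniteDimensional k (MvPolynomial σ k ⧸ powIdeal fun _ : σ => 1) :=
  Module.Finite.equiv quotientPowIdealOneEquiv.symm.toLinearEquiv

instance finite_quotient_powIdeal [Finite σ] :
    FiniteDimensional k (MvPolynomial σ k ⧸ powIdeal fun _ : σ => N) := by
  have := finite_quotient_map_expand N (powIdeal fun _ : σ => 1 : Ideal (MvPolynomial σ k))
  rw [map_expand_powIdeal, mul_one] at this
  exact this

theorem finrank_quotient_powIdeal [Fintype σ] :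
    finrank k (MvPolynomial σ k ⧸ powIdeal fun _ : σ => N) = N ^ Fintype.card σ := by
  have := finrank_quotient_map_expand N (powIdeal fun _ : σ => 1 : Ideal (MvPolynomial σ k))
  rw [map_expand_powIdeal, mul_one, quotientPowIdealOneEquiv.toLinearEquiv.finrank_eq,
    finrank_self, mul_one] at this
  exact this

end PowIdeal

section HKLength

open Module

variable {k σ τ : Type*} [Field k]

/-- The colength of `(x_i ^ q, f ^ c)`. -/
noncomputable def hkLength (f : MvPolynomial σ k) (q c : ℕ) : ℕ :=
  powColength k (powIdeal fun _ => q) f c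

lemma HKfun_eq_hkLength (n p e : ℕ) (f : MvPolynomial (Fin n) k) :
    HKfun k n p e f = hkLength f (p ^ e) 1 := by
  rw [HKfun, hkLength, powColength, powIdeal, pow_one, Ideal.span_union]

lemma sup_span_singleton_congr {A : Type*} [CommRing A] {I : Ideal A} {f g : A} (h : f - g ∈ I) :
    I ⊔ Ideal.span {f} = I ⊔ Ideal.span {g} := by
  have sup_le_sup {f g : A} (h : f - g ∈ I) : I ⊔ Ideal.span {f} ≤ I ⊔ Ideal.span {g} := by
    refine sup_le le_sup_left ((Ideal.span_singleton_le_iff_mem _).2 ?_)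
    rw [← sub_add_cancel f g]
    exact add_mem (Ideal.mem_sup_left h) (Ideal.mem_sup_right (Ideal.mem_span_singleton_self g))
  exact le_antisymm (sup_le_sup h) (sup_le_sup (by simpa using neg_mem h))

lemma hkLength_one_congr {f g : MvPolynomial σ k} {q : ℕ}
    (h : f - g ∈ powIdeal fun _ : σ => q) : hkLength f q 1 = hkLength g q 1 := by
  rw [hkLength, hkLength, powColength, powColength, pow_one, pow_one, sup_span_singleton_congr h]

lemma hkLength_rename (e : σ ≃ τ) (f : MvPolynomial σ k) (q c : ℕ) :
    hkLength (rename e f) q c = hkLength f q c := by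
  refine ((Ideal.quotientEquivAlg _ _ (renameEquiv k e) ?_).toLinearEquiv.finrank_eq).symm
  simp only [powIdeal, Ideal.map_sup, Ideal.map_span, ← Set.range_comp, Set.image_singleton]
  rw [← e.surjective.range_comp]
  simp [Function.comp_def]

lemma expand_pow_eq {f : MvPolynomial σ k} {p : ℕ} (hf : expand p f = f ^ p) (e : ℕ) :
    expand (p ^ e) f = f ^ p ^ e := by
  induction e with
  | zero => simp
  | succ e ih => rw [pow_succ', expand_mul, ih, map_pow, hf, pow_mul]

theorem isConcaveSeq_hkLength [Finite σ] (f : MvPolynomial σ k) (q : ℕ) [NeZero q] :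
    IsConcaveSeq (hkLength f q) :=
  isConcaveSeq_powColength k _ f

theorem hkLength_expand [Fintype σ] {f : MvPolynomial σ k} {N : ℕ} [NeZero N]
    (hf : expand N f = f ^ N) (q c : ℕ) [NeZero q] :
    hkLength f (N * q) (N * c) = N ^ Fintype.card σ * hkLength f q c := by
  have : FiniteDimensional k
      (MvPolynomial σ k ⧸ (powIdeal fun _ => q) ⊔ Ideal.span {f ^ c}) := finite_quotient_sup k _ _
  rw [hkLength, hkLength, powColength, powColength, ← finrank_quotient_map_expand, Ideal.map_sup,
    map_expand_powIdeal, Ideal.map_span, Set.image_singleton, map_pow, hf, pow_mul]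

end HKLength

lemma finrank_quotient_map_of_surjective {k A B : Type*} [Field k] [CommRing A] [CommRing B]
    [Algebra k A] [Algebra k B] {φ : A →ₐ[k] B} (hφ : Function.Surjective φ) {I : Ideal A}
    (hI : RingHom.ker φ ≤ I) :
    Module.finrank k (A ⧸ I) = Module.finrank k (B ⧸ I.map φ) := by
  have hker : RingHom.ker ((Ideal.Quotient.mkₐ k (I.map φ)).comp φ) = I := by
    ext a
    rw [RingHom.mem_ker, AlgHom.comp_apply, Ideal.Quotient.mkₐ_eq_mk,
      Ideal.Quotient.eq_zero_iff_mem, ← Ideal.mem_comap,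
      Ideal.comap_map_of_surjective' φ hφ, sup_eq_left.2 hI]
  rw [← (Ideal.quotientEquivAlgOfEq k hker).toLinearEquiv.finrank_eq]
  exact (Ideal.quotientKerAlgEquivOfSurjective
    (Ideal.Quotient.mk_surjective.comp hφ)).toLinearEquiv.finrank_eq

section AddPow

open Module

lemma bijective_combination_basis {k A B ι : Type*} [Field k] [CommRing A] [CommRing B]
    [Algebra k A] [Algebra k B] [Algebra A B] [IsScalarTower k A B] [Fintype ι]
    (b : Basis ι A B) : Function.Bijective (combination (IsScalarTower.toAlgHom k A B) b) := by
  convert b.equivFun.symm.bijective using 1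
  funext a
  simp only [combination_apply, Basis.equivFun_symm_apply, Algebra.smul_def,
    IsScalarTower.toAlgHom_apply]

section

variable {k A : Type*} [Field k] [CommRing A] [Algebra k A] {g : Polynomial A}

lemma finite_adjoinRoot_quotient_map (hg : g.Monic) (I : Ideal A)
    [FiniteDimensional k (A ⧸ I)] :
    FiniteDimensional k (AdjoinRoot g ⧸ I.map (AdjoinRoot.ofAlgHom k g)) :=
  finite_quotient_map (bijective_combination_basis (AdjoinRoot.powerBasisAux' hg)) I

lemma finrank_adjoinRoot_quotient_map (hg : g.Monic) (I : Ideal A)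
    [FiniteDimensional k (A ⧸ I)] :
    finrank k (AdjoinRoot g ⧸ I.map (AdjoinRoot.ofAlgHom k g)) =
      g.natDegree * finrank k (A ⧸ I) := by
  rw [← Fintype.card_fin g.natDegree, ← finrank_quotient_map
    (bijective_combination_basis (AdjoinRoot.powerBasisAux' hg))]
  rfl

end

lemma root_pow_eq_neg_of {A : Type*} [CommRing A] (f : A) (r : ℕ) :
    AdjoinRoot.root (Polynomial.X ^ r + Polynomial.C f) ^ r = -AdjoinRoot.of _ f := by
  have := AdjoinRoot.mk_self (f := Polynomial.X ^ r + Polynomial.C f)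
  rw [map_add, map_pow, AdjoinRoot.mk_X, AdjoinRoot.mk_C] at this
  exact eq_neg_of_add_eq_zero_left this

theorem powColength_root_mul {k A : Type*} [Field k] [CommRing A] [Nontrivial A] [Algebra k A]
    (I : Ideal A) [FiniteDimensional k (A ⧸ I)] (f : A) (r t : ℕ) [NeZero r] :
    powColength k (I.map (AdjoinRoot.ofAlgHom k (Polynomial.X ^ r + Polynomial.C f)))
      (AdjoinRoot.root _) (r * t) = r * powColength k I f t := by
  set g := Polynomial.X ^ r + Polynomial.C f
  have : FiniteDimensional k (A ⧸ I ⊔ Ideal.span {f ^ t}) := finite_quotient_sup k _ _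
  have span_root : Ideal.span {AdjoinRoot.root g ^ (r * t)} =
      (Ideal.span {f ^ t}).map (AdjoinRoot.ofAlgHom k g) := by
    rw [pow_mul, root_pow_eq_neg_of, Ideal.map_span, Set.image_singleton, map_pow, neg_pow,
      Ideal.span_singleton_mul_left_unit ((isUnit_one.neg).pow t)]
    rfl
  rw [powColength, powColength, span_root, ← Ideal.map_sup, finrank_adjoinRoot_quotient_map
    (Polynomial.monic_X_pow_add_C f (NeZero.ne r)), Polynomial.natDegree_X_pow_add_C]

/-- The polynomial `f + z ^ r` in one more variable `z = X none`. -/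
noncomputable def addPow {k σ : Type*} [Field k] (f : MvPolynomial σ k) (r : ℕ) :
    MvPolynomial (Option σ) k :=
  rename some f + X none ^ r

section

variable {k σ : Type*} [Field k] (f : MvPolynomial σ k) (r : ℕ)

/-- `k[x, z] → k[x][z]/(z ^ r + f)`, whose kernel is generated by `f + z ^ r`. -/
noncomputable def adjoinRootOfAddPow :
    MvPolynomial (Option σ) k →ₐ[k] AdjoinRoot (Polynomial.X ^ r + Polynomial.C f) :=
  ((AdjoinRoot.mkₐ _).restrictScalars k).comp (optionEquivLeft k σ).toAlgHom

lemma adjoinRootOfAddPow_X_none :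
    adjoinRootOfAddPow f r (X none) = AdjoinRoot.root _ := by
  simp [adjoinRootOfAddPow]

lemma adjoinRootOfAddPow_X_some (i : σ) :
    adjoinRootOfAddPow f r (X (some i)) = AdjoinRoot.ofAlgHom k _ (X i) := by
  simp [adjoinRootOfAddPow]

lemma optionEquivLeft_addPow :
    optionEquivLeft k σ (addPow f r) = Polynomial.X ^ r + Polynomial.C f := by
  have rename_some : (optionEquivLeft k σ).toAlgHom.comp (rename some) = Polynomial.CAlgHom := by
    ext i : 1
    simp
  rw [addPow, map_add, map_pow, optionEquivLeft_X_none, add_comm]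
  exact congrArg _ (DFunLike.congr_fun rename_some f)

lemma ker_adjoinRootOfAddPow :
    RingHom.ker (adjoinRootOfAddPow f r) = Ideal.span {addPow f r} := by
  ext P
  rw [RingHom.mem_ker, Ideal.mem_span_singleton, ← map_dvd_iff (optionEquivLeft k σ),
    optionEquivLeft_addPow]
  exact AdjoinRoot.mk_eq_zero

lemma adjoinRootOfAddPow_surjective : Function.Surjective (adjoinRootOfAddPow f r) :=
  AdjoinRoot.mk_surjective.comp (optionEquivLeft k σ).surjective

lemma map_adjoinRootOfAddPow_powIdeal (q : ℕ) :
    (powIdeal fun _ => q).map (adjoinRootOfAddPow f r) =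
      (powIdeal fun _ => q).map (AdjoinRoot.ofAlgHom k _) ⊔ Ideal.span {AdjoinRoot.root _ ^ q} := by
  simp only [powIdeal, Ideal.map_span, ← Ideal.span_union, ← Set.range_comp, Function.comp_def,
    Option.range_eq, Set.image_insert_eq, map_pow, adjoinRootOfAddPow_X_none,
    adjoinRootOfAddPow_X_some]
  rw [Set.union_comm, Set.singleton_union]

theorem hkLength_addPow_eq_powColength (q : ℕ) :
    hkLength (addPow f r) q 1 = powColength k
      ((powIdeal fun _ => q).map (AdjoinRoot.ofAlgHom k (Polynomial.X ^ r + Polynomial.C f)))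
      (AdjoinRoot.root _) q := by
  have ker_le := (ker_adjoinRootOfAddPow f r).trans_le
    (le_sup_right : _ ≤ (powIdeal fun _ => q) ⊔ Ideal.span {addPow f r})
  rw [hkLength, powColength, powColength, pow_one,
    finrank_quotient_map_of_surjective (adjoinRootOfAddPow_surjective f r) ker_le, Ideal.map_sup,
    ← ker_adjoinRootOfAddPow, (Ideal.map_eq_bot_iff_le_ker _).2 le_rfl, sup_bot_eq,
    map_adjoinRootOfAddPow_powIdeal]

theorem hkLength_addPow_le [Fintype σ] (q : ℕ) [NeZero r] [NeZero q] :
    hkLength (addPow f r) q 1 ≤ r * q ^ Fintype.card σ := by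
  have hg := Polynomial.monic_X_pow_add_C f (NeZero.ne r)
  have := finite_adjoinRoot_quotient_map (k := k) hg (powIdeal fun _ => q)
  rw [hkLength_addPow_eq_powColength]
  refine (powColength_le_finrank k _ _ _).trans_eq ?_
  rw [finrank_adjoinRoot_quotient_map hg, Polynomial.natDegree_X_pow_add_C,
    finrank_quotient_powIdeal]

theorem hkLength_addPow_mul [Finite σ] (t : ℕ) [NeZero r] [NeZero t] :
    hkLength (addPow f r) (r * t) 1 = r * hkLength f (r * t) t := by
  rw [hkLength_addPow_eq_powColength, powColength_root_mul, hkLength]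

variable {r} in
lemma hkLength_addPow_of_le [Finite σ] {q : ℕ} [NeZero q] (h : q ≤ r) :
    hkLength (addPow f r) q 1 = q * hkLength f q 1 := by
  have length_eq := hkLength_addPow_mul f q 1
  rw [mul_one] at length_eq
  rw [← length_eq]
  refine hkLength_one_congr ?_
  rw [addPow, addPow, add_sub_add_left_eq_sub]
  exact sub_mem (X_pow_mem_powIdeal h) (X_pow_mem_powIdeal le_rfl)

theorem le_hkLength_addPow [Finite σ] (s u t : ℕ) [NeZero s] :
    u * hkLength f ((s + u) * t + s) t + s * hkLength f ((s + u) * t + s) (t + 1) ≤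
      hkLength (addPow f (s + u)) ((s + u) * t + s) 1 := by
  have : NeZero (s + u) := ⟨by have := NeZero.ne s; omega⟩
  set q := (s + u) * t + s with hq
  have : NeZero q := ⟨by have := NeZero.ne s; omega⟩
  have := finite_adjoinRoot_quotient_map (k := k)
    (Polynomial.monic_X_pow_add_C f (NeZero.ne (s + u))) (powIdeal fun _ => q)
  have concave := (isConcaveSeq_powColength k
    ((powIdeal fun _ => q).map (AdjoinRoot.ofAlgHom k (Polynomial.X ^ (s + u) + Polynomial.C f)))
    (AdjoinRoot.root _)).interpolate_le ((s + u) * t) s u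
  rw [show (s + u) * t + s + u = (s + u) * (t + 1) by ring, ← hq, powColength_root_mul,
    powColength_root_mul, ← hkLength_addPow_eq_powColength] at concave
  refine Nat.le_of_mul_le_mul_left ?_ (NeZero.pos (s + u))
  rw [hkLength, hkLength]
  linarith

end

end AddPow

section AddMul

open Module

lemma finrank_le_sum_finrank_quotient {k A B ι : Type*} [Field k] [CommRing A] [CommRing B]
    [Algebra k A] [Algebra k B] [Algebra A B] [IsScalarTower k A B] [Fintype ι]
    {b : ι → B} (hb : Submodule.span A (Set.range b) = ⊤) (J : ι → Ideal A)
    [∀ i, FiniteDimensional k (A ⧸ J i)]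
    (hJ : ∀ i, J i ≤ (LinearMap.toSpanSingleton A B (b i)).ker) :
    finrank k B ≤ ∑ i, finrank k (A ⧸ J i) := by
  let ψ : (∀ i, A ⧸ J i) →ₗ[A] B :=
    ∑ i, (J i).liftQ (LinearMap.toSpanSingleton A B (b i)) (hJ i) ∘ₗ LinearMap.proj i
  have ψ_surjective : Function.Surjective (ψ.restrictScalars k) := fun y => by
    obtain ⟨a, rfl⟩ := (Submodule.mem_span_range_iff_exists_fun A).1
      (hb ▸ Submodule.mem_top : y ∈ Submodule.span A (Set.range b))
    refine ⟨fun i => (J i).mkQ (a i), ?_⟩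
    simp only [ψ, LinearMap.restrictScalars_apply, LinearMap.sum_apply, LinearMap.comp_apply,
      LinearMap.proj_apply, Submodule.mkQ_apply, Submodule.liftQ_apply,
      LinearMap.toSpanSingleton_apply]
  rw [← Module.finrank_pi_fintype]
  exact LinearMap.finrank_le_finrank_of_surjective ψ_surjective

section

variable {A B : Type*} [CommRing A] [CommRing B] [Algebra A B] {x y : B} {q : ℕ}

/-- The powers `1, x, …, x ^ (q - 1)` and `y, y ^ 2, …, y ^ q`. They generate `A[x, y]` over `A` as
soon as `x * y ∈ A` and `x ^ q = y ^ q = 0`. -/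
def crossPowers (x y : B) (q : ℕ) : Fin q ⊕ Fin q → B :=
  Sum.elim (fun i => x ^ (i : ℕ)) fun i => y ^ (i + 1 : ℕ)

lemma pow_left_mem_span_crossPowers (hx : x ^ q = 0) (i : ℕ) :
    x ^ i ∈ Submodule.span A (Set.range (crossPowers x y q)) := by
  rcases lt_or_ge i q with h | h
  · exact Submodule.subset_span ⟨.inl ⟨i, h⟩, rfl⟩
  · rw [pow_eq_zero_of_le h hx]
    exact zero_mem _

lemma pow_right_mem_span_crossPowers (hx : x ^ q = 0) (hy : y ^ q = 0) (i : ℕ) :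
    y ^ i ∈ Submodule.span A (Set.range (crossPowers x y q)) := by
  rcases i with _ | i
  · simpa using pow_left_mem_span_crossPowers (A := A) (y := y) hx 0
  rcases lt_or_ge i q with h | h
  · exact Submodule.subset_span ⟨.inr ⟨i, h⟩, rfl⟩
  · rw [pow_eq_zero_of_le (h.trans i.le_succ) hy]
    exact zero_mem _

variable {g : A}

lemma left_mul_mem_span_crossPowers (hxy : x * y = algebraMap A B g) (hx : x ^ q = 0)
    (hy : y ^ q = 0) {z : B} (hz : z ∈ Submodule.span A (Set.range (crossPowers x y q))) :
    x * z ∈ Submodule.span A (Set.range (crossPowers x y q)) := by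
  refine (Submodule.map_span_le (LinearMap.mulLeft A x) _ _).2 ?_ ⟨z, hz, rfl⟩
  rintro _ ⟨i | i, rfl⟩
  · have := pow_left_mem_span_crossPowers (A := A) (y := y) hx (i + 1)
    rwa [pow_succ'] at this
  · have := Submodule.smul_mem _ g (pow_right_mem_span_crossPowers (A := A) hx hy i)
    rwa [Algebra.smul_def, ← hxy, mul_assoc, ← pow_succ'] at this

lemma right_mul_mem_span_crossPowers (hxy : x * y = algebraMap A B g) (hx : x ^ q = 0)
    (hy : y ^ q = 0) {z : B} (hz : z ∈ Submodule.span A (Set.range (crossPowers x y q))) :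
    y * z ∈ Submodule.span A (Set.range (crossPowers x y q)) := by
  refine (Submodule.map_span_le (LinearMap.mulLeft A y) _ _).2 ?_ ⟨z, hz, rfl⟩
  rintro _ ⟨⟨i, hi⟩ | i, rfl⟩
  · rcases i with _ | i
    · simpa [crossPowers] using pow_right_mem_span_crossPowers (A := A) hx hy 1
    · have := Submodule.smul_mem _ g (pow_left_mem_span_crossPowers (A := A) (y := y) hx i)
      rwa [Algebra.smul_def, ← hxy, mul_comm x, mul_assoc, ← pow_succ'] at this
  · have := pow_right_mem_span_crossPowers (A := A) hx hy (i + 2)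
    rwa [pow_succ'] at this

lemma crossPowers_inl_annihilator (hxy : x * y = -algebraMap A B g) (hx : x ^ q = 0) (i : Fin q) :
    g ^ (q - i) • crossPowers x y q (.inl i) = 0 := by
  rw [Algebra.smul_def, map_pow, ← neg_neg (algebraMap A B g), ← hxy, neg_pow, mul_pow]
  have : x ^ (q - i) * x ^ (i : ℕ) = 0 := by rw [← pow_add, Nat.sub_add_cancel i.2.le, hx]
  calc _ = (-1) ^ (q - (i : ℕ)) * y ^ (q - (i : ℕ)) * (x ^ (q - i) * x ^ (i : ℕ)) := by
        rw [crossPowers, Sum.elim_inl]; ring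
    _ = 0 := by rw [this, mul_zero]

lemma crossPowers_inr_annihilator (hxy : x * y = -algebraMap A B g) (hy : y ^ q = 0) (i : Fin q) :
    g ^ (q - (i + 1)) • crossPowers x y q (.inr i) = 0 := by
  rw [Algebra.smul_def, map_pow, ← neg_neg (algebraMap A B g), ← hxy, neg_pow, mul_pow]
  have : y ^ (q - (i + 1)) * y ^ (i + 1 : ℕ) = 0 := by
    rw [← pow_add, Nat.sub_add_cancel i.2, hy]
  calc _ = (-1) ^ (q - (i + 1 : ℕ)) * x ^ (q - (i + 1 : ℕ)) *
        (y ^ (q - (i + 1)) * y ^ (i + 1 : ℕ)) := by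
        rw [crossPowers, Sum.elim_inr]; ring
    _ = 0 := by rw [this, mul_zero]

lemma span_crossPowers_eq_top (hxy : x * y = algebraMap A B g) (hx : x ^ q = 0) (hy : y ^ q = 0)
    (hgen : Algebra.adjoin A {x, y} = ⊤) :
    Submodule.span A (Set.range (crossPowers x y q)) = ⊤ := by
  set M := Submodule.span A (Set.range (crossPowers x y q))
  have mul_mem (z : B) : ∀ w ∈ M, z * w ∈ M := by
    induction hgen.ge (Algebra.mem_top : z ∈ _) using Algebra.adjoin_induction with
    | mem z hz =>
      rcases hz with rfl | rfl
      · exact fun w => left_mul_mem_span_crossPowers hxy hx hy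
      · exact fun w => right_mul_mem_span_crossPowers hxy hx hy
    | algebraMap a =>
      intro w hw
      rw [← Algebra.smul_def]
      exact M.smul_mem a hw
    | add z z' _ _ ihz ihz' =>
      intro w hw
      rw [add_mul]
      exact add_mem (ihz w hw) (ihz' w hw)
    | mul z z' _ _ ihz ihz' =>
      intro w hw
      rw [mul_assoc]
      exact ihz _ (ihz' w hw)
  refine Submodule.eq_top_iff'.2 fun z => ?_
  rw [← mul_one z]
  exact mul_mem z 1 (by simpa using pow_left_mem_span_crossPowers (A := A) (y := y) hx 0)

theorem finrank_le_sum_powColength {k : Type*} [Field k] [Algebra k A] [Algebra k B]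
    [IsScalarTower k A B] {I : Ideal A} [FiniteDimensional k (A ⧸ I)]
    (hI : I ≤ RingHom.ker (algebraMap A B)) (hxy : x * y = -algebraMap A B g) (hx : x ^ q = 0)
    (hy : y ^ q = 0) (hgen : Algebra.adjoin A {x, y} = ⊤) :
    finrank k B ≤ ∑ c ∈ Finset.range q, (powColength k I g c + powColength k I g (c + 1)) := by
  have finite (c : ℕ) : FiniteDimensional k (A ⧸ I ⊔ Ideal.span {g ^ c}) :=
    finite_quotient_sup k _ _
  have le_ker {b : B} {c : ℕ} (h : g ^ c • b = 0) :
      I ⊔ Ideal.span {g ^ c} ≤ (LinearMap.toSpanSingleton A B b).ker :=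
    sup_le (fun a ha => by
      rw [LinearMap.mem_ker, LinearMap.toSpanSingleton_apply, Algebra.smul_def, hI ha, zero_mul])
      ((Ideal.span_singleton_le_iff_mem _).2 h)
  let exponent : Fin q ⊕ Fin q → ℕ := Sum.elim (fun i => q - i) fun i => q - (i + 1)
  have annihilated (i : Fin q ⊕ Fin q) : g ^ exponent i • crossPowers x y q i = 0 := by
    rcases i with i | i
    · exact crossPowers_inl_annihilator hxy hx i
    · exact crossPowers_inr_annihilator hxy hy i
  rw [← map_neg] at hxy
  refine (finrank_le_sum_finrank_quotient (span_crossPowers_eq_top hxy hx hy hgen)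
    (fun i => I ⊔ Ideal.span {g ^ exponent i}) fun i => le_ker (annihilated i)).trans_eq ?_
  change ∑ i, powColength k I g (exponent i) = _
  rw [Fintype.sum_sum_type, Finset.sum_add_distrib, add_comm,
    ← Finset.sum_range_reflect, ← Finset.sum_range_reflect fun c => powColength k I g (c + 1),
    Finset.sum_range, Finset.sum_range]
  congr! 3 with i _ i _
  · exact show q - (i + 1) = q - 1 - i by omega
  · have := i.2
    exact show q - i = q - 1 - i + 1 by omega

end

section

variable {k σ : Type*} [Field k] (f : MvPolynomial σ k)

/-- The polynomial `f + x * y` in two more variables `x = X none` and `y = X (some none)`. -/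
noncomputable def addMul : MvPolynomial (Option (Option σ)) k :=
  rename (some ∘ some) f + X none * X (some none)

theorem hkLength_addMul_le [Finite σ] (q : ℕ) [NeZero q] :
    hkLength (addMul f) q 1 ≤ ∑ c ∈ Finset.range q, (hkLength f q c + hkLength f q (c + 1)) := by
  set K : Ideal (MvPolynomial (Option (Option σ)) k) :=
    (powIdeal fun _ => q) ⊔ Ideal.span {addMul f ^ 1} with hK
  let φ : MvPolynomial σ k →ₐ[k] MvPolynomial (Option (Option σ)) k ⧸ K :=
    (Ideal.Quotient.mkₐ k K).comp (rename (some ∘ some))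
  let _ := φ.toRingHom.toAlgebra
  have : IsScalarTower k (MvPolynomial σ k) (MvPolynomial (Option (Option σ)) k ⧸ K) :=
    .of_algebraMap_eq' φ.comp_algebraMap.symm
  have mk_X_pow (i) : Ideal.Quotient.mk K (X i) ^ q = 0 := by
    rw [← map_pow, Ideal.Quotient.eq_zero_iff_mem]
    exact Ideal.mem_sup_left (X_pow_mem_powIdeal le_rfl)
  refine finrank_le_sum_powColength (x := Ideal.Quotient.mk K (X none))
    (y := Ideal.Quotient.mk K (X (some none))) (Ideal.span_le.2 ?_) ?_ (mk_X_pow _) (mk_X_pow _) ?_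
  · rintro _ ⟨i, rfl⟩
    change φ (X i ^ q) = 0
    rw [map_pow, AlgHom.comp_apply, rename_X]
    exact mk_X_pow _
  · refine eq_neg_of_add_eq_zero_right ?_
    change Ideal.Quotient.mk K (rename (some ∘ some) f) + _ = 0
    rw [← map_mul, ← map_add, Ideal.Quotient.eq_zero_iff_mem, hK, pow_one]
    exact Ideal.mem_sup_right (Ideal.mem_span_singleton_self _)
  · refine Algebra.eq_top_iff.2 fun z => ?_
    obtain ⟨P, rfl⟩ := Ideal.Quotient.mk_surjective z
    induction P using MvPolynomial.induction_on with
    | C a => exact (φ.commutes a) ▸ Subalgebra.algebraMap_mem _ (C a)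
    | add P P' ihP ihP' => exact map_add (Ideal.Quotient.mk K) P P' ▸ add_mem ihP ihP'
    | mul_X P i ihP =>
      rw [map_mul]
      refine mul_mem ihP ?_
      rcases i with _ | _ | i
      · exact Algebra.subset_adjoin (Or.inl rfl)
      · exact Algebra.subset_adjoin (Or.inr rfl)
      · have := Subalgebra.algebraMap_mem (Algebra.adjoin (MvPolynomial σ k)
          {Ideal.Quotient.mk K (X none), Ideal.Quotient.mk K (X (some none))}) (X i)
        change φ (X i) ∈ _ at this
        rwa [AlgHom.comp_apply, rename_X] at this

end

end AddMul

section FrobeniusInvariance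

variable {k σ : Type*} [Field k] {p : ℕ} [Fact p.Prime] [CharP k p] {f : MvPolynomial σ k}

lemma expand_addPow (hf : expand p f = f ^ p) (r : ℕ) :
    expand p (addPow f r) = addPow f r ^ p := by
  rw [addPow, map_add, ← rename_expand, hf, map_pow, map_pow, expand_X, add_pow_char,
    pow_right_comm]

lemma expand_addMul (hf : expand p f = f ^ p) : expand p (addMul f) = addMul f ^ p := by
  rw [addMul, map_add, ← rename_expand, hf, map_pow, map_mul, expand_X, expand_X, ← mul_pow,
    add_pow_char]

end FrobeniusInvariance

section Hyperbolic

variable (k ι : Type*) [Field k] [Fintype ι]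

/-- The split quadratic form `∑ i, x_i * y_i`, with `x_i = X (inl i)` and `y_i = X (inr i)`. -/
noncomputable def hyperbolicForm : MvPolynomial (ι ⊕ ι) k :=
  ∑ i, X (.inl i) * X (.inr i)

lemma hyperbolicForm_pow_char_pow {p : ℕ} [Fact p.Prime] [CharP k p] (e : ℕ) :
    hyperbolicForm k ι ^ p ^ e = ∑ i, (X (.inl i) * X (.inr i)) ^ p ^ e :=
  sum_pow_char_pow p e _ _

lemma expand_hyperbolicForm {p : ℕ} [Fact p.Prime] [CharP k p] :
    expand p (hyperbolicForm k ι) = hyperbolicForm k ι ^ p := by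
  have := hyperbolicForm_pow_char_pow k ι (p := p) 1
  rw [pow_one] at this
  rw [this, hyperbolicForm, map_sum]
  simp only [map_mul, expand_X, mul_pow]

lemma prod_X_pow_mem_powIdeal_iff {k σ : Type*} [Field k] [Fintype σ] {c m : σ → ℕ} :
    (∏ i, X i ^ m i : MvPolynomial σ k) ∈ powIdeal c ↔ ∃ i, c i ≤ m i := by
  have : (∏ i, X i ^ m i : MvPolynomial σ k) =
      monomial (Finsupp.equivFunOnFinite.symm m) 1 := by
    rw [monomial_eq, Finsupp.prod_fintype _ _ fun _ => pow_zero _, C_1, one_mul]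
    rfl
  classical
  rw [this, mem_powIdeal_iff, support_monomial, if_neg one_ne_zero]
  simp

variable {k ι}

lemma hyperbolicForm_pow_sub_pow_mem {i₀ : ι} {c : ι ⊕ ι → ℕ}
    (hc : ∀ i ≠ i₀, c (.inr i) = 1) (a : ℕ) :
    hyperbolicForm k ι ^ a - (X (.inl i₀) * X (.inr i₀)) ^ a ∈ powIdeal c := by
  classical
  refine Ideal.mem_of_dvd _ (sub_dvd_pow_sub_pow _ _ a) ?_
  rw [hyperbolicForm, ← Finset.add_sum_erase _ _ (Finset.mem_univ i₀), add_sub_cancel_left]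
  refine Ideal.sum_mem _ fun i hi => Ideal.mul_mem_left _ _ ?_
  rw [← pow_one (X _)]
  exact X_pow_mem_powIdeal (hc i (Finset.ne_of_mem_erase hi)).le

lemma hyperbolicForm_pow_mul_prod_mem {p e q : ℕ} [Fact p.Prime] [CharP k p] (hq : p ^ e ≤ q) :
    hyperbolicForm k ι ^ p ^ e * ∏ i, X (.inl i) ^ (q - p ^ e) ∈ powIdeal fun _ => q := by
  rw [hyperbolicForm_pow_char_pow, Finset.sum_mul]
  obtain ⟨s, rfl⟩ := exists_add_of_le hq
  refine Ideal.sum_mem _ fun i _ => ?_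
  refine Ideal.mem_of_dvd _ ?_ (X_pow_mem_powIdeal (i := .inl i) (le_refl (p ^ e + s)))
  rw [mul_pow, mul_right_comm, Nat.add_sub_cancel_left, pow_add]
  exact (mul_dvd_mul_left _ (Finset.dvd_prod_of_mem _ (Finset.mem_univ i))).mul_right _

lemma X_mul_X_pow_mul_prod_notMem [DecidableEq ι] (i₀ : ι) {a q : ℕ} (hq : a + 1 ≤ q) :
    (X (.inl i₀) * X (.inr i₀)) ^ a * ∏ i, X (.inl i) ^ (q - (a + 1)) ∉
      (powIdeal (Sum.elim (fun _ => q) fun i => if i = i₀ then a + 1 else 1) :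
        Ideal (MvPolynomial (ι ⊕ ι) k)) := by
  let m : ι ⊕ ι → ℕ := Sum.elim (fun i => (if i = i₀ then a else 0) + (q - (a + 1)))
    fun i => if i = i₀ then a else 0
  have eq_prod : (X (.inl i₀) * X (.inr i₀)) ^ a * ∏ i, X (.inl i) ^ (q - (a + 1)) =
      (∏ i, X i ^ m i : MvPolynomial (ι ⊕ ι) k) := by
    simp only [m, Fintype.prod_sum_type, Sum.elim_inl, Sum.elim_inr, pow_add,
      Finset.prod_mul_distrib, pow_ite, pow_zero, Finset.prod_ite_eq', Finset.mem_univ, if_true]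
    ring
  rw [eq_prod, prod_X_pow_mem_powIdeal_iff]
  rintro ⟨i | i, hi⟩ <;> simp only [m, Sum.elim_inl, Sum.elim_inr] at hi <;>
    split_ifs at hi <;> omega

/- Modulo the monomial ideal `(x_i ^ q, y_i₀ ^ (a + 1), y_i : i ≠ i₀)` the form becomes the single
product `x_i₀ * y_i₀`, so that membership is read off from the exponents of a monomial. -/
lemma hyperbolicForm_pow_mul_prod_notMem [Nonempty ι] {a q : ℕ} (hq : a + 1 ≤ q) :
    hyperbolicForm k ι ^ a * ∏ i, X (.inl i) ^ (q - (a + 1)) ∉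
      (powIdeal fun _ => q) ⊔ Ideal.span {hyperbolicForm k ι ^ (a + 1)} := by
  classical
  obtain ⟨i₀⟩ := ‹Nonempty ι›
  let c : ι ⊕ ι → ℕ := Sum.elim (fun _ => q) fun i => if i = i₀ then a + 1 else 1
  have congr_monomial := hyperbolicForm_pow_sub_pow_mem (k := k) (i₀ := i₀) (c := c)
    fun i hi => if_neg hi
  have c_le : c ≤ fun _ => q := by
    rintro (i | i)
    · rfl
    · simp only [c, Sum.elim_inr]
      split_ifs <;> omega
  have pow_mem : hyperbolicForm k ι ^ (a + 1) ∈ powIdeal c := by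
    have : (X (.inl i₀) * X (.inr i₀)) ^ (a + 1) ∈ (powIdeal c : Ideal (MvPolynomial _ k)) := by
      rw [mul_pow]
      exact Ideal.mul_mem_left _ _ (X_pow_mem_powIdeal (if_pos rfl).le)
    exact (Submodule.sub_mem_iff_left _ this).1 (congr_monomial (a + 1))
  intro h
  have h_mem := sup_le (powIdeal_anti c_le) ((Ideal.span_singleton_le_iff_mem _).2 pow_mem) h
  have := sub_mem h_mem
    (Ideal.mul_mem_right (∏ i, X (.inl i) ^ (q - (a + 1))) _ (congr_monomial a))
  rw [sub_mul, sub_sub_cancel] at this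
  exact X_mul_X_pow_mul_prod_notMem i₀ hq this

theorem hkLength_hyperbolicForm_add_lt [Nonempty ι] {p a e q : ℕ} [Fact p.Prime] [CharP k p]
    (ha : a + 1 = p ^ e) (hq : p ^ e ≤ q) :
    hkLength (hyperbolicForm k ι) q a + hkLength (hyperbolicForm k ι) q (a + 2) <
      2 * hkLength (hyperbolicForm k ι) q (a + 1) := by
  have hmem := hyperbolicForm_pow_mul_prod_mem (k := k) (ι := ι) hq
  rw [← ha] at hmem hq
  have : NeZero q := ⟨by omega⟩
  exact powColength_add_lt k hmem (hyperbolicForm_pow_mul_prod_notMem hq)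

end Hyperbolic

section Multiplicity

open Filter

/-- The normalised Hilbert–Kunz function of a hypersurface of dimension `d`; its limit is the
Hilbert–Kunz multiplicity. -/
noncomputable def hkRatio {k σ : Type*} [Field k] (f : MvPolynomial σ k) (p d e : ℕ) : ℝ :=
  hkLength f (p ^ e) 1 / p ^ (d * e)

variable {k σ : Type*} [Field k] [Fintype σ] {f : MvPolynomial σ k} {p d : ℕ} [NeZero p]

lemma pow_mul_hkLength_le (hf : expand p f = f ^ p) (hd : Fintype.card σ = d + 1) (q : ℕ)
    [NeZero q] : p ^ d * hkLength f q 1 ≤ hkLength f (p * q) 1 := by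
  refine Nat.le_of_mul_le_mul_left ?_ (NeZero.pos p)
  rw [← mul_assoc, ← pow_succ', ← hd, ← hkLength_expand hf, mul_one]
  exact (isConcaveSeq_hkLength f (p * q)).le_mul_one (NeZero.ne p)

lemma monotone_hkRatio (hf : expand p f = f ^ p) (hd : Fintype.card σ = d + 1) :
    Monotone (hkRatio f p d) := by
  have p_pos : (0 : ℝ) < p := Nat.cast_pos.2 (NeZero.pos p)
  refine monotone_nat_of_le_succ fun e => ?_
  rw [hkRatio, hkRatio, div_le_div_iff₀ (by positivity) (by positivity), mul_add, pow_add, mul_one,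
    mul_left_comm, mul_comm (hkLength f _ 1 : ℝ) (_ ^ (d * e))]
  gcongr
  rw [mul_comm, pow_succ']
  exact_mod_cast pow_mul_hkLength_le hf hd (p ^ e)

theorem exists_tendsto_hkRatio (hf : expand p f = f ^ p) (hd : Fintype.card σ = d + 1) {B : ℝ}
    (hB : ∀ᶠ e in atTop, hkRatio f p d e ≤ B) :
    ∃ L, Tendsto (hkRatio f p d) atTop (nhds L) ∧ (∀ e, hkRatio f p d e ≤ L) ∧ L ≤ B := by
  have mono := monotone_hkRatio hf hd
  have le_B (e : ℕ) : hkRatio f p d e ≤ B := by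
    obtain ⟨e', he', hle⟩ := (hB.and (eventually_ge_atTop e)).exists
    exact (mono hle).trans he'
  have tendsto := tendsto_atTop_ciSup mono ⟨B, Set.forall_mem_range.2 le_B⟩
  exact ⟨_, tendsto, mono.ge_of_tendsto tendsto, le_of_tendsto' tendsto le_B⟩

lemma hkRatio_addPow_succ (hf : expand p f = f ^ p) (e : ℕ) :
    hkRatio (addPow f p) p (Fintype.card σ) (e + 1) =
      p * hkLength f p 1 / p ^ Fintype.card σ := by
  have scale : hkLength f (p * p ^ e) (p ^ e) = (p ^ e) ^ Fintype.card σ * hkLength f p 1 := by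
    rw [← hkLength_expand (expand_pow_eq hf e), mul_one, mul_comm]
  have p_ne_zero : (p : ℝ) ≠ 0 := Nat.cast_ne_zero.2 (NeZero.ne p)
  rw [hkRatio, pow_succ', hkLength_addPow_mul, scale]
  push_cast
  field_simp
  ring

theorem tendsto_hkRatio_addPow (hf : expand p f = f ^ p) (e : ℕ) :
    Tendsto (hkRatio (addPow f p) p (Fintype.card σ)) atTop
      (nhds (hkRatio (addPow f p) p (Fintype.card σ) (e + 1))) := by
  rw [← tendsto_add_atTop_iff_nat 1]
  exact tendsto_const_nhds.congr fun e' =>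
    (hkRatio_addPow_succ hf e).trans (hkRatio_addPow_succ hf e').symm

lemma hkRatio_addPow_le (f : MvPolynomial σ k) (r : ℕ) [NeZero r] (e : ℕ) :
    hkRatio (addPow f r) p (Fintype.card σ) e ≤ r := by
  have p_pos : (0 : ℝ) < p := Nat.cast_pos.2 (NeZero.pos p)
  rw [hkRatio, div_le_iff₀ (by positivity), mul_comm _ e, pow_mul]
  exact_mod_cast hkLength_addPow_le f r (p ^ e)

end Multiplicity

section Comparison

open Filter

variable {k σ : Type*} [Field k] [Fintype σ] {f : MvPolynomial σ k}

lemma hkLength_addMul_four_mul_le (hf : expand 2 f = f ^ 2) (e : ℕ) :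
    hkLength (addMul f) (4 * 2 ^ e) 1 ≤ (2 ^ e) ^ (Fintype.card σ + 1) *
      (hkLength f 4 1 + hkLength f 4 3 + 6 * hkLength f 4 2) := by
  have scale (c : ℕ) :
      hkLength f (4 * 2 ^ e) (c * 2 ^ e) = (2 ^ e) ^ Fintype.card σ * hkLength f 4 c := by
    rw [mul_comm, mul_comm c, hkLength_expand (expand_pow_eq hf e)]
  have scale_one := scale 1
  rw [one_mul] at scale_one
  calc hkLength (addMul f) (4 * 2 ^ e) 1
      ≤ 2 ^ e * (hkLength f (4 * 2 ^ e) (2 ^ e) + hkLength f (4 * 2 ^ e) (3 * 2 ^ e)) +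
          3 * 2 ^ e * (2 * hkLength f (4 * 2 ^ e) (2 * 2 ^ e)) :=
        (hkLength_addMul_le f _).trans ((isConcaveSeq_hkLength f _).sum_range_add_succ_le _)
    _ = _ := by
        rw [scale_one, scale, scale]
        ring

lemma hkRatio_addMul_le (hf : expand 2 f = f ^ 2) (e : ℕ) :
    hkRatio (addMul f) 2 (Fintype.card σ + 1) (e + 2) ≤
      (hkLength f 4 1 + hkLength f 4 3 + 6 * hkLength f 4 2 : ℕ) /
        2 ^ ((Fintype.card σ + 1) * 2) := by
  have upper := Nat.cast_le (α := ℝ).2 (hkLength_addMul_four_mul_le hf e)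
  rw [hkRatio, div_le_div_iff₀ (by positivity) (by positivity),
    show 2 ^ (e + 2) = 4 * 2 ^ e by ring]
  calc (hkLength (addMul f) (4 * 2 ^ e) 1 : ℝ) * 2 ^ ((Fintype.card σ + 1) * 2)
      ≤ _ * 2 ^ ((Fintype.card σ + 1) * 2) := mul_le_mul_of_nonneg_right upper (by positivity)
    _ = _ := by
        push_cast
        ring

variable [CharP k 2]

theorem exists_hkMultiplicity_addPow_two_lt_addPow_three (hf : expand 2 f = f ^ 2)
    (h : hkLength f 4 2 < 2 * hkLength f 4 1) :
    ∃ L_R L_S : ℝ,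
      Tendsto (hkRatio (addPow f 2) 2 (Fintype.card σ)) atTop (nhds L_R) ∧
      Tendsto (hkRatio (addPow f 3) 2 (Fintype.card σ)) atTop (nhds L_S) ∧ L_R < L_S := by
  obtain ⟨L, tendsto_L, le_L, -⟩ := exists_tendsto_hkRatio (expand_addPow hf 3)
    Fintype.card_option (Eventually.of_forall fun e => hkRatio_addPow_le f 3 e)
  refine ⟨_, L, tendsto_hkRatio_addPow hf 1, tendsto_L, (le_L 2).trans_lt' ?_⟩
  have square : hkLength (addPow f 2) 4 1 = 2 * hkLength f 4 2 := hkLength_addPow_mul f 2 2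
  have cube : 2 * hkLength f 4 1 + hkLength f 4 2 ≤ hkLength (addPow f 3) 4 1 := by
    simpa using le_hkLength_addPow f 1 2 1
  exact div_lt_div_of_pos_right (Nat.cast_lt.2 (by norm_num; omega)) (by positivity)

theorem exists_hkMultiplicity_addMul_lt_addPow_addPow (hf : expand 2 f = f ^ 2)
    (h : hkLength f 4 1 + hkLength f 4 3 < 2 * hkLength f 4 2) :
    ∃ L_R L_S : ℝ,
      Tendsto (hkRatio (addMul f) 2 (Fintype.card σ + 1)) atTop (nhds L_R) ∧
      Tendsto (hkRatio (addPow (addPow f 3) 2) 2 (Fintype.card σ + 1)) atTop (nhds L_S) ∧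
      L_R < L_S := by
  obtain ⟨L, tendsto_L, -, L_le⟩ := exists_tendsto_hkRatio (expand_addMul hf) (by simp)
    ((eventually_ge_atTop 2).mono fun e he =>
      Nat.sub_add_cancel he ▸ hkRatio_addMul_le hf (e - 2))
  have tendsto_S := tendsto_hkRatio_addPow (expand_addPow hf 3) 1
  rw [Fintype.card_option] at tendsto_S
  refine ⟨L, _, tendsto_L, tendsto_S, L_le.trans_lt ?_⟩
  have length_S : hkLength (addPow (addPow f 3) 2) 4 1 = 8 * hkLength f 4 2 :=
    calc hkLength (addPow (addPow f 3) 2) 4 1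
        = 2 * hkLength (addPow f 3) 4 2 := hkLength_addPow_mul (addPow f 3) 2 2
      _ = 2 * (2 ^ Fintype.card (Option σ) * hkLength (addPow f 3) 2 1) :=
        congrArg _ (hkLength_expand (expand_addPow hf 3) 2 1)
      _ = 8 * (2 ^ Fintype.card σ * hkLength f 2 1) := by
        rw [hkLength_addPow_of_le f (by norm_num), Fintype.card_option]
        ring
      _ = 8 * hkLength f 4 2 := congrArg _ (hkLength_expand hf 2 1).symm
  exact div_lt_div_of_pos_right (Nat.cast_lt.2 (by norm_num; omega)) (by positivity)

end Comparison

section Singularities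

lemma HKfun_rename {k σ : Type*} [Field k] {n : ℕ} (ε : σ ≃ Fin n) (f : MvPolynomial σ k)
    (p e : ℕ) : HKfun k n p e (rename ε f) = hkLength f (p ^ e) 1 := by
  rw [HKfun_eq_hkLength, hkLength_rename]

/-- Numbers the variables of `f + z ^ r` for `f = ∑ i, x_i * y_i` as
`x_0, y_0, x_1, y_1, …, z`. -/
noncomputable def interleaveOne (m : ℕ) : Option (Fin m ⊕ Fin m) ≃ Fin (2 * m + 1) :=
  .ofBijective
    (Option.elim · ⟨2 * m, by omega⟩
      (Sum.elim (fun i => ⟨2 * i, by omega⟩) fun i => ⟨2 * i + 1, by omega⟩)) <| by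
    refine (Fintype.bijective_iff_injective_and_card _).2 ⟨?_, by simp; omega⟩
    rintro (_ | i | i) (_ | j | j) h <;> simp [Fin.ext_iff] at h ⊢ <;> omega

/-- Numbers the variables of a polynomial in the variables of `f = ∑ i, x_i * y_i` and two more
variables `u = X none` and `v = X (some none)` as `x_0, y_0, x_1, y_1, …, u, v`. -/
noncomputable def interleaveTwo (m : ℕ) :
    Option (Option (Fin m ⊕ Fin m)) ≃ Fin (2 * m + 1 + 1) :=
  .ofBijective
    (Option.elim · ⟨2 * m, by omega⟩ (Option.elim · ⟨2 * m + 1, by omega⟩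
      (Sum.elim (fun i => ⟨2 * i, by omega⟩) fun i => ⟨2 * i + 1, by omega⟩))) <| by
    refine (Fintype.bijective_iff_injective_and_card _).2 ⟨?_, by simp; omega⟩
    rintro (_ | _ | i | i) (_ | _ | j | j) h <;> simp [Fin.ext_iff] at h ⊢ <;> omega

variable (k : Type*) [Field k] (m : ℕ)

lemma rename_interleaveOne_addPow_two :
    rename (interleaveOne m) (addPow (hyperbolicForm k (Fin m)) 2) = A1poly k (2 * m) := by
  have length_eq : (2 * m + 1) / 2 = m := by omega
  rw [A1poly, if_pos (even_two_mul m), ← (finCongr length_eq).symm.sum_comp]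
  simp [addPow, hyperbolicForm, interleaveOne]

lemma rename_interleaveOne_addPow_three :
    rename (interleaveOne m) (addPow (hyperbolicForm k (Fin m)) 3) = A2poly k (2 * m) := by
  have length_eq : 2 * m / 2 = m := by omega
  rw [A2poly, if_neg (by simp), ← (finCongr length_eq).symm.sum_comp]
  simp [addPow, hyperbolicForm, interleaveOne]

lemma rename_interleaveTwo_addMul :
    rename (interleaveTwo m) (addMul (hyperbolicForm k (Fin m))) = A1poly k (2 * m + 1) := by
  have length_eq : (2 * m + 1 + 1) / 2 = m + 1 := by omega
  rw [A1poly, if_neg (by simp), ← (finCongr length_eq).symm.sum_comp, Fin.sum_univ_castSucc]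
  simp [addMul, hyperbolicForm, interleaveTwo]

lemma rename_interleaveTwo_addPow_addPow :
    rename (interleaveTwo m) (addPow (addPow (hyperbolicForm k (Fin m)) 3) 2) =
      A2poly k (2 * m + 1) := by
  have length_eq : (2 * m + 1) / 2 = m := by omega
  rw [A2poly, if_pos (odd_two_mul_add_one m), ← (finCongr length_eq).symm.sum_comp]
  simp only [interleaveTwo, Equiv.coe_ofBijective, addPow, hyperbolicForm, map_sum, map_mul,
    rename_X, map_add, map_pow, Option.elim_some, Sum.elim_inl, Sum.elim_inr, Option.elim_none,
    finCongr_symm, finCongr_apply, Fin.val_cast, add_tsub_cancel_right]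
  ring

end Singularities

/-- In characteristic 2, the Hilbert–Kunz multiplicities of the `A₁` and `A₂` singularities
exist and `e_HK(S_{2,d}) > e_HK(R_{2,d})`. -/
theorem eHK_A2_gt_A1_char_two (k : Type*) [Field k] [CharP k 2] (d : ℕ) (hd : 2 ≤ d) :
    ∃ L_R L_S : ℝ,
      Filter.Tendsto
        (fun e : ℕ => (HKfun k (d + 1) 2 e (A1poly k d) : ℝ) / 2 ^ (d * e))
        Filter.atTop (nhds L_R) ∧
      Filter.Tendsto
        (fun e : ℕ => (HKfun k (d + 1) 2 e (A2poly k d) : ℝ) / 2 ^ (d * e))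
        Filter.atTop (nhds L_S) ∧
      L_S > L_R := by
  obtain ⟨m, hm⟩ := d.even_or_odd'
  have : NeZero m := ⟨by omega⟩
  have card_eq : Fintype.card (Fin m ⊕ Fin m) = 2 * m := by simp [two_mul]
  have frobenius := expand_hyperbolicForm k (Fin m) (p := 2)
  rcases hm with rfl | rfl
  · have strict := hkLength_hyperbolicForm_add_lt (k := k) (ι := Fin m) (p := 2) (a := 0) (e := 0)
      (q := 4) rfl (by norm_num)
    have comparison := exists_hkMultiplicity_addPow_two_lt_addPow_three frobenius
      ((Nat.le_add_left _ _).trans_lt strict)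
    rw [card_eq] at comparison
    simp only [← rename_interleaveOne_addPow_two, ← rename_interleaveOne_addPow_three, HKfun_rename]
    exact comparison
  · have strict := hkLength_hyperbolicForm_add_lt (k := k) (ι := Fin m) (p := 2) (a := 1) (e := 1)
      (q := 4) rfl (by norm_num)
    have comparison := exists_hkMultiplicity_addMul_lt_addPow_addPow frobenius strict
    rw [card_eq] at comparison
    simp only [← rename_interleaveTwo_addMul, ← rename_interleaveTwo_addPow_addPow, HKfun_rename]
    exact comparison
end
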